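/- arXiv:1610.03301 — 7 statements merged into one kernel-verified Lean document; each statement's English description precedes it below -/
import Mathlib

section
/- Dixon's theorem (counting form): the proportion of pairs of permutations of k points that generate the full symmetric group or the alternating group tends to 1 as k tends to infinity. Formally, the sequence k ↦ (Nat.card {p : Equiv.Perm (Fin k) × Equiv.Perm (Fin k) // Subgroup.closure {p.1, p.2} = ⊤ ∨ Subgroup.closure {p.1, p.2} = alternatingGroup (Fin k)} : ℝ) / (k !)^2 tends to 1 as k → ∞. -/
/-!
By Jordan's theorem, a primitive group of degree `n` containing a cycle of prime length `p ≤ n / 2`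
contains the alternating group. For a random pair `(x, y)` of permutations of `n` points, the
generated group is primitive and some power of `x` is such a cycle, both with high probability.

* If the symmetric group acts transitively on a set of size `N`, a given element of the set is fixed
  by both `x` and `y` with probability `1 / N ^ 2`, and hence some element is with probability at
  most `1 / N`. Summing this over the sets of `k`-element subsets and of partitions into parts of
  size `m`, the generated group is intransitive or imprimitive with probability `O(1 / n)`.
* The number of cycles of `x` with length in a set `P` of primes has mean `S = ∑ p ∈ P, 1 / p` and
  variance at most `S`, so such a cycle fails to exist with probability at most `1 / (1 + S)`. If no
  other cycle of `x` has length divisible by `p`, then a power of `x` is a `p`-cycle; the expected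
  number of violations is at most `(∑ p ∈ P, 1 / p ^ 2) * ∑ k ≤ n, 1 / k`. By Chebyshev's estimates
  both errors tend to `0` for the primes `p` between `m` and `m ^ a`, with `m = 8 ^ a` and `a` of
  order `√(log n)`.
-/

open Equiv Finset Function MulAction
open scoped Pointwise commutatorElement
open Filter (Tendsto atTop)
open scoped Topology

section Jordan

variable {α : Type*} [Fintype α] [DecidableEq α]

theorem isThreeCycle_commutator {c d : Perm α} {a : α} (hc : c a ≠ a) (hd : d a ≠ a)
    (h : ∀ x, c x ≠ x → d x ≠ x → x = a) : ⁅c, d⁆.IsThreeCycle := by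
  have hcda : c (d a) = d a := by
    by_contra hne
    exact hd (h (d a) hne fun hda => hd (d.injective hda))
  have hab : c a ≠ d a := fun hca => hc (c.injective (by rw [hca, hcda]))
  -- Splitting the point `a` off `d` leaves a permutation that is disjoint from `c`.
  set e : Perm α := swap a (d a) * d with he
  have hce : Perm.Disjoint c e := by
    intro x
    by_contra! hx
    rcases eq_or_ne x a with rfl | hxa
    · simp [he] at hx
    have hdx : d x = x := not_not.mp fun hdx => hxa (h x hx.1 hdx)
    have hxda : x ≠ d a := fun hxda => hx.1 (by rw [hxda, hcda])
    exact hx.2 (by rw [he, Perm.mul_apply, hdx, swap_apply_of_ne_of_ne hxa hxda])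
  have hde : d = swap a (d a) * e := by rw [he, swap_mul_self_mul]
  have hcomm : ⁅c, d⁆ = swap (d a) (c a) * swap (d a) a := by
    have hconj : c * swap a (d a) * c⁻¹ = swap (d a) (c a) := by
      rw [← swap_apply_apply, hcda, swap_comm]
    calc ⁅c, d⁆ = c * swap a (d a) * e * c⁻¹ * (swap a (d a) * e)⁻¹ := by
          rw [← hde, mul_assoc c, ← hde, commutatorElement_def]
      _ = c * swap a (d a) * c⁻¹ * (swap a (d a))⁻¹ := by
          rw [mul_assoc (c * swap a (d a)), ← hce.commute.inv_left.eq]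
          group
      _ = swap (d a) (c a) * swap (d a) a := by rw [hconj, swap_inv, swap_comm a]
  rw [hcomm]
  exact Perm.isThreeCycle_swap_mul_swap_same hab.symm hd hc

theorem isMultiplyPretransitive_of_isCycle_mem {G : Subgroup (Perm α)} (hG : IsPreprimitive G α)
    {c : Perm α} (hc : c.IsCycle) (hcG : c ∈ G) (hp : (#c.support).Prime)
    (hcard : 2 * #c.support ≤ Fintype.card α + 1) : IsMultiplyPretransitive G α #c.support := by
  have hp2 := hp.two_le
  have hfix : ((c.support : Set α)ᶜ).ncard = Fintype.card α - #c.support := by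
    rw [Set.ncard_compl, Set.ncard_coe_finset, Nat.card_eq_fintype_card]
  have hprim : IsPreprimitive (fixingSubgroup G (c.support : Set α)ᶜ)
      (SubMulAction.ofFixingSubgroup G (c.support : Set α)ᶜ) := by
    have := Perm.isPretransitive_of_isCycle_mem hc hcG
    apply IsPreprimitive.of_prime_card
    convert! hp
    change Nat.card (SubMulAction.ofFixingSubgroup G (c.support : Set α)ᶜ).carrier = _
    rw [Nat.card_coe_set_eq, SubMulAction.ofFixingSubgroup_carrier, compl_compl,
      Set.ncard_coe_finset]
  have := (hG.isMultiplyPreprimitive (n := Fintype.card α - #c.support - 1)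
    (hfix.trans (by omega)) (by rw [Nat.card_eq_fintype_card]; omega)
    hprim).isMultiplyPretransitive
  exact isMultiplyPretransitive_of_le (n := Fintype.card α - #c.support - 1 + 2) (by omega)
    (by rw [Nat.card_eq_fintype_card]; omega)

open Set.powersetCard in
theorem exists_conj_support_eq {G : Subgroup (Perm α)} {c : Perm α} {T : Finset α}
    [IsMultiplyPretransitive G α #c.support] (hT : #T = #c.support) :
    ∃ g ∈ G, (g * c * g⁻¹).support = T := by
  have htrans : IsPretransitive G (Set.powersetCard α #c.support) :=
    isPretransitive_of_isMultiplyPretransitive G inferInstance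
  obtain ⟨g, hg⟩ := htrans.exists_smul_eq ⟨c.support, rfl⟩ ⟨T, hT⟩
  refine ⟨g, g.2, ?_⟩
  rw [Perm.support_conj, map_eq_image]
  exact congrArg Subtype.val hg

/-- Jordan's theorem holds as soon as `#c.support + 3 ≤ Fintype.card α`; under the stronger
hypothesis made here some conjugate of `c` moves exactly one point of `c.support`, and its
commutator with `c` is a three-cycle. -/
theorem alternatingGroup_le_of_isPreprimitive_of_isCycle_mem {G : Subgroup (Perm α)}
    (hG : IsPreprimitive G α) {c : Perm α} (hc : c.IsCycle) (hcG : c ∈ G)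
    (hp : (#c.support).Prime) (hcard : 2 * #c.support ≤ Fintype.card α + 1) :
    alternatingGroup α ≤ G := by
  have := isMultiplyPretransitive_of_isCycle_mem hG hc hcG hp hcard
  obtain ⟨a, ha⟩ : c.support.Nonempty := card_pos.mp hp.pos
  obtain ⟨T, hT, hTcard⟩ := exists_subset_card_eq (s := c.supportᶜ) (n := #c.support - 1)
    (by rw [card_compl]; omega)
  have haT : a ∉ T := fun h => mem_compl.mp (hT h) ha
  obtain ⟨g, hg, hsupp⟩ := exists_conj_support_eq (G := G) (c := c) (T := insert a T)
    (by rw [card_insert_of_notMem haT, hTcard, Nat.sub_add_cancel hp.pos])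
  have hdG : g * c * g⁻¹ ∈ G := G.mul_mem (G.mul_mem hg hcG) (G.inv_mem hg)
  have hthree : ⁅c, g * c * g⁻¹⁆.IsThreeCycle := by
    refine isThreeCycle_commutator (a := a) (Perm.mem_support.mp ha)
      (Perm.mem_support.mp (hsupp ▸ mem_insert_self a T)) fun x hcx hdx => ?_
    rw [← Perm.mem_support, hsupp, mem_insert] at hdx
    exact hdx.resolve_right fun hx => mem_compl.mp (hT hx) (Perm.mem_support.mpr hcx)
  exact Perm.alternatingGroup_le_of_isPreprimitive_of_isThreeCycle_mem hG hthree
    (G.mul_mem (G.mul_mem (G.mul_mem hcG hdG) (G.inv_mem hcG)) (G.inv_mem hdG))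

theorem eq_top_or_eq_alternatingGroup_of_le {G : Subgroup (Perm α)} (hG : alternatingGroup α ≤ G) :
    G = ⊤ ∨ G = alternatingGroup α := by
  nontriviality α
  have hdvd : G.index ∣ 2 := alternatingGroup.index_eq_two (α := α) ▸ Subgroup.index_dvd_of_le hG
  exact ((Nat.dvd_prime Nat.prime_two).mp hdvd).imp Subgroup.index_eq_one.mp
    Perm.eq_alternatingGroup_of_index_eq_two

end Jordan

section Binomial

theorem choose_le_choose_of_add_le {N k i : ℕ} (hki : k ≤ i) (hN : i + k ≤ N) :
    N.choose k ≤ N.choose i := by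
  induction N generalizing k i with
  | zero => simp_all
  | succ N ih =>
    rcases hN.eq_or_lt with hN | hN
    · rw [Nat.choose_symm_of_eq_add hN.symm]
    rcases k with - | k
    · exact (Nat.choose_zero_right _).trans_le (Nat.choose_pos (by omega))
    rcases i with - | i
    · omega
    exact Nat.add_le_add (ih (by omega) (by omega)) (ih hki (by omega))

theorem sum_inv_choose_le (n : ℕ) : ∑ k ∈ Ico 1 n, (n.choose k : ℝ)⁻¹ ≤ 4 / n := by
  obtain hn | hn : n < 3 ∨ 3 ≤ n := by omega
  · interval_cases n <;> norm_num
  obtain ⟨m, rfl⟩ := Nat.exists_eq_add_of_le' hn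
  have hmiddle : ∑ k ∈ Ico 2 (m + 2), ((m + 3).choose k : ℝ)⁻¹ ≤ m * ((m + 3).choose 2 : ℝ)⁻¹ := by
    have hterm : ∀ k ∈ Ico 2 (m + 2), ((m + 3).choose k : ℝ)⁻¹ ≤ ((m + 3).choose 2 : ℝ)⁻¹ := by
      intro k hk
      rw [mem_Ico] at hk
      have hpos : 0 < (m + 3).choose 2 := Nat.choose_pos (by omega)
      have := choose_le_choose_of_add_le (N := m + 3) hk.1 (by omega)
      gcongr
    simpa using sum_le_card_nsmul _ _ _ hterm
  have hchoose_two : ((m + 3).choose 2 : ℝ) = (m + 3) * (m + 2) / 2 := by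
    rw [Nat.cast_choose_two]
    push_cast
    ring
  rw [sum_Ico_succ_top (by omega), sum_eq_sum_Ico_succ_bot (by omega),
    Nat.choose_one_right, Nat.choose_symm_of_eq_add (b := 1) rfl, Nat.choose_one_right]
  calc _ ≤ ((m + 3 : ℕ) : ℝ)⁻¹ + m * ((m + 3) * (m + 2) / 2 : ℝ)⁻¹ + ((m + 3 : ℕ) : ℝ)⁻¹ := by
        rw [← hchoose_two]
        gcongr
    _ = 2 / (m + 3) * (1 + m / (m + 2)) := by
        push_cast
        field_simp
        ring
    _ ≤ 2 / (m + 3) * (1 + 1) := by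
        gcongr
        exact div_le_one_of_le₀ (by linarith) (by positivity)
    _ = 4 / ((m + 3 : ℕ) : ℝ) := by
        push_cast
        ring

end Binomial

section TransitiveAction

variable {G X : Type*} [Group G] [MulAction G X] [IsPretransitive G X]

theorem card_smul_eq_mul_card (x y : X) :
    Nat.card {g : G // g • x = y} * Nat.card X = Nat.card G := by
  obtain ⟨h, rfl⟩ := exists_smul_eq G x y
  have hcoset : {g : G // g • x = h • x} ≃ stabilizer G x :=
    (Equiv.mulLeft h⁻¹).subtypeEquiv fun g => by
      rw [coe_mulLeft, mem_stabilizer_iff, mul_smul, inv_smul_eq_iff]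
  rw [Nat.card_congr hcoset, ← index_stabilizer_of_transitive G x, Subgroup.card_mul_index]

/-- For `τ = id` this is Burnside's lemma for a transitive action. -/
theorem sum_card_smul_eq [Fintype G] [Fintype X] [DecidableEq X] [Nonempty X] (τ : X → X) :
    ∑ g : G, #{x : X | g • x = τ x} = Fintype.card G := by
  have hswap : ∑ g : G, #{x : X | g • x = τ x} = ∑ x : X, #{g : G | g • x = τ x} :=
    sum_card_bipartiteAbove_eq_sum_card_bipartiteBelow fun g x => g • x = τ x
  have hfiber (x : X) : #{g : G | g • x = τ x} * Fintype.card X = Fintype.card G := by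
    simpa [Nat.card_eq_fintype_card, Fintype.card_subtype] using
      card_smul_eq_mul_card (G := G) x (τ x)
  refine Nat.eq_of_mul_eq_mul_right (Fintype.card_pos (α := X)) ?_
  rw [hswap, sum_mul, sum_congr rfl fun x _ => hfiber x, sum_const, card_univ, smul_eq_mul,
    mul_comm]

theorem ncard_pairs_smul_eq_mul_card_le :
    {p : G × G | ∃ x : X, p.1 • x = x ∧ p.2 • x = x}.ncard * Nat.card X ≤ Nat.card G ^ 2 := by
  rcases finite_or_infinite X with hX | hX
  swap
  · simp
  have := Fintype.ofFinite X
  have hunion : {p : G × G | ∃ x : X, p.1 • x = x ∧ p.2 • x = x} =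
      ⋃ x ∈ (univ : Finset X), (stabilizer G x : Set G) ×ˢ (stabilizer G x : Set G) := by
    ext p
    simp
  have hstab (x : X) : Nat.card (stabilizer G x) = Nat.card G / Nat.card X :=
    have : Nonempty X := ⟨x⟩
    Nat.eq_div_of_mul_eq_left Nat.card_pos.ne' (card_smul_eq_mul_card x x)
  calc _ ≤ (∑ x : X, Nat.card (stabilizer G x) ^ 2) * Nat.card X := by
        rw [hunion]
        refine Nat.mul_le_mul_right _ ((set_ncard_biUnion_le _ _).trans_eq ?_)
        exact sum_congr rfl fun x _ => by rw [Set.ncard_prod, sq]; rfl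
    _ = (Nat.card X * (Nat.card G / Nat.card X)) ^ 2 := by
        simp only [hstab, sum_const, card_univ, smul_eq_mul, ← Nat.card_eq_fintype_card]
        ring
    _ ≤ Nat.card G ^ 2 := by gcongr; exact Nat.mul_div_le _ _

end TransitiveAction

section UniformPartition

variable {α : Type*}

theorem exists_perm_smul_eq_of_ncard_eq [Finite α] {s t : Set α} (h : s.ncard = t.ncard) :
    ∃ σ : Perm α, σ • s = t := by
  classical
  have := Fintype.ofFinite α
  obtain ⟨σ, hσ⟩ := (Set.powersetCard.isPretransitive (α := α)).exists_smul_eq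
    ⟨s.toFinset, (Set.ncard_eq_toFinset_card' s).symm.trans h⟩
    ⟨t.toFinset, (Set.ncard_eq_toFinset_card' t).symm⟩
  have hcoe := congrArg ((↑) : Finset α → Set α) (congrArg Subtype.val hσ)
  rw [Set.powersetCard.coe_smul, coe_smul_finset, Set.coe_toFinset, Set.coe_toFinset] at hcoe
  exact ⟨σ, hcoe⟩

/-- The partitions of `α` all of whose parts have exactly `m` elements; the parts of such a
partition are the candidates for a block system of a transitive group. -/
structure IsUniformPartition (π : Set (Set α)) (m : ℕ) : Prop where
  isPartition : Setoid.IsPartition π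
  ncard_eq : ∀ B ∈ π, B.ncard = m

namespace IsUniformPartition

variable {π ρ : Set (Set α)} {m : ℕ}

theorem smul (hπ : IsUniformPartition π m) (σ : Perm α) : IsUniformPartition (σ • π) m := by
  refine ⟨⟨?_, fun x => ?_⟩, ?_⟩
  · rintro ⟨B, hB, hempty⟩
    exact hπ.isPartition.1 (Set.smul_set_eq_empty.mp hempty ▸ hB)
  · obtain ⟨B, ⟨hB, hx⟩, huniq⟩ := hπ.isPartition.2 (σ⁻¹ • x)
    refine ⟨σ • B, ⟨Set.smul_mem_smul_set hB, Set.mem_smul_set_iff_inv_smul_mem.mpr hx⟩, ?_⟩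
    rintro _ ⟨⟨C, hC, rfl⟩, hxC⟩
    exact congrArg (σ • ·) (huniq C ⟨hC, Set.mem_smul_set_iff_inv_smul_mem.mp hxC⟩)
  · rintro _ ⟨B, hB, rfl⟩
    exact (Set.ncard_smul_set σ B).trans (hπ.ncard_eq B hB)

theorem existsUnique_mem (hπ : IsUniformPartition π m) (x : α) : ∃! B : π, x ∈ (B : Set α) := by
  obtain ⟨B, ⟨hB, hx⟩, huniq⟩ := hπ.isPartition.2 x
  exact ⟨⟨B, hB⟩, hx, fun C hC => Subtype.ext (huniq C ⟨C.2, hC⟩)⟩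

theorem card_mul [Finite α] (hπ : IsUniformPartition π m) : Nat.card π * m = Nat.card α := by
  have := Fintype.ofFinite π
  have hparts (B : π) : Nat.card (B : Set α) = m := hπ.ncard_eq B B.2
  simp only [← Nat.card_congr (Set.sigmaEquiv _ hπ.existsUnique_mem), Nat.card_sigma, hparts,
    sum_const, card_univ, smul_eq_mul, Nat.card_eq_fintype_card]

theorem ne_zero [Finite α] [Nonempty α] (hπ : IsUniformPartition π m) : m ≠ 0 := by
  rintro rfl
  exact Nat.card_pos.ne (hπ.card_mul (α := α))

theorem exists_perm_smul_eq [Finite α] [Nonempty α] (hπ : IsUniformPartition π m)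
    (hρ : IsUniformPartition ρ m) : ∃ σ : Perm α, σ • π = ρ := by
  have hcard : Nat.card π = Nat.card ρ :=
    Nat.eq_of_mul_eq_mul_right (Nat.pos_of_ne_zero hπ.ne_zero) (hπ.card_mul.trans hρ.card_mul.symm)
  obtain ⟨e⟩ : Nonempty (π ≃ ρ) := Finite.card_eq.mp hcard
  have hncard (B : π) : (B : Set α).ncard = (e B : Set α).ncard :=
    (hπ.ncard_eq B B.2).trans (hρ.ncard_eq (e B) (e B).2).symm
  have f (B : π) : (B : Set α) ≃ (e B : Set α) := (Finite.card_eq.mp (hncard B)).some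
  let σ : Perm α := (Set.sigmaEquiv _ hπ.existsUnique_mem).symm.trans <|
    (Equiv.sigmaCongr e f).trans <|
    Set.sigmaEquiv _ hρ.existsUnique_mem
  have hσ (B : π) : σ • (B : Set α) = e B := by
    refine Set.eq_of_subset_of_ncard_le ?_ ?_
    · rintro _ ⟨x, hx, rfl⟩
      have : (Set.sigmaEquiv _ hπ.existsUnique_mem).symm x = ⟨B, x, hx⟩ := by
        rw [Equiv.symm_apply_eq]; rfl
      change σ x ∈ _
      simp only [σ, Equiv.trans_apply, this]
      exact Subtype.prop _
    · rw [Set.ncard_smul_set]; exact (hncard B).ge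
  refine ⟨σ, Set.ext fun C => ⟨?_, fun hC => ?_⟩⟩
  · rintro ⟨B, hB, rfl⟩
    exact Set.mem_of_eq_of_mem (hσ ⟨B, hB⟩) (e ⟨B, hB⟩).2
  · exact ⟨e.symm ⟨C, hC⟩, (e.symm ⟨C, hC⟩).2, by simp [hσ]⟩

theorem choose_le_card_orbit [Finite α] [Nonempty α] (hπ : IsUniformPartition π m) :
    (Nat.card α - 1).choose (m - 1) ≤ Nat.card (orbit (Perm α) π) := by
  classical
  have := Fintype.ofFinite α
  obtain ⟨a⟩ := ‹Nonempty α›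
  obtain ⟨B, ⟨hB, -⟩, -⟩ := hπ.isPartition.2 a
  let 𝒯 : Finset (Finset α) := powersetCard (m - 1) (univ.erase a)
  have haT (T : 𝒯) : a ∉ T.1 := fun haT => by simpa using (mem_powersetCard.mp T.2).1 haT
  have hcontains (T : 𝒯) : ∃ ρ : orbit (Perm α) π, ((insert a T.1 : Finset α) : Set α) ∈ ρ.1 := by
    have hcard : B.ncard = ((insert a T.1 : Finset α) : Set α).ncard := by
      rw [Set.ncard_coe_finset, card_insert_of_notMem (haT T), (mem_powersetCard.mp T.2).2,
        hπ.ncard_eq B hB, Nat.sub_add_cancel (Nat.one_le_iff_ne_zero.mpr hπ.ne_zero)]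
    obtain ⟨σ, hσ⟩ := exists_perm_smul_eq_of_ncard_eq hcard
    exact ⟨⟨σ • π, mem_orbit π σ⟩, B, hB, hσ⟩
  choose ρ hρ using hcontains
  have hinj : Injective ρ := by
    intro T T' h
    obtain ⟨σ, hσ⟩ := (ρ T).2
    have huniq := ((hσ ▸ hπ.smul σ : IsUniformPartition (ρ T).1 m).isPartition.2 a).unique
      ⟨hρ T, by simp⟩ ⟨h ▸ hρ T', by simp⟩
    rw [Finset.coe_inj] at huniq
    rw [Subtype.ext_iff, ← erase_insert (haT T), huniq, erase_insert (haT T')]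
  have hcard𝒯 : #𝒯 = (Nat.card α - 1).choose (m - 1) := by
    rw [card_powersetCard, card_erase_of_mem (mem_univ a), card_univ, Nat.card_eq_fintype_card]
  rw [← hcard𝒯, ← Nat.card_eq_finsetCard]
  exact Nat.card_le_card_of_injective ρ hinj

end IsUniformPartition

end UniformPartition

section Imprimitive

theorem exists_smul_finset_eq_of_not_isPretransitive {G α : Type*} [Group G] [MulAction G α]
    [Fintype α] [DecidableEq α] [Nonempty α] (h : ¬ IsPretransitive G α) :
    ∃ s : Finset α, #s ∈ Ico 1 (Fintype.card α) ∧ ∀ g : G, g • s = s := by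
  classical
  obtain ⟨a⟩ := ‹Nonempty α›
  have horbit : orbit G a ≠ Set.univ := mt (isPretransitive_iff_orbit_eq_univ a).mpr h
  refine ⟨(orbit G a).toFinset, mem_Ico.mpr ⟨card_pos.mpr ⟨a, by simp⟩, ?_⟩, fun g => ?_⟩
  · rwa [card_lt_iff_ne_univ, Ne, Set.toFinset_eq_univ]
  · rw [← coe_inj, coe_smul_finset, Set.coe_toFinset, smul_orbit]

theorem exists_smul_eq_isUniformPartition_of_not_isPreprimitive {G α : Type*} [Group G]
    [MulAction G α] [Finite α] [IsPretransitive G α] (h : ¬ IsPreprimitive G α) :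
    ∃ m ∈ Ico 2 (Nat.card α), ∃ π : Set (Set α), IsUniformPartition π m ∧ ∀ g : G, g • π = π := by
  obtain ⟨B, hB, hBtriv⟩ : ∃ B : Set α, IsBlock G B ∧ ¬ IsTrivialBlock B := by
    by_contra! hall
    exact h ⟨fun {B} hB => hall B hB⟩
  rw [IsTrivialBlock, not_or, Set.not_subsingleton_iff] at hBtriv
  refine ⟨B.ncard, mem_Ico.mpr ⟨?_, ?_⟩, Set.range fun g : G => g • B, ⟨?_, ?_⟩, fun g => ?_⟩
  · exact Set.one_lt_ncard_iff_nontrivial.mpr hBtriv.1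
  · exact Set.ncard_lt_card hBtriv.2
  · exact (hB.isBlockSystem hBtriv.1.nonempty).1
  · rintro _ ⟨g, rfl⟩
    exact Set.ncard_smul_set g B
  · exact smul_orbit g B

variable {α : Type*} [Fintype α]

theorem ncard_pairs_smul_finset_eq_le [DecidableEq α] (k : ℕ) :
    {p : Perm α × Perm α | ∃ s : Finset α, #s = k ∧ p.1 • s = s ∧ p.2 • s = s}.ncard *
      (Fintype.card α).choose k ≤ (Fintype.card α).factorial ^ 2 := by
  have := Set.powersetCard.isPretransitive (α := α) (n := k)
  have h := ncard_pairs_smul_eq_mul_card_le (G := Perm α) (X := Set.powersetCard α k)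
  rw [Set.powersetCard.card, Nat.card_perm, Nat.card_eq_fintype_card] at h
  refine (Nat.mul_le_mul_right _ (Set.ncard_le_ncard ?_)).trans h
  rintro p ⟨s, hs, h₁, h₂⟩
  exact ⟨⟨s, hs⟩, Subtype.ext h₁, Subtype.ext h₂⟩

theorem ncard_pairs_smul_eq_isUniformPartition_le [Nonempty α] (m : ℕ) :
    {p : Perm α × Perm α | ∃ π : Set (Set α),
        IsUniformPartition π m ∧ p.1 • π = π ∧ p.2 • π = π}.ncard *
      (Fintype.card α - 1).choose (m - 1) ≤ (Fintype.card α).factorial ^ 2 := by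
  rcases Set.eq_empty_or_nonempty {π : Set (Set α) | IsUniformPartition π m} with hm | ⟨π, hπ⟩
  · have hnone (π : Set (Set α)) : ¬ IsUniformPartition π m :=
      Set.eq_empty_iff_forall_notMem.mp hm π
    simp [hnone]
  have h := ncard_pairs_smul_eq_mul_card_le (G := Perm α) (X := orbit (Perm α) π)
  rw [Nat.card_perm, Nat.card_eq_fintype_card (α := α)] at h
  refine (Nat.mul_le_mul (Set.ncard_le_ncard ?_) ?_).trans h
  · rintro p ⟨ρ, hρ, h₁, h₂⟩
    exact ⟨⟨ρ, hπ.exists_perm_smul_eq hρ⟩, Subtype.ext h₁, Subtype.ext h₂⟩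
  · rw [← Nat.card_eq_fintype_card]
    exact hπ.choose_le_card_orbit

theorem ncard_le_mul_sum_inv_of_subset_biUnion {β ι : Type*} [Finite β] {I : Finset ι} {S : Set β}
    {A : ι → Set β} {c : ι → ℕ} {N : ℝ} (hS : S ⊆ ⋃ i ∈ I, A i) (hc : ∀ i ∈ I, 0 < c i)
    (hA : ∀ i ∈ I, (A i).ncard * c i ≤ N) :
    (S.ncard : ℝ) ≤ N * ∑ i ∈ I, (c i : ℝ)⁻¹ := by
  calc (S.ncard : ℝ) ≤ ∑ i ∈ I, ((A i).ncard : ℝ) := by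
        exact_mod_cast (Set.ncard_le_ncard hS).trans (set_ncard_biUnion_le I A)
    _ ≤ ∑ i ∈ I, N * (c i : ℝ)⁻¹ := by
        refine sum_le_sum fun i hi => ?_
        rw [← div_eq_mul_inv, le_div_iff₀ (by exact_mod_cast hc i hi)]
        exact hA i hi
    _ = N * ∑ i ∈ I, (c i : ℝ)⁻¹ := (mul_sum ..).symm

theorem ncard_not_isPretransitive_closure_le [Nonempty α] :
    ({p : Perm α × Perm α | ¬ IsPretransitive (Subgroup.closure {p.1, p.2}) α}.ncard : ℝ) ≤
      ((Fintype.card α).factorial : ℝ) ^ 2 *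
        ∑ k ∈ Ico 1 (Fintype.card α), ((Fintype.card α).choose k : ℝ)⁻¹ := by
  classical
  refine ncard_le_mul_sum_inv_of_subset_biUnion
    (A := fun k => {p | ∃ s : Finset α, #s = k ∧ p.1 • s = s ∧ p.2 • s = s})
    (fun p hp => ?_) (fun k hk => Nat.choose_pos (mem_Ico.mp hk).2.le)
    fun k _ => by exact_mod_cast ncard_pairs_smul_finset_eq_le k
  obtain ⟨s, hcard, hs⟩ := exists_smul_finset_eq_of_not_isPretransitive hp
  exact Set.mem_biUnion hcard ⟨s, rfl, hs ⟨p.1, Subgroup.subset_closure (by simp)⟩,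
    hs ⟨p.2, Subgroup.subset_closure (by simp)⟩⟩

theorem ncard_isPretransitive_not_isPreprimitive_closure_le [Nonempty α] :
    ({p : Perm α × Perm α | IsPretransitive (Subgroup.closure {p.1, p.2}) α ∧
        ¬ IsPreprimitive (Subgroup.closure {p.1, p.2}) α}.ncard : ℝ) ≤
      ((Fintype.card α).factorial : ℝ) ^ 2 *
        ∑ k ∈ Ico 1 (Fintype.card α - 1), ((Fintype.card α - 1).choose k : ℝ)⁻¹ := by
  refine ncard_le_mul_sum_inv_of_subset_biUnion
    (A := fun k => {p | ∃ π : Set (Set α),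
      IsUniformPartition π (k + 1) ∧ p.1 • π = π ∧ p.2 • π = π})
    (fun p hp => ?_) (fun k hk => Nat.choose_pos (mem_Ico.mp hk).2.le)
    fun k _ => by exact_mod_cast ncard_pairs_smul_eq_isUniformPartition_le (k + 1)
  obtain ⟨htrans, hprim⟩ := hp
  obtain ⟨m, hm, π, hπ, hfix⟩ := exists_smul_eq_isUniformPartition_of_not_isPreprimitive hprim
  rw [mem_Ico, Nat.card_eq_fintype_card] at hm
  exact Set.mem_biUnion (x := m - 1) (mem_coe.mpr (mem_Ico.mpr (by omega)))
    ⟨π, by rwa [Nat.sub_add_cancel (by omega)],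
      hfix ⟨p.1, Subgroup.subset_closure (by simp)⟩, hfix ⟨p.2, Subgroup.subset_closure (by simp)⟩⟩

theorem ncard_not_isPreprimitive_closure_le [Nonempty α] :
    ({p : Perm α × Perm α | ¬ IsPreprimitive (Subgroup.closure {p.1, p.2}) α}.ncard : ℝ) ≤
      ((Fintype.card α).factorial : ℝ) ^ 2 *
        (4 / Fintype.card α + 4 / (Fintype.card α - 1 : ℕ)) := by
  have hsplit : {p : Perm α × Perm α | ¬ IsPreprimitive (Subgroup.closure {p.1, p.2}) α} ⊆
      {p | ¬ IsPretransitive (Subgroup.closure {p.1, p.2}) α} ∪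
        {p | IsPretransitive (Subgroup.closure {p.1, p.2}) α ∧
          ¬ IsPreprimitive (Subgroup.closure {p.1, p.2}) α} := fun p hp =>
    (em _).symm.imp_right fun htrans => ⟨htrans, hp⟩
  have hcard := (Set.ncard_le_ncard hsplit).trans (Set.ncard_union_le _ _)
  calc _ ≤ _ := by exact_mod_cast hcard
    _ ≤ _ := add_le_add ncard_not_isPretransitive_closure_le
        ncard_isPretransitive_not_isPreprimitive_closure_le
    _ ≤ _ := by
        rw [← mul_add]
        gcongr <;> exact sum_inv_choose_le _

end Imprimitive

section PointPeriod

variable {α : Type*} {x : Perm α}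

theorem period_eq_of_sameCycle {i j : α} (h : x.SameCycle i j) : period x i = period x j := by
  obtain ⟨k, rfl⟩ := h
  refine Nat.dvd_right_iff_eq.mp fun m => ?_
  rw [← pow_smul_eq_iff_period_dvd, ← pow_smul_eq_iff_period_dvd, ← Perm.smul_def, ← mul_smul,
    (((Commute.refl x).pow_left m).zpow_right k).eq, mul_smul, smul_left_cancel_iff]

theorem ncard_sameCycle (x : Perm α) (i : α) : {j | x.SameCycle i j}.ncard = period x i := by
  have horbit : {j | x.SameCycle i j} = orbit (Subgroup.zpowers x) i := by
    ext j
    simp [Perm.SameCycle, mem_orbit_iff, Subgroup.smul_def]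
  rw [horbit, ← Nat.card_coe_set_eq, Nat.card_congr (orbitZPowersEquiv x i), Nat.card_zmod]
  rfl

theorem period_pos [Finite α] (x : Perm α) (i : α) : 0 < period x i :=
  period_pos_of_orderOf_pos (orderOf_pos x) i

theorem period_le_card [Fintype α] (x : Perm α) (i : α) : period x i ≤ Fintype.card α :=
  minimalPeriod_le_card

theorem exists_zmod_embedding (x : Perm α) (i : α) :
    ∃ f : ZMod (period x i) ↪ α, f 0 = i ∧ ∀ t, x (f t) = f (t + 1) := by
  let e : _ ≃ ZMod (period x i) := orbitZPowersEquiv x i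
  have he (k : ℤ) : (e.symm k : α) = (x ^ k) i :=
    congrArg Subtype.val (orbitZPowersEquiv_symm_apply' x i k)
  refine ⟨⟨fun t => (e.symm t : α), Subtype.val_injective.comp e.symm.injective⟩, ?_, fun t => ?_⟩
  · simpa using he 0
  · obtain ⟨k, rfl⟩ := ZMod.intCast_surjective t
    have h := he (k + 1)
    rw [add_comm, zpow_one_add, Perm.mul_apply, ← he, add_comm, Int.cast_add, Int.cast_one] at h
    exact h.symm

variable {a : ℕ} {f : ZMod a ↪ α}

theorem pow_apply_zmod_embedding (hf : ∀ t, x (f t) = f (t + 1)) (k : ℕ) :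
    (x ^ k) (f 0) = f k := by
  induction k with
  | zero => simp
  | succ k ih => rw [pow_succ', Perm.mul_apply, ih, hf, Nat.cast_succ]

theorem period_zmod_embedding (hf : ∀ t, x (f t) = f (t + 1)) : period x (f 0) = a := by
  refine Nat.dvd_right_iff_eq.mp fun m => ?_
  rw [← pow_smul_eq_iff_period_dvd, ← ZMod.natCast_eq_zero_iff, ← f.injective.eq_iff,
    Perm.smul_def, pow_apply_zmod_embedding hf]

theorem sameCycle_zmod_embedding [NeZero a] (hf : ∀ t, x (f t) = f (t + 1)) (t : ZMod a) :
    x.SameCycle (f 0) (f t) :=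
  ⟨t.val, by rw [zpow_natCast, pow_apply_zmod_embedding hf, ZMod.natCast_zmod_val]⟩

theorem zmod_embedding_eq_of_apply_zero_eq [NeZero a] {g : ZMod a ↪ α}
    (hf : ∀ t, x (f t) = f (t + 1)) (hg : ∀ t, x (g t) = g (t + 1)) (h : f 0 = g 0) : f = g := by
  ext t
  rw [← ZMod.natCast_zmod_val t, ← pow_apply_zmod_embedding hf, ← pow_apply_zmod_embedding hg, h]

end PointPeriod

section PointPeriodCount

variable {α : Type*} [Fintype α] [DecidableEq α]

instance isPretransitive_perm_embedding {β : Type*} [Finite β] :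
    IsPretransitive (Perm α) (β ↪ α) := by
  have := Perm.isMultiplyPretransitive α (Nat.card β)
  let e := (Finite.equivFin β).symm.toEmbedding
  refine ⟨fun f g => ?_⟩
  obtain ⟨x, hx⟩ := exists_smul_eq (Perm α) (e.trans f) (e.trans g)
  refine ⟨x, Embedding.ext fun b => ?_⟩
  simpa [e] using DFunLike.congr_fun hx (Finite.equivFin β b)

theorem sum_card_equivariant_embedding {β : Type*} [Fintype β] [Nonempty (β ↪ α)] (σ : Perm β) :
    ∑ x : Perm α, #{f : β ↪ α | ∀ b, x (f b) = f (σ b)} = (Fintype.card α).factorial := by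
  classical
  rw [← Fintype.card_perm,
    ← sum_card_smul_eq (G := Perm α) fun f : β ↪ α => σ.toEmbedding.trans f]
  simp [DFunLike.ext_iff]

theorem sum_card_period_eq {a : ℕ} (ha : a ∈ Icc 1 (Fintype.card α)) :
    ∑ x : Perm α, #{i : α | period x i = a} = (Fintype.card α).factorial := by
  obtain ⟨ha1, ha2⟩ := mem_Icc.mp ha
  have : NeZero a := ⟨Nat.one_le_iff_ne_zero.mp ha1⟩
  have : Nonempty (ZMod a ↪ α) := Embedding.nonempty_of_card_le (by rwa [ZMod.card])
  rw [← sum_card_equivariant_embedding (Equiv.addRight (1 : ZMod a))]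
  refine sum_congr rfl fun x _ => (card_bij (fun f _ => f 0) ?_ ?_ ?_).symm
  · intro f hf
    exact (mem_filter_univ _).mpr (period_zmod_embedding ((mem_filter_univ _).mp hf))
  · intro f hf g hg h
    exact zmod_embedding_eq_of_apply_zero_eq ((mem_filter_univ _).mp hf)
      ((mem_filter_univ _).mp hg) h
  · intro i hi
    obtain rfl : period x i = a := by simpa using hi
    obtain ⟨f, hf0, hf⟩ := exists_zmod_embedding x i
    exact ⟨f, (mem_filter_univ _).mpr hf, hf0⟩

theorem sum_card_period_eq_and_period_eq_le {a b : ℕ} (ha : a ≠ 0) (hb : b ≠ 0) :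
    ∑ x : Perm α, #{q : α × α | ¬ x.SameCycle q.1 q.2 ∧ period x q.1 = a ∧ period x q.2 = b} ≤
      (Fintype.card α).factorial := by
  have : NeZero a := ⟨ha⟩
  have : NeZero b := ⟨hb⟩
  let σ : Perm (ZMod a ⊕ ZMod b) := sumCongr (Equiv.addRight 1) (Equiv.addRight 1)
  have hle (x : Perm α) :
      #{q : α × α | ¬ x.SameCycle q.1 q.2 ∧ period x q.1 = a ∧ period x q.2 = b} ≤
        #{h : ZMod a ⊕ ZMod b ↪ α | ∀ t, x (h t) = h (σ t)} := by
    refine card_le_card_of_surjOn (fun h => (h (.inl 0), h (.inr 0))) ?_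
    rintro ⟨i, j⟩ hij
    obtain ⟨hnot, rfl, rfl⟩ : ¬ x.SameCycle i j ∧ period x i = a ∧ period x j = b := by
      simpa using hij
    obtain ⟨f, hf0, hf⟩ := exists_zmod_embedding x i
    obtain ⟨g, hg0, hg⟩ := exists_zmod_embedding x j
    have hdisj (s t) : f s ≠ g t := fun hst => hnot <| by
      rw [← hf0, ← hg0]
      exact (sameCycle_zmod_embedding hf s).trans (hst ▸ (sameCycle_zmod_embedding hg t).symm)
    refine ⟨⟨Sum.elim f g, f.injective.sumElim g.injective hdisj⟩, ?_, Prod.ext hf0 hg0⟩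
    simpa [σ] using ⟨hf, hg⟩
  refine (sum_le_sum fun x _ => hle x).trans ?_
  rcases isEmpty_or_nonempty (ZMod a ⊕ ZMod b ↪ α) with hempty | hnonempty
  · simp
  · exact (sum_card_equivariant_embedding σ).le

end PointPeriodCount

section CycleCount

variable {α : Type*} [Fintype α]

/-- The number of cycles of `x` whose length lies in `P`, fixed points being cycles of length one:
a cycle of length `a` is counted with weight `1 / a` at each of its `a` points. -/
noncomputable def cycleCount (P : Finset ℕ) (x : Perm α) : ℝ :=
  ∑ i : α, if period x i ∈ P then (period x i : ℝ)⁻¹ else 0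

theorem cycleCount_eq_zero_iff {P : Finset ℕ} {x : Perm α} :
    cycleCount P x = 0 ↔ ∀ i : α, period x i ∉ P := by
  rw [cycleCount, sum_eq_zero_iff_of_nonneg fun i _ => by positivity]
  simp [(period_pos x _).ne']

variable [DecidableEq α]

theorem sum_sum_apply_period (φ : ℕ → ℝ) :
    ∑ x : Perm α, ∑ i : α, φ (period x i) =
      (Fintype.card α).factorial * ∑ a ∈ Icc 1 (Fintype.card α), φ a := by
  have hfiber (x : Perm α) : ∑ i : α, φ (period x i) =
      ∑ a ∈ Icc 1 (Fintype.card α), (#{i : α | period x i = a} : ℝ) * φ a := by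
    rw [← sum_fiberwise_of_maps_to' (g := period x) (t := Icc 1 (Fintype.card α))
      fun i _ => mem_Icc.mpr ⟨period_pos x i, period_le_card x i⟩]
    simp
  simp only [hfiber]
  rw [sum_comm, mul_sum]
  refine sum_congr rfl fun a ha => ?_
  rw [← sum_mul, ← sum_card_period_eq ha, Nat.cast_sum]

theorem sum_sum_not_sameCycle_apply_period_le {φ : ℕ → ℕ → ℝ} (hφ : ∀ a b, 0 ≤ φ a b) :
    ∑ x : Perm α, ∑ q : α × α with ¬ x.SameCycle q.1 q.2, φ (period x q.1) (period x q.2) ≤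
      (Fintype.card α).factorial *
        ∑ a ∈ Icc 1 (Fintype.card α), ∑ b ∈ Icc 1 (Fintype.card α), φ a b := by
  set I := Icc 1 (Fintype.card α)
  have hmem (x : Perm α) (i : α) : period x i ∈ I :=
    mem_Icc.mpr ⟨period_pos x i, period_le_card x i⟩
  have hne {a : ℕ} (ha : a ∈ I) : a ≠ 0 := Nat.one_le_iff_ne_zero.mp (mem_Icc.mp ha).1
  have hfiber (x : Perm α) :
      ∑ q : α × α with ¬ x.SameCycle q.1 q.2, φ (period x q.1) (period x q.2) =
        ∑ c ∈ I ×ˢ I, (#{q : α × α | ¬ x.SameCycle q.1 q.2 ∧ period x q.1 = c.1 ∧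
          period x q.2 = c.2} : ℝ) * φ c.1 c.2 := by
    rw [← sum_fiberwise_of_maps_to' (g := fun q : α × α => (period x q.1, period x q.2))
      (t := I ×ˢ I) (fun q _ => mk_mem_product (hmem x q.1) (hmem x q.2)) fun c => φ c.1 c.2]
    simp [filter_filter, Prod.ext_iff]
  simp only [hfiber]
  rw [sum_comm, ← sum_product' I I φ, mul_sum]
  refine sum_le_sum fun c hc => ?_
  obtain ⟨ha, hb⟩ := mem_product.mp hc
  rw [← sum_mul]
  refine mul_le_mul_of_nonneg_right ?_ (hφ _ _)
  exact_mod_cast sum_card_period_eq_and_period_eq_le (hne ha) (hne hb)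

theorem sum_cycleCount {P : Finset ℕ} (hP : P ⊆ Icc 1 (Fintype.card α)) :
    ∑ x : Perm α, cycleCount P x = (Fintype.card α).factorial * ∑ a ∈ P, (a : ℝ)⁻¹ := by
  simp only [cycleCount]
  rw [sum_sum_apply_period fun a => if a ∈ P then (a : ℝ)⁻¹ else 0, ← sum_filter,
    filter_mem_eq_inter, inter_eq_right.mpr hP]

theorem cycleCount_sq (P : Finset ℕ) (x : Perm α) :
    cycleCount P x ^ 2 = (∑ q : α × α with ¬ x.SameCycle q.1 q.2,
      (if period x q.1 ∈ P then (period x q.1 : ℝ)⁻¹ else 0) *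
        if period x q.2 ∈ P then (period x q.2 : ℝ)⁻¹ else 0) + cycleCount P x := by
  let w (i : α) : ℝ := if period x i ∈ P then (period x i : ℝ)⁻¹ else 0
  have hsame (i : α) : ∑ j with x.SameCycle i j, w i * w j = w i := by
    have hconst : ∀ j ∈ ({j | x.SameCycle i j} : Finset α), w i * w j = w i * w i :=
      fun j hj => by simp only [w, period_eq_of_sameCycle ((mem_filter_univ _).mp hj)]
    have hcard : #{j | x.SameCycle i j} = period x i := by
      rw [← ncard_sameCycle, ← Set.ncard_coe_finset, coe_filter_univ]
    have hpos : (period x i : ℝ) ≠ 0 := Nat.cast_ne_zero.mpr (period_pos x i).ne'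
    rw [sum_congr rfl hconst, sum_const, hcard, nsmul_eq_mul]
    by_cases hi : period x i ∈ P <;> simp [w, hi, hpos]
  calc cycleCount P x ^ 2 = ∑ q : α × α, w q.1 * w q.2 := by
        rw [sq, cycleCount, sum_mul_sum, ← univ_product_univ, sum_product]
    _ = (∑ q : α × α with ¬ x.SameCycle q.1 q.2, w q.1 * w q.2) +
          ∑ q : α × α with x.SameCycle q.1 q.2, w q.1 * w q.2 := by
        rw [add_comm, sum_filter_add_sum_filter_not]
    _ = _ := by
        congr 1
        rw [sum_filter, ← univ_product_univ, sum_product]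
        simp only [← sum_filter, hsame]
        rfl

theorem sum_cycleCount_sq_le {P : Finset ℕ} (hP : P ⊆ Icc 1 (Fintype.card α)) :
    ∑ x : Perm α, cycleCount P x ^ 2 ≤
      (Fintype.card α).factorial * ((∑ a ∈ P, (a : ℝ)⁻¹) ^ 2 + ∑ a ∈ P, (a : ℝ)⁻¹) := by
  let w (a : ℕ) : ℝ := if a ∈ P then (a : ℝ)⁻¹ else 0
  have hw (a : ℕ) : 0 ≤ w a := by positivity
  have hsum : ∑ a ∈ Icc 1 (Fintype.card α), w a = ∑ a ∈ P, (a : ℝ)⁻¹ := by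
    rw [← sum_filter, filter_mem_eq_inter, inter_eq_right.mpr hP]
  simp only [cycleCount_sq]
  rw [sum_add_distrib, sum_cycleCount hP, mul_add, ← hsum, sq, sum_mul_sum]
  gcongr
  exact sum_sum_not_sameCycle_apply_period_le (φ := fun a b => w a * w b)
    fun a b => mul_nonneg (hw a) (hw b)

theorem sq_sum_le_card_ne_zero_mul_sum_sq {ι : Type*} [Fintype ι] (X : ι → ℝ) :
    (∑ i, X i) ^ 2 ≤ #{i | X i ≠ 0} * ∑ i, X i ^ 2 := by
  calc (∑ i, X i) ^ 2 = (∑ i with X i ≠ 0, X i) ^ 2 := by rw [sum_filter_ne_zero]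
    _ ≤ #{i | X i ≠ 0} * ∑ i with X i ≠ 0, X i ^ 2 := sq_sum_le_card_mul_sum_sq
    _ ≤ #{i | X i ≠ 0} * ∑ i, X i ^ 2 := by
        gcongr
        exact filter_subset _ _

theorem card_forall_period_notMem_mul_le {P : Finset ℕ} (hP : P ⊆ Icc 1 (Fintype.card α)) :
    (#{x : Perm α | ∀ i : α, period x i ∉ P} : ℝ) * (1 + ∑ a ∈ P, (a : ℝ)⁻¹) ≤
      (Fintype.card α).factorial := by
  set S := ∑ a ∈ P, (a : ℝ)⁻¹
  set F := ((Fintype.card α).factorial : ℝ)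
  have hS : 0 ≤ S := by positivity
  have hF : 0 < F := by positivity
  have hcompl : (#{x : Perm α | ∀ i : α, period x i ∉ P} : ℝ) +
      #{x : Perm α | cycleCount P x ≠ 0} = F := by
    simp only [← cycleCount_eq_zero_iff]
    rw [← Nat.cast_add, card_filter_add_card_filter_not, card_univ, Fintype.card_perm]
  have hsecond : (F * S) ^ 2 ≤ #{x : Perm α | cycleCount P x ≠ 0} * (F * (S ^ 2 + S)) := by
    rw [← sum_cycleCount hP]
    refine (sq_sum_le_card_ne_zero_mul_sum_sq _).trans ?_
    gcongr
    exact sum_cycleCount_sq_le hP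
  rcases hS.eq_or_lt with hS0 | hS0
  · rw [← hS0, add_zero, mul_one, ← hcompl]
    exact le_add_of_nonneg_right (Nat.cast_nonneg _)
  · have hmany : F * S ≤ #{x : Perm α | cycleCount P x ≠ 0} * (S + 1) :=
      le_of_mul_le_mul_right (by linarith) (mul_pos hF hS0)
    rw [eq_sub_of_add_eq hcompl]
    linarith

theorem one_le_sum_not_sameCycle {x : Perm α} {i j : α} (hij : ¬ x.SameCycle i j)
    {φ : ℕ → ℕ → ℝ} (hφ : ∀ a b, 0 ≤ φ a b)
    (hφij : φ (period x i) (period x j) = ((period x i : ℝ) * period x j)⁻¹) :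
    1 ≤ ∑ q : α × α with ¬ x.SameCycle q.1 q.2, φ (period x q.1) (period x q.2) := by
  let C (i : α) : Finset α := {k | x.SameCycle i k}
  have hmem {i k : α} (hk : k ∈ C i) : x.SameCycle i k := (mem_filter_univ _).mp hk
  have hcard (i : α) : #(C i) = period x i := by
    rw [← ncard_sameCycle, ← Set.ncard_coe_finset, coe_filter_univ]
  have hpos (i : α) : (period x i : ℝ) ≠ 0 := Nat.cast_ne_zero.mpr (period_pos x i).ne'
  have hconst : ∀ q ∈ C i ×ˢ C j,
      φ (period x q.1) (period x q.2) = ((period x i : ℝ) * period x j)⁻¹ := fun q hq => by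
    obtain ⟨hi, hj⟩ := mem_product.mp hq
    rw [← period_eq_of_sameCycle (hmem hi), ← period_eq_of_sameCycle (hmem hj), hφij]
  calc (1 : ℝ) = ∑ q ∈ C i ×ˢ C j, φ (period x q.1) (period x q.2) := by
        rw [sum_congr rfl hconst, sum_const, card_product, hcard, hcard, nsmul_eq_mul,
          Nat.cast_mul, mul_inv_cancel₀ (mul_ne_zero (hpos i) (hpos j))]
    _ ≤ _ := by
        refine sum_le_sum_of_subset_of_nonneg (fun q hq => (mem_filter_univ _).mpr fun hq' => ?_)
          fun _ _ _ => hφ _ _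
        obtain ⟨hi, hj⟩ := mem_product.mp hq
        exact hij ((hmem hi).trans (hq'.trans (hmem hj).symm))

theorem sum_Icc_dvd_inv_mul_le {a : ℕ} (ha : a ≠ 0) (n : ℕ) :
    ∑ b ∈ Icc 1 n with a ∣ b, ((a : ℝ) * b)⁻¹ ≤ ((a : ℝ) ^ 2)⁻¹ * ∑ k ∈ Icc 1 n, (k : ℝ)⁻¹ := by
  have hsub : {b ∈ Icc 1 n | a ∣ b} ⊆ (Icc 1 n).image (a * ·) := by
    intro b hb
    obtain ⟨hb, k, rfl⟩ := mem_filter.mp hb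
    obtain ⟨hb1, hbn⟩ := mem_Icc.mp hb
    exact mem_image_of_mem _ (mem_Icc.mpr ⟨Nat.pos_of_mul_pos_left hb1,
      (Nat.le_mul_of_pos_left k (Nat.pos_of_ne_zero ha)).trans hbn⟩)
  refine (sum_le_sum_of_subset_of_nonneg hsub fun _ _ _ => by positivity).trans_eq ?_
  rw [sum_image (mul_right_injective₀ ha).injOn, mul_sum]
  refine sum_congr rfl fun k _ => ?_
  push_cast
  rw [← mul_assoc, ← sq, mul_inv]

theorem card_exists_period_dvd_le {P : Finset ℕ} (hP : 0 ∉ P) :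
    (#{x : Perm α | ∃ i j : α, ¬ x.SameCycle i j ∧ period x i ∈ P ∧ period x i ∣ period x j} : ℝ) ≤
      (Fintype.card α).factorial * ((∑ a ∈ P, ((a : ℝ) ^ 2)⁻¹) *
        ∑ k ∈ Icc 1 (Fintype.card α), (k : ℝ)⁻¹) := by
  set n := Fintype.card α
  let φ (a b : ℕ) : ℝ := if a ∈ P ∧ a ∣ b then ((a : ℝ) * b)⁻¹ else 0
  have hφ (a b : ℕ) : 0 ≤ φ a b := by positivity
  let Y (x : Perm α) : ℝ :=
    ∑ q : α × α with ¬ x.SameCycle q.1 q.2, φ (period x q.1) (period x q.2)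
  have hY (x : Perm α) : 0 ≤ Y x := sum_nonneg fun _ _ => hφ _ _
  have hsum : ∑ a ∈ Icc 1 n, ∑ b ∈ Icc 1 n, φ a b ≤
      (∑ a ∈ P, ((a : ℝ) ^ 2)⁻¹) * ∑ k ∈ Icc 1 n, (k : ℝ)⁻¹ := by
    calc ∑ a ∈ Icc 1 n, ∑ b ∈ Icc 1 n, φ a b
        = ∑ a ∈ Icc 1 n with a ∈ P, ∑ b ∈ Icc 1 n with a ∣ b, ((a : ℝ) * b)⁻¹ := by
          simp only [φ, ite_and, sum_filter, sum_ite_irrel, sum_const_zero]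
      _ ≤ ∑ a ∈ P, ∑ b ∈ Icc 1 n with a ∣ b, ((a : ℝ) * b)⁻¹ :=
          sum_le_sum_of_subset_of_nonneg (fun a ha => (mem_filter.mp ha).2)
            fun _ _ _ => sum_nonneg fun _ _ => by positivity
      _ ≤ ∑ a ∈ P, ((a : ℝ) ^ 2)⁻¹ * ∑ k ∈ Icc 1 n, (k : ℝ)⁻¹ :=
          sum_le_sum fun a ha => sum_Icc_dvd_inv_mul_le (ne_of_mem_of_not_mem ha hP) n
      _ = _ := (sum_mul _ _ _).symm
  calc _ ≤ ∑ x : Perm α with ∃ i j : α, ¬ x.SameCycle i j ∧ period x i ∈ P ∧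
        period x i ∣ period x j, Y x := by
        rw [card_eq_sum_ones, Nat.cast_sum, Nat.cast_one]
        refine sum_le_sum fun x hx => ?_
        obtain ⟨i, j, hij, hi, hdvd⟩ := (mem_filter_univ _).mp hx
        exact one_le_sum_not_sameCycle hij hφ (if_pos ⟨hi, hdvd⟩)
    _ ≤ ∑ x : Perm α, Y x :=
        sum_le_sum_of_subset_of_nonneg (subset_univ _) fun x _ _ => hY x
    _ ≤ n.factorial * ∑ a ∈ Icc 1 n, ∑ b ∈ Icc 1 n, φ a b :=
        sum_sum_not_sameCycle_apply_period_le hφ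
    _ ≤ _ := by gcongr

end CycleCount

theorem exists_pow_isCycle {α : Type*} [Fintype α] [DecidableEq α] {x : Perm α} {i : α}
    (hp : (period x i).Prime) (hi : ∀ j, ¬ x.SameCycle i j → ¬ period x i ∣ period x j) :
    ∃ m : ℕ, (x ^ m).IsCycle ∧ #(x ^ m).support = period x i := by
  set p := period x i
  have hfix (m : ℕ) (j : α) : (x ^ m) j = j ↔ period x j ∣ m := by
    rw [← Perm.smul_def, pow_smul_eq_iff_period_dvd]
  let m := ∏ j with ¬ x.SameCycle i j, period x j
  have hout {j : α} (hj : ¬ x.SameCycle i j) : (x ^ m) j = j :=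
    (hfix m j).mpr (dvd_prod_of_mem _ ((mem_filter_univ j).mpr hj))
  have hpm : ¬ p ∣ m := by
    rw [hp.prime.dvd_finsetProd_iff]
    rintro ⟨j, hj, hdvd⟩
    exact hi j ((mem_filter_univ j).mp hj) hdvd
  have horder : orderOf (x ^ m) = p := by
    have : Fact p.Prime := ⟨hp⟩
    refine orderOf_eq_prime (Perm.ext fun j => ?_) fun h => hpm ((hfix m i).mp ?_)
    · rw [← pow_mul, Perm.one_apply, hfix]
      by_cases hj : x.SameCycle i j
      · exact period_eq_of_sameCycle hj ▸ dvd_mul_left p m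
      · exact ((hfix m j).mp (hout hj)).mul_right p
    · rw [h, Perm.one_apply]
  have hsupport : #(x ^ m).support ≤ p := by
    rw [← Set.ncard_coe_finset]
    refine (Set.ncard_le_ncard fun j hj => ?_).trans_eq (ncard_sameCycle x i)
    by_contra hnot
    exact Perm.mem_support.mp hj (hout hnot)
  have hcycle : (x ^ m).IsCycle := by
    refine Perm.isCycle_of_prime_order (horder ▸ hp) ?_
    have := hp.pos
    lia
  exact ⟨m, hcycle, hcycle.orderOf ▸ horder⟩

section Primes

/-- The set of primes `p` with `m < p ≤ n`. -/
def primesBetween (m n : ℕ) : Finset ℕ := {p ∈ Ioc m n | p.Prime}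

theorem sum_primesBetween_add_sum_primesBetween {k m n : ℕ} (hkm : k ≤ m) (hmn : m ≤ n)
    {M : Type*} [AddCommMonoid M] (f : ℕ → M) :
    ∑ p ∈ primesBetween k m, f p + ∑ p ∈ primesBetween m n, f p = ∑ p ∈ primesBetween k n, f p := by
  simp only [primesBetween, sum_filter]
  exact sum_Ioc_consecutive _ hkm hmn

theorem sum_log_primesBetween {m n : ℕ} (hmn : m ≤ n) :
    ∑ p ∈ primesBetween m n, Real.log p = Chebyshev.theta n - Chebyshev.theta m := by
  have htheta (k : ℕ) : Chebyshev.theta k = ∑ p ∈ primesBetween 0 k, Real.log p := by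
    rw [Chebyshev.theta, Nat.floor_natCast, primesBetween]
  rw [htheta, htheta, eq_sub_iff_add_eq', sum_primesBetween_add_sum_primesBetween m.zero_le hmn]

theorem eventually_log_two_div_two_mul_le_theta :
    ∀ᶠ n : ℕ in atTop, Real.log 2 / 2 * n ≤ Chebyshev.theta n := by
  have : 0 < Real.log 2 := Real.log_pos one_lt_two
  have hlog := ((isLittleO_log_rpow_atTop (r := 1 / 2) (by norm_num)).bound
    (c := Real.log 2 / 12) (by positivity)).natCast_atTop
  filter_upwards [hlog, Filter.eventually_ge_atTop 2] with n hn hn2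
  have hn2 : (2 : ℝ) ≤ n := by exact_mod_cast hn2
  rw [← Real.sqrt_eq_rpow, Real.norm_of_nonneg (Real.log_nonneg (by linarith)),
    Real.norm_of_nonneg (Real.sqrt_nonneg _)] at hn
  have hlog_succ : Real.log (n + 1) ≤ 2 * Real.log n := by
    rw [← Nat.cast_two, ← Real.log_pow]
    exact Real.log_le_log (by positivity) (by nlinarith)
  have hsqrt : 1 ≤ √n := Real.one_le_sqrt.mpr (by linarith)
  have herror : Real.log (n + 1) + 2 * √n * Real.log n ≤ Real.log 2 / 2 * n := by
    calc Real.log (n + 1) + 2 * √n * Real.log n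
        ≤ 2 * √n * Real.log n + 2 * √n * Real.log n := by
          have : 0 ≤ Real.log n := Real.log_nonneg (by linarith)
          gcongr
          nlinarith
      _ ≤ 2 * √n * (Real.log 2 / 12 * √n) + 2 * √n * (Real.log 2 / 12 * √n) := by gcongr
      _ = Real.log 2 / 3 * (√n * √n) := by ring
      _ = Real.log 2 / 3 * n := by rw [Real.mul_self_sqrt (by linarith)]
      _ ≤ Real.log 2 / 2 * n := by gcongr; norm_num
  linarith [Chebyshev.theta_ge n]

theorem eventually_le_sum_log_primesBetween :
    ∀ᶠ n : ℕ in atTop, 2 * Real.log 2 * n ≤ ∑ p ∈ primesBetween n (8 * n), Real.log p := by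
  have hmul : Tendsto (8 * · : ℕ → ℕ) atTop atTop :=
    Filter.tendsto_id.const_mul_atTop' (by norm_num)
  filter_upwards [hmul.eventually eventually_log_two_div_two_mul_le_theta] with n hn
  have hlower : 4 * Real.log 2 * n ≤ Chebyshev.theta (8 * n : ℕ) := by
    refine le_of_eq_of_le ?_ hn
    push_cast
    ring
  have hupper : Chebyshev.theta n ≤ 2 * Real.log 2 * n := by
    refine (Chebyshev.theta_le_log4_mul_x n.cast_nonneg).trans_eq ?_
    rw [show (4 : ℝ) = 2 ^ 2 by norm_num, Real.log_pow, Nat.cast_two]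
  rw [sum_log_primesBetween (Nat.le_mul_of_pos_left n (by norm_num))]
  linarith

theorem sum_log_primesBetween_le (m n : ℕ) :
    ∑ p ∈ primesBetween m n, Real.log p ≤ n * Real.log n * ∑ p ∈ primesBetween m n, (p : ℝ)⁻¹ := by
  rw [mul_sum]
  refine sum_le_sum fun p hp => ?_
  obtain ⟨hmem, hprime⟩ := mem_filter.mp hp
  have hp1 : (1 : ℝ) ≤ p := by exact_mod_cast hprime.one_le
  have hpn : (p : ℝ) ≤ n := by exact_mod_cast (mem_Ioc.mp hmem).2
  calc Real.log p = p * Real.log p * (p : ℝ)⁻¹ := by field_simp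
    _ ≤ n * Real.log n * (p : ℝ)⁻¹ := by
        have := Real.log_nonneg hp1
        gcongr

theorem eventually_inv_le_sum_inv_primesBetween_pow :
    ∀ᶠ j : ℕ in atTop,
      ((j : ℝ) + 1)⁻¹ ≤ 12 * ∑ p ∈ primesBetween (8 ^ j) (8 ^ (j + 1)), (p : ℝ)⁻¹ := by
  filter_upwards [(tendsto_pow_atTop_atTop_of_one_lt (by norm_num : 1 < 8)).eventually
    eventually_le_sum_log_primesBetween] with j hj
  rw [← pow_succ'] at hj
  have hlog : Real.log (8 ^ (j + 1) : ℕ) = 3 * Real.log 2 * (j + 1) := by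
    rw [show 8 = 2 ^ 3 by norm_num, ← pow_mul, Nat.cast_pow, Real.log_pow]
    push_cast
    ring
  have h := hj.trans (sum_log_primesBetween_le _ _)
  rw [hlog] at h
  set S := ∑ p ∈ primesBetween (8 ^ j) (8 ^ (j + 1)), (p : ℝ)⁻¹
  have hpos : 0 < 2 * Real.log 2 * (8 : ℝ) ^ j := by
    have := Real.log_pos one_lt_two
    positivity
  rw [inv_le_iff_one_le_mul₀ (by positivity)]
  refine le_of_mul_le_mul_left ?_ hpos
  push_cast [pow_succ] at h
  linarith

theorem eventually_log_sub_log_le_sum_inv_primesBetween_pow :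
    ∀ᶠ a : ℕ in atTop, ∀ b ≥ a, Real.log (b + 1) - Real.log (a + 1) ≤
      12 * ∑ p ∈ primesBetween (8 ^ a) (8 ^ b), (p : ℝ)⁻¹ := by
  filter_upwards [Filter.eventually_forall_ge_atTop.mpr
    eventually_inv_le_sum_inv_primesBetween_pow] with a ha b hb
  induction b, hb using Nat.le_induction with
  | base => simp [primesBetween]
  | succ b hb ih =>
    have hstep : Real.log ((b + 1 : ℕ) + 1) - Real.log (b + 1) ≤ ((b : ℝ) + 1)⁻¹ := by
      rw [← Real.log_div (by positivity) (by positivity)]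
      refine (Real.log_le_sub_one_of_pos (by positivity)).trans_eq ?_
      push_cast
      field_simp
      ring
    rw [← sum_primesBetween_add_sum_primesBetween (Nat.pow_le_pow_right (by norm_num) hb)
      (Nat.pow_le_pow_right (by norm_num) b.le_succ)]
    linarith [ha b hb]

theorem tendsto_sum_inv_primesBetween_pow :
    Tendsto (fun a : ℕ => ∑ p ∈ primesBetween (8 ^ a) (8 ^ a ^ 2), (p : ℝ)⁻¹) atTop atTop := by
  have hlog : Tendsto (fun a : ℕ => (12 : ℝ)⁻¹ * (Real.log (a + 1) - Real.log 2)) atTop atTop :=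
    .const_mul_atTop (by norm_num) <| Filter.tendsto_atTop_add_const_right _ _ <|
      Real.tendsto_log_atTop.comp <|
        Filter.tendsto_atTop_add_const_right _ _ tendsto_natCast_atTop_atTop
  refine Filter.tendsto_atTop_mono' _ ?_ hlog
  filter_upwards [eventually_log_sub_log_le_sum_inv_primesBetween_pow] with a ha
  have hsq : 2 * Real.log (a + 1) ≤ Real.log 2 + Real.log ((a ^ 2 : ℕ) + 1) := by
    rw [← Nat.cast_two, ← Real.log_pow, ← Real.log_mul (by positivity) (by positivity)]
    refine Real.log_le_log (by positivity) ?_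
    push_cast
    linarith [sq_nonneg ((a : ℝ) - 1)]
  linarith [ha (a ^ 2) (Nat.le_self_pow two_ne_zero a)]

theorem sum_inv_sq_primesBetween_le {m : ℕ} (hm : m ≠ 0) (n : ℕ) :
    ∑ p ∈ primesBetween m n, ((p : ℝ) ^ 2)⁻¹ ≤ (m : ℝ)⁻¹ := by
  rcases le_total n m with h | h
  · simp [primesBetween, Ioc_eq_empty_of_le h]
  · calc ∑ p ∈ primesBetween m n, ((p : ℝ) ^ 2)⁻¹
        ≤ ∑ k ∈ Ioc m n, ((k : ℝ) ^ 2)⁻¹ :=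
          sum_le_sum_of_subset_of_nonneg (filter_subset _ _) fun _ _ _ => by positivity
      _ ≤ (m : ℝ)⁻¹ - (n : ℝ)⁻¹ := sum_Ioc_inv_sq_le_sub hm h
      _ ≤ (m : ℝ)⁻¹ := sub_le_self _ (by positivity)

/-- The exponent `a` for which the lengths `p ∈ (8 ^ a, 8 ^ a ^ 2]` are used in `Perm (Fin n)`: the
lower end `8 ^ a` outgrows every power of `log n`, while `8 ^ a ^ 2 ≤ n / 8`. -/
def lengthExponent (n : ℕ) : ℕ := Nat.sqrt (Nat.log 8 n - 1)

/-- The prime cycle lengths that are looked for in a permutation of `n` points. -/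
def cycleLengths (n : ℕ) : Finset ℕ :=
  primesBetween (8 ^ lengthExponent n) (8 ^ lengthExponent n ^ 2)

theorem tendsto_lengthExponent : Tendsto lengthExponent atTop atTop := by
  refine Filter.tendsto_atTop.mpr fun a => ?_
  filter_upwards [Filter.eventually_ge_atTop (8 ^ (a ^ 2 + 1))] with n hn
  have := Nat.le_log_of_pow_le (by norm_num) hn
  exact Nat.le_sqrt'.mpr (by lia)

theorem prime_of_mem_cycleLengths {n p : ℕ} (hp : p ∈ cycleLengths n) : p.Prime :=
  (mem_filter.mp hp).2

theorem two_mul_le_of_mem_cycleLengths {n p : ℕ} (hp : p ∈ cycleLengths n) : 2 * p ≤ n := by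
  obtain ⟨hlt, hle⟩ := mem_Ioc.mp (mem_filter.mp hp).1
  set a := lengthExponent n with ha
  have hsq : a ^ 2 ≤ Nat.log 8 n - 1 := Nat.sqrt_le' _
  have ha0 : a ≠ 0 := by
    intro h0
    simp only [h0] at hlt hle
    lia
  have hn : n ≠ 0 := by
    rintro rfl
    simp [ha, lengthExponent] at ha0
  have hlog : a ^ 2 + 1 ≤ Nat.log 8 n := by
    have := pow_pos (Nat.pos_of_ne_zero ha0) 2
    lia
  have hpow : 8 ^ (a ^ 2 + 1) ≤ n := Nat.pow_le_of_le_log hn hlog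
  rw [pow_succ] at hpow
  lia

theorem tendsto_sum_inv_cycleLengths :
    Tendsto (fun n => ∑ p ∈ cycleLengths n, (p : ℝ)⁻¹) atTop atTop :=
  tendsto_sum_inv_primesBetween_pow.comp tendsto_lengthExponent

theorem sum_Icc_inv_le_mul_lengthExponent_sq {n : ℕ} (hn : lengthExponent n ≠ 0) :
    ∑ k ∈ Icc 1 n, (k : ℝ)⁻¹ ≤ 16 * (lengthExponent n : ℝ) ^ 2 := by
  set a := lengthExponent n
  have hlog : Real.log n ≤ 3 * ((a + 1) ^ 2 + 1) := by
    have hsqrt : Nat.log 8 n - 1 < (a + 1) ^ 2 := Nat.lt_succ_sqrt' _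
    have hlt : n < 8 ^ ((a + 1) ^ 2 + 1) :=
      Nat.lt_pow_of_log_lt (by norm_num) (by lia)
    have hle : (n : ℝ) ≤ (2 : ℝ) ^ (3 * ((a + 1) ^ 2 + 1)) := by
      rw [pow_mul]
      exact_mod_cast hlt.le
    rcases n.eq_zero_or_pos with rfl | hpos
    · simp only [CharP.cast_eq_zero, Real.log_zero]
      positivity
    calc Real.log n ≤ Real.log (2 ^ (3 * ((a + 1) ^ 2 + 1))) :=
          Real.log_le_log (by exact_mod_cast hpos) hle
      _ = 3 * ((a + 1) ^ 2 + 1) * Real.log 2 := by rw [Real.log_pow]; push_cast; ring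
      _ ≤ 3 * ((a + 1) ^ 2 + 1) :=
          mul_le_of_le_one_right (by positivity) (by linarith [Real.log_two_lt_d9])
  have hharmonic : ∑ k ∈ Icc 1 n, (k : ℝ)⁻¹ ≤ 1 + Real.log n := by
    refine le_of_eq_of_le ?_ (harmonic_le_one_add_log n)
    rw [harmonic_eq_sum_Icc]
    push_cast
    rfl
  have ha1 : (1 : ℝ) ≤ a := by exact_mod_cast Nat.one_le_iff_ne_zero.mpr hn
  nlinarith

theorem tendsto_sum_inv_sq_cycleLengths_mul_sum_inv :
    Tendsto (fun n => (∑ p ∈ cycleLengths n, ((p : ℝ) ^ 2)⁻¹) * ∑ k ∈ Icc 1 n, (k : ℝ)⁻¹)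
      atTop (𝓝 0) := by
  have hzero : Tendsto (fun a : ℕ => 16 * ((a : ℝ) ^ 2 / 8 ^ a)) atTop (𝓝 0) := by
    simpa using
      (tendsto_pow_const_div_const_pow_of_one_lt 2 (r := (8 : ℝ)) (by norm_num)).const_mul 16
  refine squeeze_zero' (.of_forall fun n => by positivity) ?_ (hzero.comp tendsto_lengthExponent)
  filter_upwards [tendsto_lengthExponent.eventually_ne_atTop 0] with n hn
  set a := lengthExponent n
  have hsq := sum_inv_sq_primesBetween_le (m := 8 ^ a) (by positivity) (8 ^ a ^ 2)
  calc _ ≤ ((8 ^ a : ℕ) : ℝ)⁻¹ * (16 * (a : ℝ) ^ 2) :=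
        mul_le_mul hsq (sum_Icc_inv_le_mul_lengthExponent_sq hn) (by positivity) (by positivity)
    _ = 16 * ((a : ℝ) ^ 2 / 8 ^ a) := by
        push_cast
        ring

end Primes

section GeneratingPairs

variable {α : Type*} [Fintype α] [DecidableEq α]

theorem eq_top_or_eq_alternatingGroup_of_period_prime {G : Subgroup (Perm α)}
    (hG : IsPreprimitive G α) {x : Perm α} (hx : x ∈ G) {i : α} (hp : (period x i).Prime)
    (hcard : 2 * period x i ≤ Fintype.card α + 1)
    (hi : ∀ j, ¬ x.SameCycle i j → ¬ period x i ∣ period x j) :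
    G = ⊤ ∨ G = alternatingGroup α := by
  obtain ⟨m, hcycle, hsupport⟩ := exists_pow_isCycle hp hi
  rw [← hsupport] at hp hcard
  exact eq_top_or_eq_alternatingGroup_of_le <|
    alternatingGroup_le_of_isPreprimitive_of_isCycle_mem hG hcycle (pow_mem hx m) hp hcard

theorem ncard_fst_mem {β γ : Type*} (A : Finset β) :
    {p : β × γ | p.1 ∈ A}.ncard = #A * Nat.card γ := by
  have h : {p : β × γ | p.1 ∈ A} = (A : Set β) ×ˢ (Set.univ : Set γ) := by
    ext
    simp
  rw [h, Set.ncard_prod, Set.ncard_coe_finset, Set.ncard_univ]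

variable (α) in
/-- The pairs of permutations of `α` that generate the symmetric or the alternating group. -/
def generatingPairs : Set (Perm α × Perm α) :=
  {p | Subgroup.closure {p.1, p.2} = ⊤ ∨ Subgroup.closure {p.1, p.2} = alternatingGroup α}

/-- An upper bound for the proportion of pairs of permutations of `n` points outside
`generatingPairs`, for any set `P` of primes `p ≤ n / 2`: the first two terms account for pairs
generating an intransitive or imprimitive group, the last two for a first permutation none of whose
powers is a cycle of length in `P`. -/
noncomputable def nongeneratingBound (n : ℕ) (P : Finset ℕ) : ℝ :=
  4 / n + 4 / (n - 1 : ℕ) + (1 + ∑ p ∈ P, (p : ℝ)⁻¹)⁻¹ +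
    (∑ p ∈ P, ((p : ℝ) ^ 2)⁻¹) * ∑ k ∈ Icc 1 n, (k : ℝ)⁻¹

theorem ncard_generatingPairs_le : (generatingPairs α).ncard ≤ (Fintype.card α).factorial ^ 2 := by
  refine (Set.ncard_le_card _).trans_eq ?_
  rw [Nat.card_prod, Nat.card_perm, Nat.card_eq_fintype_card, sq]

theorem compl_generatingPairs_subset {P : Finset ℕ} (hprime : ∀ p ∈ P, p.Prime)
    (hcard : ∀ p ∈ P, 2 * p ≤ Fintype.card α) :
    (generatingPairs α)ᶜ ⊆
      {p | ¬ IsPreprimitive (Subgroup.closure {p.1, p.2}) α} ∪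
      ({p | p.1 ∈ ({x | ∀ i : α, period x i ∉ P} : Finset (Perm α))} ∪
      {p | p.1 ∈ ({x | ∃ i j : α, ¬ x.SameCycle i j ∧ period x i ∈ P ∧ period x i ∣ period x j} :
        Finset (Perm α))}) := by
  intro p hp
  contrapose! hp
  simp only [Set.mem_union, Set.mem_ofPred_eq, mem_filter_univ, not_or, not_not, not_forall,
    not_exists, not_and] at hp
  obtain ⟨hprim, ⟨i, hi⟩, hdvd⟩ := hp
  refine Set.notMem_compl_iff.mpr ?_
  exact eq_top_or_eq_alternatingGroup_of_period_prime hprim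
    (Subgroup.subset_closure (Set.mem_insert _ _)) (hprime _ hi) ((hcard _ hi).trans (by lia))
    fun j hj => hdvd i j hj hi

theorem le_ncard_generatingPairs [Nonempty α] {P : Finset ℕ} (hprime : ∀ p ∈ P, p.Prime)
    (hcard : ∀ p ∈ P, 2 * p ≤ Fintype.card α) :
    ((Fintype.card α).factorial : ℝ) ^ 2 *
        (1 - nongeneratingBound (Fintype.card α) P) ≤ (generatingPairs α).ncard := by
  have hPcard : P ⊆ Icc 1 (Fintype.card α) := fun p hp =>
    mem_Icc.mpr ⟨(hprime p hp).one_le, by linarith [hcard p hp]⟩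
  have hP0 : 0 ∉ P := fun h => Nat.not_prime_zero (hprime 0 h)
  set A : Finset (Perm α) := {x | ∀ i : α, period x i ∉ P}
  set B : Finset (Perm α) :=
    {x | ∃ i j : α, ¬ x.SameCycle i j ∧ period x i ∈ P ∧ period x i ∣ period x j}
  have hprim := ncard_not_isPreprimitive_closure_le (α := α)
  have hAcard : (#A : ℝ) ≤ (Fintype.card α).factorial * (1 + ∑ p ∈ P, (p : ℝ)⁻¹)⁻¹ :=
    (le_mul_inv_iff₀ (by positivity)).mpr (card_forall_period_notMem_mul_le hPcard)
  have hBcard := card_exists_period_dvd_le hP0 (α := α)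
  have htotal : ((Fintype.card α).factorial : ℝ) ^ 2 =
      (generatingPairs α).ncard + (generatingPairs α)ᶜ.ncard := by
    have h := Set.ncard_add_ncard_compl (generatingPairs α)
    rw [Nat.card_prod, Nat.card_perm, Nat.card_eq_fintype_card, ← sq] at h
    exact_mod_cast h.symm
  have hcompl : ((generatingPairs α)ᶜ.ncard : ℝ) ≤
      {p : Perm α × Perm α | ¬ IsPreprimitive (Subgroup.closure {p.1, p.2}) α}.ncard +
        (#A * (Fintype.card α).factorial + #B * (Fintype.card α).factorial) := by
    have h := (Set.ncard_le_ncard (compl_generatingPairs_subset hprime hcard)).trans <|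
      (Set.ncard_union_le _ _).trans <| Nat.add_le_add_left (Set.ncard_union_le _ _) _
    rw [ncard_fst_mem, ncard_fst_mem, Nat.card_perm, Nat.card_eq_fintype_card] at h
    exact_mod_cast h
  have hN : (0 : ℝ) ≤ (Fintype.card α).factorial := Nat.cast_nonneg _
  unfold nongeneratingBound
  linarith [mul_le_mul_of_nonneg_right hAcard hN, mul_le_mul_of_nonneg_right hBcard hN]

theorem tendsto_nongeneratingBound_cycleLengths :
    Tendsto (fun n => nongeneratingBound n (cycleLengths n)) atTop (𝓝 0) := by
  have hn : Tendsto (fun n : ℕ => 4 / (n : ℝ)) atTop (𝓝 0) :=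
    tendsto_const_div_atTop_nhds_zero_nat 4
  have hsum :=
    (Filter.tendsto_atTop_add_const_left _ 1 tendsto_sum_inv_cycleLengths).inv_tendsto_atTop
  simpa [nongeneratingBound] using
    ((hn.add (hn.comp (Filter.tendsto_sub_atTop_nat 1))).add hsum).add
      tendsto_sum_inv_sq_cycleLengths_mul_sum_inv

end GeneratingPairs

/-- **Dixon's theorem** (counting form): the proportion of pairs of permutations of
`k` points generating the symmetric group or the alternating group tends to `1`. -/
theorem dixon_theorem :
    Filter.Tendsto
      (fun k : ℕ =>
        (Nat.card {p : Equiv.Perm (Fin k) × Equiv.Perm (Fin k) //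
            Subgroup.closure {p.1, p.2} = ⊤ ∨
            Subgroup.closure {p.1, p.2} = alternatingGroup (Fin k)} : ℝ) /
          (Nat.factorial k : ℝ) ^ 2)
      Filter.atTop (nhds 1) := by
  have hlower : Tendsto (fun n => 1 - nongeneratingBound n (cycleLengths n)) atTop (𝓝 1) := by
    simpa using tendsto_nongeneratingBound_cycleLengths.const_sub 1
  refine tendsto_of_tendsto_of_tendsto_of_le_of_le' hlower tendsto_const_nhds ?_ ?_
  · filter_upwards [Filter.eventually_ne_atTop 0] with n hn
    have : NeZero n := ⟨hn⟩
    have h := le_ncard_generatingPairs (α := Fin n) (fun _ => prime_of_mem_cycleLengths)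
      fun p hp => (two_mul_le_of_mem_cycleLengths hp).trans_eq (Fintype.card_fin n).symm
    rw [Fintype.card_fin] at h
    exact (le_div_iff₀' (by positivity)).mpr h
  · refine .of_forall fun n => div_le_one_of_le₀ ?_ (by positivity)
    have h := ncard_generatingPairs_le (α := Fin n)
    rw [Fintype.card_fin] at h
    exact_mod_cast h
end

section
/- Let k ≥ 2, m ≥ 1, let n : Fin m → ℕ satisfy 1 ≤ n i for all i, let N be the least common multiple of the n i, and for each i : Fin m let ρ i : ZMod (n i) → Equiv.Perm (Fin k). For i : Fin m and t : ZMod N, let g i t : ZMod N → Equiv.Perm (Fin k) be the N-periodic shifted extension q ↦ ρ i (the image of q + t under the canonical map ZMod N → ZMod (n i), which exists since n i ∣ N). Let G be the subgroup of the direct product (ZMod N → Equiv.Perm (Fin k)) generated by all the elements g i t. Let u : ℤ = Σ over nonempty subsets J of Fin m of (−1)^(|J|+1) · (gcd of the n i for i ∈ J). Then (Nat.card G : ℝ) ≤ (Nat.card (alternatingGroup (Fin k)))^N · (2 : ℝ)^u. -/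
/-!
Every generator is a tuple on `ZMod N` that is periodic with some period `n i`. Applying the sign
coordinatewise sends it to a periodic tuple of signs, which is killed by `S ^ n i - 1`, where `S` is
the shift. Hence the image of the whole group is killed by `L(S)`, where `L` is the least common
multiple of the polynomials `X ^ n i - 1`. As `L` is monic, a tuple killed by `L(S)` is determined
by its first `deg L` entries, so there are at most `2 ^ deg L` of them, and the kernel of the
coordinatewise sign contributes at most `|A_k| ^ N`. Finally `L` is the product of the cyclotomic
polynomials `Φ_d` over all `d` dividing some `n i`, so inclusion-exclusion and `∑ d ∣ n, φ d = n`
give `deg L = u`.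
-/

section LcmXPowSubOne

open Polynomial

variable {ι : Type*} {s : Finset ι} {n : ι → ℕ}

lemma inf'_divisors_eq_divisors_gcd (hs : s.Nonempty) (hn : ∀ i ∈ s, n i ≠ 0) :
    s.inf' hs (fun i => (n i).divisors) = (s.gcd n).divisors := by
  obtain ⟨i, hi⟩ := id hs
  have hgcd : s.gcd n ≠ 0 := fun h => hn i hi (Finset.gcd_eq_zero_iff.1 h i hi)
  ext d
  simp only [Finset.mem_inf', Nat.mem_divisors, Finset.dvd_gcd_iff, and_iff_left hgcd]
  exact forall₂_congr fun j hj => and_iff_left (hn j hj)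

lemma sum_totient_biUnion_divisors (hn : ∀ i ∈ s, n i ≠ 0) :
    ∑ d ∈ s.biUnion fun i => (n i).divisors, (d.totient : ℤ) =
      ∑ J ∈ s.powerset with J.Nonempty, (-1 : ℤ) ^ (J.card + 1) * (J.gcd n : ℕ) := by
  rw [Finset.inclusion_exclusion_sum_biUnion, ← Finset.sum_coe_sort (s.powerset.filter _)]
  refine Finset.sum_congr rfl fun ⟨J, hJ⟩ _ => ?_
  obtain ⟨hJs, hJ⟩ := Finset.mem_filter.1 hJ
  rw [inf'_divisors_eq_divisors_gcd hJ fun i hi => hn i (Finset.mem_powerset.1 hJs hi),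
    smul_eq_mul, ← Nat.cast_sum, Nat.sum_totient]

variable (R : Type*) [CommRing R]

/-- The image in `R[X]` of the least common multiple of the integer polynomials `X ^ n i - 1` for
`i ∈ s`, encoded as the product of the cyclotomic polynomials dividing one of them. Indices with
`n i = 0` do not contribute, because `Nat.divisors 0 = ∅`. -/
noncomputable def lcmXPowSubOne (s : Finset ι) (n : ι → ℕ) : R[X] :=
  ∏ d ∈ s.biUnion fun i => (n i).divisors, cyclotomic d R

lemma monic_lcmXPowSubOne (s : Finset ι) (n : ι → ℕ) : (lcmXPowSubOne R s n).Monic :=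
  monic_prod_of_monic _ _ fun d _ => cyclotomic.monic d R

lemma X_pow_sub_one_dvd_lcmXPowSubOne {i : ι} (hi : i ∈ s) (hn : n i ≠ 0) :
    X ^ n i - 1 ∣ lcmXPowSubOne R s n := by
  rw [← prod_cyclotomic_eq_X_pow_sub_one hn.pos]
  exact Finset.prod_dvd_prod_of_subset _ _ _
    (Finset.subset_biUnion_of_mem (fun i => (n i).divisors) hi)

lemma natDegree_lcmXPowSubOne [Nontrivial R] (hn : ∀ i ∈ s, n i ≠ 0) :
    ((lcmXPowSubOne R s n).natDegree : ℤ) =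
      ∑ J ∈ s.powerset with J.Nonempty, (-1 : ℤ) ^ (J.card + 1) * (J.gcd n : ℕ) := by
  rw [lcmXPowSubOne, natDegree_prod_of_monic _ _ fun d _ => cyclotomic.monic d R]
  simp only [natDegree_cyclotomic, Nat.cast_sum, sum_totient_biUnion_divisors hn]

end LcmXPowSubOne

section Shift

open Polynomial

variable {R : Type*} {N : ℕ} {M : Type*} [CommRing R] [AddCommGroup M] [Module R M]

variable (R N M) in
/-- The shift operator `f ↦ f (· + 1)` on tuples indexed by `ZMod N`. -/
def zmodShift : Module.End R (ZMod N → M) := LinearMap.funLeft R M (· + 1)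

lemma zmodShift_pow_apply (j : ℕ) (f : ZMod N → M) (q : ZMod N) :
    (zmodShift R N M ^ j) f q = f (q + j) := by
  induction j generalizing q with
  | zero => simp
  | succ j ih =>
    rw [pow_succ', Module.End.mul_apply, zmodShift, LinearMap.funLeft_apply, ← zmodShift, ih,
      Nat.cast_add_one, add_right_comm, add_assoc]

lemma aeval_zmodShift_apply (p : R[X]) (f : ZMod N → M) (q : ZMod N) :
    aeval (zmodShift R N M) p f q =
      ∑ j ∈ Finset.range (p.natDegree + 1), p.coeff j • f (q + j) := by
  simp [aeval_eq_sum_range, zmodShift_pow_apply]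

lemma aeval_zmodShift_eq_zero_of_periodic {d : ℕ} {p : R[X]} (hp : X ^ d - 1 ∣ p)
    {f : ZMod N → M} (hf : Function.Periodic f (d : ZMod N)) :
    aeval (zmodShift R N M) p f = 0 := by
  obtain ⟨r, rfl⟩ := hp
  have hker : aeval (zmodShift R N M) (X ^ d - 1 : R[X]) f = 0 := by
    ext q
    simp [zmodShift_pow_apply, hf q]
  rw [mul_comm, map_mul, Module.End.mul_apply, hker, map_zero]

lemma eq_zero_of_aeval_zmodShift_eq_zero [NeZero N] {p : R[X]} (hp : p.Monic)
    {f : ZMod N → M} (hf : aeval (zmodShift R N M) p f = 0)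
    (hinit : ∀ j < p.natDegree, f (j : ℕ) = 0) : f = 0 := by
  have hnat (j : ℕ) : f j = 0 := by
    induction j using Nat.strong_induction_on with
    | _ j ih =>
      obtain hj | hj := lt_or_ge j p.natDegree
      · exact hinit j hj
      obtain ⟨a, rfl⟩ := Nat.exists_eq_add_of_le' hj
      have hrec := aeval_zmodShift_apply p f a
      have hlower : ∑ j ∈ Finset.range p.natDegree, p.coeff j • f (a + j) = 0 :=
        Finset.sum_eq_zero fun j hj => by
          rw [← Nat.cast_add, ih _ (Nat.add_lt_add_left (Finset.mem_range.1 hj) a), smul_zero]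
      rw [hf, Finset.sum_range_succ, hlower, hp.coeff_natDegree, one_smul, zero_add] at hrec
      rw [Nat.cast_add, ← hrec, Pi.zero_apply]
  ext q
  simpa using hnat q.val

lemma card_ker_aeval_zmodShift_le [NeZero N] [Finite M] {p : R[X]} (hp : p.Monic) :
    Nat.card (LinearMap.ker (aeval (zmodShift R N M) p)) ≤ Nat.card M ^ p.natDegree := by
  let initial : (ZMod N → M) →ₗ[R] Fin p.natDegree → M := LinearMap.funLeft R M fun j => (j : ℕ)
  have hinj : Function.Injective
      (initial.domRestrict (LinearMap.ker (aeval (zmodShift R N M) p))) := by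
    refine (injective_iff_map_eq_zero _).2 fun f hf => Subtype.ext ?_
    exact eq_zero_of_aeval_zmodShift_eq_zero hp f.2 fun j hj => congrFun hf ⟨j, hj⟩
  simpa [Nat.card_fun] using Nat.card_le_card_of_injective _ hinj

end Shift

section Tuples

lemma card_le_card_ker_mul_card_of_le_comap {H Q : Type*} [Group H] [Group Q] (f : H →* Q)
    [Finite f.ker] {G : Subgroup H} {K : Subgroup Q} [Finite K] (hGK : G ≤ K.comap f) :
    Nat.card G ≤ Nat.card f.ker * Nat.card K :=
  calc
    Nat.card G = Nat.card (f.ker.subgroupOf G) * Nat.card (G.map f) := by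
      rw [← Subgroup.relIndex_ker, Subgroup.relIndex, Subgroup.card_mul_index]
    _ ≤ Nat.card f.ker * Nat.card K := by
      gcongr
      · exact Nat.le_of_dvd Nat.card_pos
          (Subgroup.card_comap_dvd_of_injective _ _ G.subtype_injective)
      · exact Subgroup.card_le_of_le (Subgroup.map_le_iff_le_comap.2 hGK)

variable {H A : Type*} [MulOneClass A]

/-- The homomorphism `φ` applied to each entry of a tuple. The codomain is written additively, so
that linear operators act on it. -/
def entrywiseHom [MulOneClass H] (φ : H →* A) (I : Type*) :
    (I → H) →* Multiplicative (I → Additive A) where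
  toFun x := Multiplicative.ofAdd fun q => Additive.ofMul (φ (x q))
  map_one' := by ext; simp
  map_mul' x y := by ext; simp

lemma card_ker_entrywiseHom [Group H] (φ : H →* A) (I : Type*) [Finite I] :
    Nat.card (entrywiseHom φ I).ker = Nat.card φ.ker ^ Nat.card I := by
  rw [← Nat.card_fun]
  exact Nat.card_congr ((Equiv.subtypeEquivRight fun x => funext_iff).trans
    (Equiv.subtypePiEquivPi (p := fun _ h => h ∈ φ.ker)))

end Tuples

lemma periodic_comp_castHom_add {α : Type*} {d N : ℕ} (hd : d ∣ N) (r : ZMod d → α) (t : ZMod N) :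
    Function.Periodic (fun q => r (ZMod.castHom hd (ZMod d) (q + t))) (d : ZMod N) := fun q => by
  simp only [map_add, map_natCast, ZMod.natCast_self, add_zero]

theorem card_le_of_disjoint_union_of_cyclic_general {ι H A : Type*} [Fintype ι] [Group H]
    [Finite H] [CommGroup A] [Finite A] (φ : H →* A) {N : ℕ} [NeZero N] {n : ι → ℕ}
    (hn : ∀ i, n i ≠ 0) {G : Subgroup (ZMod N → H)}
    (hG : G ≤ Subgroup.closure {x | ∃ i, Function.Periodic x (n i : ZMod N)}) :
    (Nat.card G : ℝ) ≤ (Nat.card φ.ker : ℝ) ^ N * (Nat.card A : ℝ) ^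
      ∑ J ∈ Finset.univ.powerset with J.Nonempty, (-1 : ℤ) ^ (J.card + 1) * (J.gcd n : ℕ) := by
  let L := lcmXPowSubOne ℤ Finset.univ n
  let K := LinearMap.ker (Polynomial.aeval (zmodShift ℤ N (Additive A)) L)
  have hGK : G ≤ K.toAddSubgroup.toSubgroup.comap (entrywiseHom φ (ZMod N)) := by
    refine hG.trans ((Subgroup.closure_le _).2 ?_)
    rintro x ⟨i, hx⟩
    exact aeval_zmodShift_eq_zero_of_periodic
      (X_pow_sub_one_dvd_lcmXPowSubOne ℤ (Finset.mem_univ i) (hn i))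
      (hx.comp fun h => Additive.ofMul (φ h))
  have hcard : Nat.card G ≤ Nat.card φ.ker ^ N * Nat.card A ^ L.natDegree :=
    calc
      Nat.card G ≤ Nat.card (entrywiseHom φ (ZMod N)).ker * Nat.card K :=
        card_le_card_ker_mul_card_of_le_comap _ hGK
      _ ≤ Nat.card φ.ker ^ N * Nat.card A ^ L.natDegree := by
        rw [card_ker_entrywiseHom, Nat.card_zmod]
        gcongr
        exact card_ker_aeval_zmodShift_le (monic_lcmXPowSubOne ℤ Finset.univ n)
  rw [← natDegree_lcmXPowSubOne ℤ fun i _ => hn i, zpow_natCast]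
  exact_mod_cast hcard

/-- Bound on the order of the group generated by a disjoint union of cyclic Mealy
automata with `n 0, …, n (m-1)` states over a `k`-letter alphabet. -/
theorem card_le_of_disjoint_union_of_cyclic (k m : ℕ) (hk : 2 ≤ k) (hm : 1 ≤ m)
    (n : Fin m → ℕ) (hn : ∀ i, 1 ≤ n i)
    (N : ℕ) (hN : N = Finset.univ.lcm n)
    (hdvd : ∀ i, n i ∣ N)
    (ρ : ∀ i : Fin m, ZMod (n i) → Equiv.Perm (Fin k))
    (g : Fin m → ZMod N → ZMod N → Equiv.Perm (Fin k))
    (hg : ∀ (i : Fin m) (t q : ZMod N),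
      g i t q = ρ i (ZMod.castHom (hdvd i) (ZMod (n i)) (q + t)))
    (G : Subgroup (ZMod N → Equiv.Perm (Fin k)))
    (hG : G = Subgroup.closure (Set.range fun p : Fin m × ZMod N => g p.1 p.2))
    (u : ℤ)
    (hu : u = ∑ J ∈ Finset.univ.powerset.filter (fun J : Finset (Fin m) => J.Nonempty),
      (-1 : ℤ) ^ (J.card + 1) * ((J.gcd n : ℕ) : ℤ)) :
    (Nat.card G : ℝ) ≤ (Nat.card (alternatingGroup (Fin k)) : ℝ) ^ N * (2 : ℝ) ^ u := by
  have hn0 (i) : n i ≠ 0 := Nat.one_le_iff_ne_zero.1 (hn i)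
  have : NeZero N := ⟨hN ▸ Finset.lcm_ne_zero_iff.2 fun i _ => hn0 i⟩
  have hgen : G ≤ Subgroup.closure {x | ∃ i, Function.Periodic x (n i : ZMod N)} := by
    rw [hG]
    refine Subgroup.closure_mono (Set.range_subset_iff.2 fun ⟨i, t⟩ => ⟨i, ?_⟩)
    simpa only [← hg] using periodic_comp_castHom_add (hdvd i) (ρ i) t
  simpa [hu] using card_le_of_disjoint_union_of_cyclic_general Equiv.Perm.sign hn0 hgen
end

section
/- Let σ, τ ∈ Equiv.Perm (Fin k) with Nat.Coprime (orderOf σ) (orderOf τ). Then the group circularly generated by the pair (σ, τ) equals the direct product (Subgroup.closure {σ, τ}).prod (Subgroup.closure {σ, τ}) inside Equiv.Perm (Fin k) × Equiv.Perm (Fin k). -/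
/-- The group circularly generated by a pair `(σ, τ)` of permutations: the subgroup
of `Equiv.Perm (Fin k) × Equiv.Perm (Fin k)` generated by `(σ, τ)` and `(τ, σ)`. -/
def circGenPair {k : ℕ} (σ τ : Equiv.Perm (Fin k)) :
    Subgroup (Equiv.Perm (Fin k) × Equiv.Perm (Fin k)) :=
  Subgroup.closure {(σ, τ), (τ, σ)}

/-! If the components of `p = (x, y)` have coprime orders, then some power of `p` is `(x, 1)` and
another is `(1, y)`. Hence a subgroup generated by such pairs contains both of its projections, as
subgroups of the respective factors, and so their product. -/

section Monoid

variable {M N S : Type*} [Monoid M] [Monoid N] {x : M} {y : N}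

theorem exists_pow_eq_self_and_pow_eq_one (h : (orderOf x).Coprime (orderOf y)) :
    ∃ n : ℕ, x ^ n = x ∧ y ^ n = 1 := by
  obtain ⟨m, hm⟩ := exists_pow_eq_self_of_coprime h.symm
  exact ⟨orderOf y * m, by rw [pow_mul, hm], by rw [pow_mul, pow_orderOf_eq_one, one_pow]⟩

variable [SetLike S (M × N)] [SubmonoidClass S (M × N)] {K : S}

theorem mk_one_mem_of_coprime_orderOf (h : (orderOf x).Coprime (orderOf y)) (hK : (x, y) ∈ K) :
    (x, (1 : N)) ∈ K := by
  obtain ⟨n, hx, hy⟩ := exists_pow_eq_self_and_pow_eq_one h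
  simpa only [Prod.pow_mk, hx, hy] using pow_mem hK n

theorem one_mk_mem_of_coprime_orderOf (h : (orderOf x).Coprime (orderOf y)) (hK : (x, y) ∈ K) :
    ((1 : M), y) ∈ K := by
  obtain ⟨n, hy, hx⟩ := exists_pow_eq_self_and_pow_eq_one h.symm
  simpa only [Prod.pow_mk, hx, hy] using pow_mem hK n

end Monoid

section Group

variable {G H : Type*} [Group G] [Group H]

theorem closure_eq_prod_closure_image_of_coprime_orderOf {s : Set (G × H)}
    (hs : ∀ p ∈ s, (orderOf p.1).Coprime (orderOf p.2)) :
    Subgroup.closure s =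
      (Subgroup.closure (Prod.fst '' s)).prod (Subgroup.closure (Prod.snd '' s)) := by
  apply le_antisymm
  · exact Subgroup.le_prod_iff.2 ⟨(MonoidHom.map_closure _ _).le, (MonoidHom.map_closure _ _).le⟩
  · rw [Subgroup.prod_le_iff, MonoidHom.map_closure, MonoidHom.map_closure,
      Subgroup.closure_le, Subgroup.closure_le]
    constructor
    · rintro _ ⟨_, ⟨p, hp, rfl⟩, rfl⟩
      exact mk_one_mem_of_coprime_orderOf (hs p hp) (Subgroup.subset_closure hp)
    · rintro _ ⟨_, ⟨p, hp, rfl⟩, rfl⟩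
      exact one_mk_mem_of_coprime_orderOf (hs p hp) (Subgroup.subset_closure hp)

theorem circGenPair_eq_prod_of_coprime_orders_general (x y : G)
    (h : (orderOf x).Coprime (orderOf y)) :
    Subgroup.closure {(x, y), (y, x)} =
      (Subgroup.closure {x, y}).prod (Subgroup.closure {x, y}) := by
  have hs : ∀ p ∈ ({(x, y), (y, x)} : Set (G × G)), (orderOf p.1).Coprime (orderOf p.2) := by
    rintro _ (rfl | rfl)
    exacts [h, h.symm]
  rw [closure_eq_prod_closure_image_of_coprime_orderOf hs, Set.image_pair, Set.image_pair,
    Set.pair_comm y x]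

end Group

/-- If `σ` and `τ` have coprime orders, the group circularly generated by `(σ, τ)` is
the full direct product `⟨σ, τ⟩ × ⟨σ, τ⟩`. -/
theorem circGenPair_eq_prod_of_coprime_orders {k : ℕ} (σ τ : Equiv.Perm (Fin k))
    (h : Nat.Coprime (orderOf σ) (orderOf τ)) :
    circGenPair σ τ = (Subgroup.closure {σ, τ}).prod (Subgroup.closure {σ, τ}) :=
  circGenPair_eq_prod_of_coprime_orders_general σ τ h
end

section
/- Let σ, τ ∈ Equiv.Perm (Fin k), let G be the group circularly generated by the pair (σ, τ), and suppose (1, π) ∈ G for some π ∈ Equiv.Perm (Fin k). Then for every ρ ∈ Subgroup.closure {σ, τ}, the element (1, ρ⁻¹ * π * ρ) also belongs to G. -/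
/-
The second coordinates of `circGenPair σ τ` fill all of `⟨σ, τ⟩`, because the generators `(τ, σ)`
and `(σ, τ)` project to `σ` and `τ`. So `ρ` is the second coordinate of some `(α, ρ)` in the group,
and conjugating `(1, π)` by `(α, ρ)` leaves the first coordinate trivial whatever `α` is.
-/

section ProdSubgroup

variable {G H : Type*} [Group G] [Group H]

theorem map_snd_le_normalizer_goursatSnd (I : Subgroup (G × H)) :
    I.map (MonoidHom.snd G H) ≤ Subgroup.normalizer (I.goursatSnd : Set H) := by
  let p := (MonoidHom.snd G H).comp I.subtype
  let K := ((MonoidHom.fst G H).comp I.subtype).ker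
  calc
    I.map (MonoidHom.snd G H) = (Subgroup.normalizer (K : Set I)).map p := by
      rw [Subgroup.normalizer_eq_top, ← MonoidHom.range_eq_map, MonoidHom.range_comp,
        Subgroup.range_subtype]
    _ ≤ Subgroup.normalizer (I.goursatSnd : Set H) := Subgroup.le_normalizer_map p

theorem one_conj_mem_of_mem_map_snd {I : Subgroup (G × H)} {x y : H} (hx : (1, x) ∈ I)
    (hy : y ∈ I.map (MonoidHom.snd G H)) : (1, y⁻¹ * x * y) ∈ I := by
  rw [← Subgroup.mem_goursatSnd] at hx ⊢
  exact (Subgroup.mem_normalizer_iff''.mp (map_snd_le_normalizer_goursatSnd I hy) x).mp hx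

theorem map_snd_closure_pair_swap (x y : G) :
    (Subgroup.closure {(x, y), (y, x)}).map (MonoidHom.snd G G) = Subgroup.closure {x, y} := by
  rw [MonoidHom.map_closure, Set.image_pair, Set.pair_comm]
  rfl

theorem one_conj_mem_circGenPair_general (σ τ π : G)
    (hπ : (1, π) ∈ Subgroup.closure {(σ, τ), (τ, σ)}) :
    ∀ ρ ∈ Subgroup.closure {σ, τ},
      (1, ρ⁻¹ * π * ρ) ∈ Subgroup.closure {(σ, τ), (τ, σ)} := by
  intro ρ hρ
  rw [← map_snd_closure_pair_swap] at hρ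
  exact one_conj_mem_of_mem_map_snd hπ hρ

end ProdSubgroup

/-- If `(1, π)` belongs to the group circularly generated by `(σ, τ)`, then so does
`(1, ρ⁻¹ * π * ρ)` for every `ρ ∈ ⟨σ, τ⟩`. -/
theorem one_conj_mem_circGenPair {k : ℕ} (σ τ π : Equiv.Perm (Fin k))
    (hπ : (1, π) ∈ circGenPair σ τ) :
    ∀ ρ ∈ Subgroup.closure {σ, τ}, (1, ρ⁻¹ * π * ρ) ∈ circGenPair σ τ :=
  one_conj_mem_circGenPair_general σ τ π hπ
end

section
/- Let k > 5 and let σ, τ ∈ Equiv.Perm (Fin k) satisfy orderOf σ ≠ orderOf τ, Subgroup.closure {σ, τ} = ⊤ or Subgroup.closure {σ, τ} = alternatingGroup (Fin k), and Equiv.Perm.sign σ ≠ Equiv.Perm.sign τ. Then the group circularly generated by the pair (σ, τ) is the whole group: G_c(σ, τ) = ⊤ (i.e. it equals S_k × S_k). -/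
/-!
Let `I` be a subgroup of `Perm α × Perm β` projecting onto both factors, and let `N` be the normal
subgroup of those `g` with `(g, 1) ∈ I`. If `N` were contained in the alternating group, the sign of
the first coordinate would descend to a homomorphism `f : Perm β →* ℤˣ` with `f h = sign g` for
`(g, h) ∈ I`. But the only such homomorphisms are `1` and `sign`, so no element of `I` could then
have an odd first and an even second coordinate. Hence an element of this kind forces `N` to contain
an odd permutation, which makes `N`, and therefore `I`, the whole group.
-/

open Equiv Equiv.Perm Function

section Goursat

variable {G H A : Type*} [Group G] [Group H] [Group A] {I : Subgroup (G × H)}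

theorem exists_hom_snd_eq_of_goursatFst_le_ker (hsnd : Surjective (Prod.snd ∘ I.subtype))
    {χ : G →* A} (hχ : I.goursatFst ≤ χ.ker) :
    ∃ f : H →* A, ∀ x ∈ I, f x.2 = χ x.1 := by
  let p : I →* H := (MonoidHom.snd G H).comp I.subtype
  let q : I →* A := (χ.comp (MonoidHom.fst G H)).comp I.subtype
  have hker : p.ker ≤ q.ker := by
    rintro ⟨⟨g, h⟩, hx⟩ (rfl : h = 1)
    exact hχ (Subgroup.mem_goursatFst.2 hx)
  exact ⟨p.liftOfSurjective hsnd ⟨q, hker⟩, fun x hx =>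
    p.liftOfRightInverse_comp_apply _ (rightInverse_surjInv hsnd) ⟨q, hker⟩ ⟨x, hx⟩⟩

theorem eq_top_of_goursatFst_eq_top (hsnd : Surjective (Prod.snd ∘ I.subtype))
    (hfst : I.goursatFst = ⊤) : I = ⊤ := by
  refine I.eq_top_iff'.2 fun ⟨g, h⟩ => ?_
  obtain ⟨⟨⟨g', _⟩, hx⟩, rfl⟩ := hsnd h
  have hdiv : (g / g', 1) ∈ I := Subgroup.mem_goursatFst.1 (hfst ▸ Subgroup.mem_top _)
  simpa using mul_mem hdiv hx

theorem surjective_comp_subtype_closure (f : G →* H) {s : Set G}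
    (hs : Subgroup.closure (f '' s) = ⊤) : Surjective (f ∘ (Subgroup.closure s).subtype) := by
  intro h
  obtain ⟨g, hg, rfl⟩ := ((f.map_closure s).trans hs).ge (Subgroup.mem_top h)
  exact ⟨⟨g, hg⟩, rfl⟩

end Goursat

section Perm

theorem eq_top_of_normal_of_isSwap_mem {α : Type*} [Finite α] [DecidableEq α]
    {N : Subgroup (Perm α)} [N.Normal] {g : Perm α} (hg : g ∈ N) (hswap : g.IsSwap) : N = ⊤ := by
  obtain ⟨x, y, hxy, rfl⟩ := hswap
  rw [eq_top_iff, ← closure_isSwap, Subgroup.closure_le]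
  rintro _ ⟨z, w, hzw, rfl⟩
  exact Group.conjugates_subset_normal hg (isConj_swap hxy hzw)

variable {α β : Type*} [Fintype α] [DecidableEq α] [Fintype β] [DecidableEq β]
  {N : Subgroup (Perm α)} {g : Perm α}

theorem eq_top_of_alternatingGroup_le (hA : alternatingGroup α ≤ N) (hg : g ∈ N)
    (hodd : sign g = -1) : N = ⊤ := by
  refine N.eq_top_iff'.2 fun x => ?_
  rcases Int.units_eq_one_or (sign x) with hx | hx
  · exact hA (mem_alternatingGroup.2 hx)
  · have hxg : x * g ∈ N := hA (mem_alternatingGroup.2 (by simp [hx, hodd]))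
    exact (N.mul_mem_cancel_right hg).1 hxg

theorem alternatingGroup_le_of_normal_of_isThreeCycle_mem [N.Normal] (hg : g ∈ N)
    (h3 : g.IsThreeCycle) : alternatingGroup α ≤ N := by
  rw [← closure_three_cycles_eq_alternating, Subgroup.closure_le]
  exact fun g' hg' => Group.conjugates_subset_normal hg <|
    isConj_of_cycleType_eq (h3.cycleType.trans hg'.cycleType.symm)

-- The commutator of `g` with the transposition `(x, g x)` is a 3-cycle as soon as `g (g x) ≠ x`.
theorem alternatingGroup_le_of_normal_of_sq_ne_one [N.Normal] (hg : g ∈ N) (hsq : g ^ 2 ≠ 1) :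
    alternatingGroup α ≤ N := by
  obtain ⟨x, hx⟩ : ∃ x, g (g x) ≠ x := by
    by_contra! h
    exact hsq (Perm.ext fun x => by simpa [sq] using h x)
  have hgx : g x ≠ x := fun h => hx (by rw [h, h])
  have hcomm : g * (swap x (g x) * g⁻¹ * (swap x (g x))⁻¹) ∈ N :=
    mul_mem hg (‹N.Normal›.conj_mem _ (inv_mem hg) _)
  have hconj : g * (swap x (g x) * g⁻¹ * (swap x (g x))⁻¹) =
      swap (g x) (g (g x)) * swap (g x) x := by
    rw [swap_apply_apply, swap_inv, swap_comm (g x) x]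
    group
  rw [hconj] at hcomm
  exact alternatingGroup_le_of_normal_of_isThreeCycle_mem hcomm
    (isThreeCycle_swap_mul_swap_same (g.injective.ne hgx.symm) hgx hx)

theorem isSwap_of_sq_eq_one_of_sign_eq_neg_one (hsq : g ^ 2 = 1) (hodd : sign g = -1)
    (hcard : g.support.card < 6) : g.IsSwap := by
  obtain ⟨m, hm⟩ : ∃ m, g.cycleType = Multiset.replicate m 2 :=
    ⟨_, cycleType_of_pow_prime_eq_one hsq⟩
  have hsupp : g.support.card = m * 2 := by simp [← sum_cycleType, hm]
  have hsign : sign g = (-1) ^ m := by simp [sign_of_cycleType', hm]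
  have hm_odd : Odd m := neg_one_pow_eq_neg_one_iff_odd (by decide) |>.1 (hsign.symm.trans hodd)
  obtain rfl : m = 1 := by grind
  exact isSwap_iff_cycleType.2 hm

theorem eq_top_of_normal_of_sign_eq_neg_one [N.Normal] (hg : g ∈ N) (hodd : sign g = -1) :
    N = ⊤ := by
  by_cases hsq : g ^ 2 = 1
  · by_cases hcard : 5 ≤ Nat.card α
    · have hg1 : g ≠ 1 := by
        rintro rfl
        simp at hodd
      have hN : Nontrivial N := N.nontrivial_iff_exists_ne_one.2 ⟨g, hg, hg1⟩
      exact eq_top_of_alternatingGroup_le (alternatingGroup_le_of_normal hcard hN) hg hodd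
    · have hlt : g.support.card < 6 := by
        have := g.support.card_le_univ
        rw [Nat.card_eq_fintype_card] at hcard
        omega
      exact eq_top_of_normal_of_isSwap_mem hg <|
        isSwap_of_sq_eq_one_of_sign_eq_neg_one hsq hodd hlt
  · exact eq_top_of_alternatingGroup_le (alternatingGroup_le_of_normal_of_sq_ne_one hg hsq) hg hodd

theorem monoidHom_eq_one_of_sign_eq_one (f : Perm β →* ℤˣ) {h : Perm β} (heven : sign h = 1) :
    f h = 1 := by
  by_contra hne
  have hneg : f h = -1 := (Int.units_eq_one_or _).resolve_left hne
  have hsurj : Surjective f := fun u => by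
    rcases Int.units_eq_one_or u with rfl | rfl
    exacts [⟨1, map_one f⟩, ⟨h, hneg⟩]
  exact hne (eq_sign_of_surjective_hom hsurj ▸ heven)

theorem eq_top_of_odd_even_mem {I : Subgroup (Perm α × Perm β)}
    (hfst : Surjective (Prod.fst ∘ I.subtype)) (hsnd : Surjective (Prod.snd ∘ I.subtype))
    {h : Perm β} (hgh : (g, h) ∈ I) (hodd : sign g = -1) (heven : sign h = 1) : I = ⊤ := by
  have hnormal : I.goursatFst.Normal := Subgroup.normal_goursatFst hfst
  have hle : ¬ I.goursatFst ≤ sign.ker := fun hle => by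
    obtain ⟨f, hf⟩ := exists_hom_snd_eq_of_goursatFst_le_ker hsnd hle
    have hsign : f h = -1 := (hf _ hgh).trans hodd
    exact absurd (hsign.symm.trans (monoidHom_eq_one_of_sign_eq_one f heven)) (by decide)
  obtain ⟨n, hn, hn_odd⟩ := SetLike.not_le_iff_exists.1 hle
  exact eq_top_of_goursatFst_eq_top hsnd <|
    eq_top_of_normal_of_sign_eq_neg_one hn ((Int.units_eq_one_or _).resolve_left hn_odd)

theorem circGenPair_eq_top_general {σ τ : Perm α}
    (hgen : alternatingGroup α ≤ Subgroup.closure {σ, τ}) (hsgn : sign σ ≠ sign τ) :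
    Subgroup.closure {(σ, τ), (τ, σ)} = ⊤ := by
  wlog hσ : sign σ = -1 generalizing σ τ
  · have hσ_even : sign σ = 1 := (Int.units_eq_one_or _).resolve_right hσ
    have hτ_odd : sign τ = -1 := (Int.units_eq_one_or _).resolve_left (hσ_even ▸ hsgn.symm)
    rw [Set.pair_comm]
    exact this (Set.pair_comm σ τ ▸ hgen) hsgn.symm hτ_odd
  have hτ : sign τ = 1 := (Int.units_eq_one_or _).resolve_right (hσ ▸ hsgn.symm)
  have htop : Subgroup.closure {σ, τ} = ⊤ :=
    eq_top_of_alternatingGroup_le hgen (Subgroup.subset_closure (by simp)) hσ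
  have hfst := surjective_comp_subtype_closure (MonoidHom.fst (Perm α) (Perm α))
    (s := {(σ, τ), (τ, σ)}) (by simpa [Set.image_pair] using htop)
  have hsnd := surjective_comp_subtype_closure (MonoidHom.snd (Perm α) (Perm α))
    (s := {(σ, τ), (τ, σ)}) (by simpa [Set.image_pair, Set.pair_comm τ σ] using htop)
  exact eq_top_of_odd_even_mem hfst hsnd (Subgroup.subset_closure (by simp)) hσ hτ

end Perm

/-- If `σ, τ` have different orders, generate `S_k` or `A_k`, and have different
signatures, then the group circularly generated by `(σ, τ)` is all of `S_k × S_k`. -/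
theorem circGenPair_eq_top {k : ℕ} (hk : 5 < k)
    (σ τ : Equiv.Perm (Fin k)) (horder : orderOf σ ≠ orderOf τ)
    (hgen : Subgroup.closure {σ, τ} = ⊤ ∨
      Subgroup.closure {σ, τ} = alternatingGroup (Fin k))
    (hsgn : Equiv.Perm.sign σ ≠ Equiv.Perm.sign τ) :
    circGenPair σ τ = ⊤ :=
  circGenPair_eq_top_general (hgen.elim (fun h => h ▸ le_top) fun h => h.ge) hsgn
end

section
/- Let k > 5 and let σ, τ ∈ Equiv.Perm (Fin k) satisfy orderOf σ ≠ orderOf τ, Subgroup.closure {σ, τ} = ⊤ or Subgroup.closure {σ, τ} = alternatingGroup (Fin k), and Equiv.Perm.sign σ = −1 and Equiv.Perm.sign τ = −1. Then the group circularly generated by the pair (σ, τ) equals the equal-sign subgroup {(a, b) : Equiv.Perm.sign a = Equiv.Perm.sign b} of Equiv.Perm (Fin k) × Equiv.Perm (Fin k) (which is the internal semidirect product (A_k × A_k) ⋊ ⟨(π, π)⟩ for any transposition π). -/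
/-- The equal-sign subgroup of `S_k × S_k`: the kernel of `(a, b) ↦ sign a * sign b`,
i.e. the pairs of permutations with equal signatures. It is the internal semidirect
product `(A_k × A_k) ⋊ ⟨(π, π)⟩` for any transposition `π`. -/
def equalSignSubgroup (k : ℕ) : Subgroup (Equiv.Perm (Fin k) × Equiv.Perm (Fin k)) :=
  MonoidHom.ker
    ((Equiv.Perm.sign.comp (MonoidHom.fst (Equiv.Perm (Fin k)) (Equiv.Perm (Fin k)))) *
      (Equiv.Perm.sign.comp (MonoidHom.snd (Equiv.Perm (Fin k)) (Equiv.Perm (Fin k)))))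

/-!
Let `K` be the group generated by `(σ, τ)` and `(τ, σ)`. A pair `(a, b) ∈ K` with
`orderOf b ∤ orderOf a` has a power `(1, c) ∈ K` with `c ≠ 1`; such a pair exists among the two
generators because the orders of `σ` and `τ` differ. The elements `c` with `(1, c) ∈ K` form a
normal subgroup because `K` projects onto the second factor, so they include all even permutations
once there are at least five points. As `K` also projects onto the first factor, it contains every
pair of permutations of equal sign.
-/

section Product

variable {G H : Type*} [Group G] [Group H] {K L : Subgroup (G × H)}

theorem eq_of_le_of_map_fst_le_of_goursatSnd_le (hKL : K ≤ L)
    (hfst : L.map (MonoidHom.fst G H) ≤ K.map (MonoidHom.fst G H))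
    (hsnd : L.goursatSnd ≤ K.goursatSnd) : K = L := by
  refine hKL.antisymm ?_
  rintro ⟨a, b⟩ hab
  obtain ⟨⟨_, c⟩, hac, rfl⟩ := hfst (Subgroup.mem_map_of_mem _ hab)
  have hquot : c⁻¹ * b ∈ L.goursatSnd := by
    simpa using mul_mem (inv_mem (hKL hac)) hab
  simpa using mul_mem hac (Subgroup.mem_goursatSnd.1 (hsnd hquot))

theorem normal_goursatSnd_of_map_snd_eq_top (hK : K.map (MonoidHom.snd G H) = ⊤) :
    K.goursatSnd.Normal := by
  apply Subgroup.normal_goursatSnd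
  rw [← MonoidHom.coe_snd, ← MonoidHom.coe_comp, ← MonoidHom.range_eq_top,
    MonoidHom.range_comp, Subgroup.range_subtype, hK]

theorem orderOf_snd_dvd_orderOf_fst_of_goursatSnd_eq_bot (hK : K.goursatSnd = ⊥) {x : G × H}
    (hx : x ∈ K) : orderOf x.2 ∣ orderOf x.1 := by
  have hpow : x.2 ^ orderOf x.1 ∈ K.goursatSnd := by
    simpa [Prod.pow_def, pow_orderOf_eq_one] using pow_mem hx (orderOf x.1)
  rw [hK, Subgroup.mem_bot] at hpow
  exact orderOf_dvd_of_pow_eq_one hpow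

theorem map_fst_closure_pair (x y : G × H) :
    (Subgroup.closure {x, y}).map (MonoidHom.fst G H) = Subgroup.closure {x.1, y.1} := by
  rw [MonoidHom.map_closure, Set.image_pair, MonoidHom.coe_fst]

theorem map_snd_closure_pair (x y : G × H) :
    (Subgroup.closure {x, y}).map (MonoidHom.snd G H) = Subgroup.closure {x.2, y.2} := by
  rw [MonoidHom.map_closure, Set.image_pair, MonoidHom.coe_snd]

theorem goursatSnd_closure_swap_ne_bot {g h : G} (horder : orderOf g ≠ orderOf h) :
    (Subgroup.closure {(g, h), (h, g)}).goursatSnd ≠ ⊥ := by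
  intro hbot
  have hdvd : ∀ x ∈ ({(g, h), (h, g)} : Set (G × G)), orderOf x.2 ∣ orderOf x.1 := fun _ hx ↦
    orderOf_snd_dvd_orderOf_fst_of_goursatSnd_eq_bot hbot (Subgroup.subset_closure hx)
  exact horder (Nat.dvd_antisymm (hdvd (h, g) (by simp)) (hdvd (g, h) (by simp)))

end Product

section Perm

open Equiv.Perm

variable {α β : Type*} [DecidableEq α] [Fintype α] [DecidableEq β] [Fintype β]

theorem eq_top_of_alternatingGroup_le_s10 {N : Subgroup (Equiv.Perm α)} (hN : alternatingGroup α ≤ N)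
    {σ : Equiv.Perm α} (hσN : σ ∈ N) (hσ : sign σ = -1) : N = ⊤ := by
  refine (Subgroup.eq_top_iff' N).2 fun ρ ↦ ?_
  rcases Int.units_eq_one_or (sign ρ) with hρ | hρ
  · exact hN (mem_alternatingGroup.2 hρ)
  · have hquot : σ⁻¹ * ρ ∈ alternatingGroup α := by simp [mem_alternatingGroup, hσ, hρ]
    simpa using mul_mem hσN (hN hquot)

variable (α β) in
/-- The pairs of permutations of equal sign, on two possibly different finite types. The encoding
as a kernel makes `equalSign (Fin k) (Fin k)` definitionally equal to `equalSignSubgroup k`. -/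
def equalSign : Subgroup (Equiv.Perm α × Equiv.Perm β) :=
  (sign.comp (MonoidHom.fst _ _) * sign.comp (MonoidHom.snd _ _)).ker

theorem mem_equalSign {x : Equiv.Perm α × Equiv.Perm β} :
    x ∈ equalSign α β ↔ sign x.1 = sign x.2 := by
  simp [equalSign, MonoidHom.mem_ker, mul_eq_one_iff_eq_inv]

theorem goursatSnd_equalSign : (equalSign α β).goursatSnd = alternatingGroup β := by
  ext σ
  simp [mem_equalSign, mem_alternatingGroup, eq_comm]

theorem eq_equalSign_of_goursatSnd_ne_bot (hβ : 5 ≤ Nat.card β)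
    {K : Subgroup (Equiv.Perm α × Equiv.Perm β)} (hK : K ≤ equalSign α β)
    (hfst : K.map (MonoidHom.fst _ _) = ⊤) (hsnd : K.map (MonoidHom.snd _ _) = ⊤)
    (hbot : K.goursatSnd ≠ ⊥) : K = equalSign α β := by
  have := normal_goursatSnd_of_map_snd_eq_top hsnd
  refine eq_of_le_of_map_fst_le_of_goursatSnd_le hK (hfst ▸ le_top) ?_
  rw [goursatSnd_equalSign]
  exact alternatingGroup_le_of_normal hβ (K.goursatSnd.nontrivial_iff_ne_bot.2 hbot)

theorem circGenPair_eq_equalSign_general (hα : 5 ≤ Nat.card α) {σ τ : Equiv.Perm α}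
    (horder : orderOf σ ≠ orderOf τ) (hgen : alternatingGroup α ≤ Subgroup.closure {σ, τ})
    (hσ : sign σ = -1) (hτ : sign τ = -1) :
    Subgroup.closure {(σ, τ), (τ, σ)} = equalSign α α := by
  have htop : Subgroup.closure {σ, τ} = ⊤ :=
    eq_top_of_alternatingGroup_le_s10 hgen (Subgroup.subset_closure (Set.mem_insert σ {τ})) hσ
  apply eq_equalSign_of_goursatSnd_ne_bot hα
  · rw [Subgroup.closure_le]
    rintro _ (rfl | rfl) <;> simp [mem_equalSign, hσ, hτ]
  · rw [map_fst_closure_pair, htop]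
  · rw [map_snd_closure_pair, Set.pair_comm, htop]
  · exact goursatSnd_closure_swap_ne_bot horder

end Perm

/-- If `σ, τ` have different orders, generate `S_k` or `A_k`, and are both odd, then the
group circularly generated by `(σ, τ)` is the equal-sign subgroup of `S_k × S_k`. -/
theorem circGenPair_eq_equalSign {k : ℕ} (hk : 5 < k)
    (σ τ : Equiv.Perm (Fin k)) (horder : orderOf σ ≠ orderOf τ)
    (hgen : Subgroup.closure {σ, τ} = ⊤ ∨
      Subgroup.closure {σ, τ} = alternatingGroup (Fin k))
    (hσ : Equiv.Perm.sign σ = -1) (hτ : Equiv.Perm.sign τ = -1) :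
    circGenPair σ τ = equalSignSubgroup k := by
  exact circGenPair_eq_equalSign_general (by simpa using hk.le) horder
    (hgen.elim (fun h ↦ h ▸ le_top) (fun h ↦ h.ge)) hσ hτ
end

section
/- The sequence k ↦ (Nat.card {p : Equiv.Perm (Fin k) × Equiv.Perm (Fin k) // G_c(p.1, p.2) = ⊤} : ℝ) / (k !)^2 tends to 1/2 as k → ∞; that is, the group circularly generated by a pair of uniformly random permutations of k points is all of S_k × S_k with probability tending to 1/2. -/
/-
If the group generated by `(σ, τ)` and `(τ, σ)` is everything, then `σ` and `τ` have different
signs, since otherwise every pair `(g, h)` in it satisfies `sign g = sign h`; this has probability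
`1 / 2`. Conversely, if the signs differ and `σ, τ` generate at least the alternating group, then
they generate the symmetric group, and Goursat's lemma applied to the subdirect subgroup generated
by `(σ, τ)` and `(τ, σ)` shows that it is everything.

So it suffices that two random permutations generate at least the alternating group with probability
tending to `1`. They both fix a given subset, or a given partition into equal parts, with
probability the inverse square of the size of its orbit; summing over all of these, the generated
group is primitive with probability `1 - O(1 / k)`. By Jordan's theorem it is then enough that some
power of `σ` is a cycle of prime length at most `k / 2`. The number of cycles of `σ` with length in
a set `P` of primes has mean `∑ p ∈ P, 1 / p` and at most that variance, so by Chebyshev's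
inequality it is rarely zero once that sum is large; and if `P` avoids small primes, then `p` rarely
divides the length of a second cycle, so that a power of `σ` kills all cycles except the one of
length `p`.
-/

namespace CircGen

open Equiv Equiv.Perm MulAction Filter Topology
open scoped Pointwise commutatorElement BigOperators Nat

variable {α : Type*}

section Jordan

variable [Fintype α] [DecidableEq α]

theorem isThreeCycle_commutator {g h : Perm α} {x : α} (hgh : g.support ∩ h.support = {x}) :
    IsThreeCycle ⁅g, h⁆ := by
  have mem_iff (y : α) : g y ≠ y ∧ h y ≠ y ↔ y = x := by
    simpa only [Finset.mem_inter, mem_support, Finset.mem_singleton] using Finset.ext_iff.mp hgh y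
  obtain ⟨hgx, hhx⟩ := (mem_iff x).mpr rfl
  have h_fix {y : α} (hy : y ≠ x) (hgy : g y ≠ y) : h y = y :=
    by_contra fun hhy ↦ hy ((mem_iff y).mp ⟨hgy, hhy⟩)
  have hhx_fix : g (h x) = h x :=
    by_contra fun hg ↦ hhx ((mem_iff (h x)).mp ⟨hg, h.injective.ne hhx⟩)
  have hne : g x ≠ h x := fun e ↦ hgx (g.injective (by rw [e, hhx_fix]))
  -- `h` agrees on the support of `g` with the transposition `swap x (h x)`.
  have hdisj : Disjoint (swap x (h x) * h) g := fun y ↦ by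
    rcases eq_or_ne y x with rfl | hy
    · left; simp
    by_cases hgy : g y = y
    · exact Or.inr hgy
    left
    rw [mul_apply, h_fix hy hgy, swap_apply_of_ne_of_ne hy (fun e ↦ hgy (e ▸ hhx_fix))]
  have hcomm : ⁅g, h⁆ = swap (h x) (g x) * swap (h x) x := calc
    ⁅g, h⁆ = g * swap x (h x) * ((swap x (h x) * h) * g⁻¹) * h⁻¹ := by
      simp [commutatorElement_def, mul_assoc]
    _ = swap (g x) (g (h x)) * swap x (h x) := by
      rw [hdisj.commute.inv_right.eq, mul_swap_eq_swap_mul]; group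
    _ = swap (h x) (g x) * swap (h x) x := by rw [hhx_fix, swap_comm, swap_comm x]
  rw [hcomm]
  exact isThreeCycle_swap_mul_swap_same hne.symm hhx hgx

theorem exists_inter_smul_eq_singleton {G : Type*} [Group G] [MulAction G α] {s : Finset α}
    (hG : IsMultiplyPretransitive G α s.card) (hs : 2 * s.card ≤ Fintype.card α + 1) {a : α}
    (ha : a ∈ s) : ∃ g : G, s ∩ g • s = {a} := by
  obtain ⟨t, hts, ht⟩ : ∃ t ⊆ sᶜ, t.card = s.card - 1 :=
    Finset.exists_subset_card_eq (by rw [Finset.card_compl]; omega)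
  have hat : a ∉ t := fun h ↦ Finset.mem_compl.mp (hts h) ha
  have hcard : (insert a t).card = s.card := by
    rw [Finset.card_insert_of_notMem hat, ht, Nat.sub_add_cancel (Finset.card_pos.mpr ⟨a, ha⟩)]
  have := Set.powersetCard.isPretransitive_of_isMultiplyPretransitive (G := G) hG
  obtain ⟨g, hg⟩ := exists_smul_eq G (⟨s, rfl⟩ : Set.powersetCard α s.card) ⟨insert a t, hcard⟩
  refine ⟨g, ?_⟩
  rw [show g • s = insert a t from congrArg Subtype.val hg, Finset.inter_insert_of_mem ha,
    Finset.disjoint_iff_inter_eq_empty.mp (Finset.disjoint_left.mpr fun _ hs ht ↦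
      Finset.mem_compl.mp (hts ht) hs)]
  rfl

theorem isMultiplyPretransitive_of_isCycle_of_prime {G : Subgroup (Perm α)}
    (hG : IsPreprimitive G α) {c : Perm α} (hcG : c ∈ G) (hc : c.IsCycle)
    (hp : c.support.card.Prime) (hlt : c.support.card < Fintype.card α) :
    IsMultiplyPretransitive G α (Fintype.card α - c.support.card + 1) := by
  obtain ⟨n, hn⟩ : ∃ n, Fintype.card α = c.support.card + n + 1 :=
    ⟨Fintype.card α - c.support.card - 1, by omega⟩
  rw [show Fintype.card α - c.support.card + 1 = n + 2 by omega]
  have : IsMultiplyPreprimitive G α (n + 2) := by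
    refine hG.isMultiplyPreprimitive (s := (c.supportᶜ : Set α)) ?_ ?_ ?_
    · apply Nat.add_left_cancel
      rw [Set.ncard_add_ncard_compl, Set.ncard_coe_finset, Nat.card_eq_fintype_card, hn, add_assoc]
    · rw [Nat.card_eq_fintype_card, hn]
      have := hp.two_le
      omega
    · classical
      have := isPretransitive_of_isCycle_mem hc hcG
      apply IsPreprimitive.of_prime_card
      convert! hp
      rw [Nat.card_eq_fintype_card, Fintype.card_subtype]
      congr 1
      ext x
      simp [SubMulAction.mem_ofFixingSubgroup_iff]
  exact IsMultiplyPreprimitive.isMultiplyPretransitive ..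

theorem alternatingGroup_le_of_isCycle_of_prime {G : Subgroup (Perm α)}
    (hG : IsPreprimitive G α) {c : Perm α} (hcG : c ∈ G) (hc : c.IsCycle)
    (hp : c.support.card.Prime) (hle : 2 * c.support.card ≤ Fintype.card α) :
    alternatingGroup α ≤ G := by
  have hpos := hp.pos
  have hmt := isMultiplyPretransitive_of_isCycle_of_prime hG hcG hc hp (by omega)
  have hpt : IsMultiplyPretransitive G α c.support.card :=
    isMultiplyPretransitive_of_le' (n := Fintype.card α - c.support.card + 1) (by omega)
      (by rw [ENat.card_eq_coe_fintype_card]; exact_mod_cast (by omega))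
  obtain ⟨a, ha⟩ : c.support.Nonempty := Finset.card_pos.mp hpos
  obtain ⟨g, hg⟩ := exists_inter_smul_eq_singleton hpt (by omega) ha
  have hcg : c.support ∩ ((g : Perm α) * c * (g : Perm α)⁻¹).support = {a} := by
    rw [support_conj, ← hg, Finset.map_eq_image]
    rfl
  have hconj : ((g : Perm α) * c * (g : Perm α)⁻¹) ∈ G := mul_mem (mul_mem g.2 hcG) (inv_mem g.2)
  refine alternatingGroup_le_of_isPreprimitive_of_isThreeCycle_mem hG
    (isThreeCycle_commutator hcg) ?_
  exact mul_mem (mul_mem (mul_mem hcG hconj) (inv_mem hcG)) (inv_mem hconj)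

end Jordan

section Goursat

variable {β : Type*} [Fintype α] [DecidableEq α] [Fintype β] [DecidableEq β]

theorem eq_top_of_alternatingGroup_le {G : Subgroup (Perm α)} (hG : alternatingGroup α ≤ G)
    {σ : Perm α} (hσG : σ ∈ G) (hσ : sign σ = -1) : G = ⊤ := by
  refine (Subgroup.eq_top_iff' G).mpr fun g ↦ ?_
  rcases Int.units_eq_one_or (sign g) with h | h
  · exact hG (mem_alternatingGroup.mpr h)
  · exact (mul_mem_cancel_right hσG).mp (hG (mem_alternatingGroup.mpr (by simp [h, hσ])))

theorem eq_top_of_normal_of_sign_eq_neg_one {N : Subgroup (Perm α)} (hN : N.Normal)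
    (hα : 5 ≤ Nat.card α) {σ : Perm α} (hσN : σ ∈ N) (hσ : sign σ = -1) : N = ⊤ := by
  have : Nontrivial N := N.nontrivial_iff_exists_ne_one.mpr
    ⟨σ, hσN, fun h ↦ by simp [h] at hσ⟩
  exact eq_top_of_alternatingGroup_le (alternatingGroup_le_of_normal hα this) hσN hσ

variable {I : Subgroup (Perm α × Perm β)}

theorem sign_fst_eq_sign_snd (hfst : Function.Surjective (Prod.fst ∘ I.subtype))
    (hsnd : Function.Surjective (Prod.snd ∘ I.subtype)) [Nontrivial β]
    (hI : I.goursatSnd ≤ alternatingGroup β) {p : Perm α × Perm β} (hp : p ∈ I) :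
    sign p.1 = sign p.2 := by
  let f : I →* Perm α := (MonoidHom.fst _ _).comp I.subtype
  let s : I →* ℤˣ := sign.comp ((MonoidHom.snd _ _).comp I.subtype)
  have hker : f.ker ≤ s.ker := by
    rintro ⟨⟨_, b⟩, hb⟩ (rfl : _ = 1)
    exact mem_alternatingGroup.mp (hI (Subgroup.mem_goursatSnd.mpr hb))
  let t : Perm α →* ℤˣ := f.liftOfSurjective hfst ⟨s, hker⟩
  have ht (x : I) : t (f x) = s x := f.liftOfRightInverse_comp_apply _ _ ⟨s, hker⟩ x
  have hs : Function.Surjective s := (sign_surjective β).comp hsnd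
  have ht_surj : Function.Surjective t := fun u ↦ (hs u).imp' f fun x hx ↦ (ht x).trans hx
  exact (DFunLike.congr_fun (eq_sign_of_surjective_hom ht_surj) _).symm.trans (ht ⟨p, hp⟩)

theorem eq_top_of_surjective_of_sign_ne (hfst : Function.Surjective (Prod.fst ∘ I.subtype))
    (hsnd : Function.Surjective (Prod.snd ∘ I.subtype)) (hβ : 5 ≤ Nat.card β)
    {p : Perm α × Perm β} (hp : p ∈ I) (hsign : sign p.1 ≠ sign p.2) : I = ⊤ := by
  have : Nontrivial β := (Finite.one_lt_card_iff_nontrivial).mp (by omega)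
  obtain ⟨b, hbI, hb⟩ := SetLike.not_le_iff_exists.mp
    fun h ↦ hsign (sign_fst_eq_sign_snd hfst hsnd h hp)
  have htop : I.goursatSnd = ⊤ := eq_top_of_normal_of_sign_eq_neg_one
    (Subgroup.normal_goursatSnd hsnd) hβ hbI (Int.units_ne_iff_eq_neg.mp hb)
  refine (Subgroup.eq_top_iff' I).mpr fun ⟨x, y⟩ ↦ ?_
  obtain ⟨⟨⟨x, z⟩, hxz⟩, rfl⟩ := hfst x
  have hyz : (1, y * z⁻¹) ∈ I := Subgroup.mem_goursatSnd.mp (htop ▸ Subgroup.mem_top _)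
  simpa using mul_mem hyz hxz

end Goursat

theorem circGenPair_eq_top {k : ℕ} (hk : 5 ≤ k) {σ τ : Perm (Fin k)}
    (hA : alternatingGroup (Fin k) ≤ Subgroup.closure {σ, τ}) (hsign : sign σ ≠ sign τ) :
    circGenPair σ τ = ⊤ := by
  have htop : Subgroup.closure {σ, τ} = ⊤ := by
    have hmem : ∃ ρ ∈ ({σ, τ} : Set (Perm (Fin k))), sign ρ = -1 := by
      rcases Int.units_eq_one_or (sign σ) with hσ | hσ
      · exact ⟨τ, by simp, Int.units_ne_iff_eq_neg.mp (hσ ▸ hsign.symm)⟩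
      · exact ⟨σ, by simp, hσ⟩
    obtain ⟨ρ, hρ, hsignρ⟩ := hmem
    exact eq_top_of_alternatingGroup_le hA (Subgroup.subset_closure hρ) hsignρ
  have hsurj (f : Perm (Fin k) × Perm (Fin k) →* Perm (Fin k))
      (hf : f '' {(σ, τ), (τ, σ)} = {σ, τ}) :
      Function.Surjective (f ∘ (circGenPair σ τ).subtype) := by
    rw [← MonoidHom.coe_comp, ← MonoidHom.range_eq_top, MonoidHom.range_comp,
      Subgroup.range_subtype, circGenPair, MonoidHom.map_closure, hf, htop]
  refine eq_top_of_surjective_of_sign_ne (hsurj (MonoidHom.fst _ _) ?_)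
    (hsurj (MonoidHom.snd _ _) ?_) (by simpa using hk) (p := (σ, τ))
    (Subgroup.subset_closure (by simp)) hsign
  · simp [Set.image_pair]
  · simp [Set.image_pair, Set.pair_comm]

theorem sign_ne_of_circGenPair_eq_top {k : ℕ} (hk : 2 ≤ k) {σ τ : Perm (Fin k)}
    (h : circGenPair σ τ = ⊤) : sign σ ≠ sign τ := by
  intro hsign
  have hle : circGenPair σ τ ≤ MonoidHom.eqLocus (sign.comp (MonoidHom.fst _ _))
      (sign.comp (MonoidHom.snd _ _)) := by
    rw [circGenPair, Subgroup.closure_le]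
    rintro x (rfl | rfl)
    · exact hsign
    · exact hsign.symm
  have : Nontrivial (Fin k) := Fin.nontrivial_iff_two_le.mpr hk
  obtain ⟨ρ, hρ⟩ := sign_surjective (Fin k) (-1)
  have hρ_one : sign ρ = sign (1 : Perm (Fin k)) := hle (h ▸ Subgroup.mem_top (ρ, 1))
  simp [hρ] at hρ_one

/-- The probability that a uniformly random element of the finite type `Ω` lies in `s`, as a real
number. -/
noncomputable def uniformProb {Ω : Type*} (s : Set Ω) : ℝ := s.ncard / Nat.card Ω

section UniformProb

variable {Ω Ω' : Type*} {s t : Set Ω}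

theorem uniformProb_mono [Finite Ω] (h : s ⊆ t) : uniformProb s ≤ uniformProb t := by
  unfold uniformProb
  gcongr
  exact t.toFinite

theorem uniformProb_union_le (s t : Set Ω) :
    uniformProb (s ∪ t) ≤ uniformProb s + uniformProb t := by
  unfold uniformProb
  rw [← add_div]
  gcongr
  exact_mod_cast Set.ncard_union_le s t

theorem uniformProb_biUnion_le {ι : Type*} (I : Finset ι) (s : ι → Set Ω) :
    uniformProb (⋃ i ∈ I, s i) ≤ ∑ i ∈ I, uniformProb (s i) := by
  classical
  induction I using Finset.induction_on with
  | empty => simp [uniformProb]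
  | insert i I hi ih =>
    rw [Finset.set_biUnion_insert, Finset.sum_insert hi]
    exact (uniformProb_union_le _ _).trans (by gcongr)

theorem uniformProb_prod (s : Set Ω) (t : Set Ω') :
    uniformProb (s ×ˢ t) = uniformProb s * uniformProb t := by
  simp only [uniformProb, Set.ncard_prod, Nat.card_prod, Nat.cast_mul, mul_div_mul_comm]

theorem uniformProb_univ [Finite Ω] [Nonempty Ω] : uniformProb (Set.univ : Set Ω) = 1 := by
  rw [uniformProb, Set.ncard_univ, div_self (Nat.cast_ne_zero.mpr Nat.card_pos.ne')]

theorem uniformProb_one_le_le_expect [Fintype Ω] {f : Ω → ℝ} (hf : 0 ≤ f) :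
    uniformProb {ω | 1 ≤ f ω} ≤ 𝔼 ω, f ω := by
  classical
  rw [uniformProb, Fintype.expect_eq_sum_div_card, Nat.card_eq_fintype_card,
    Set.ncard_eq_toFinset_card', Finset.cast_card]
  gcongr
  refine (Finset.sum_le_sum fun ω hω ↦ ?_).trans
    (Finset.sum_le_univ_sum_of_nonneg (s := {ω | 1 ≤ f ω}.toFinset) hf)
  exact (Set.mem_toFinset (s := {ω | 1 ≤ f ω})).mp hω

end UniformProb

section Orbit

variable {G X : Type*} [Group G] [Finite G] [MulAction G X]

theorem uniformProb_stabilizer (x : X) :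
    uniformProb (stabilizer G x : Set G) = 1 / (orbit G x).ncard := by
  rw [uniformProb, one_div, ← index_stabilizer, ← Nat.card_coe_set_eq,
    ← (stabilizer G x).card_mul_index]
  have : (Nat.card (stabilizer G x) : ℝ) ≠ 0 := Nat.cast_ne_zero.mpr Nat.card_pos.ne'
  push_cast
  exact div_mul_cancel_left₀ this _

theorem uniformProb_exists_mem_orbit_fixed_le (x : X) :
    uniformProb {p : G × G | ∃ y ∈ orbit G x, p.1 • y = y ∧ p.2 • y = y} ≤
      1 / (orbit G x).ncard := by
  have hfin : (orbit G x).Finite := Set.finite_range _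
  have horbit (y : X) (hy : y ∈ hfin.toFinset) :
      uniformProb ((stabilizer G y : Set G) ×ˢ (stabilizer G y : Set G)) =
        (1 / (orbit G x).ncard) ^ 2 := by
    rw [uniformProb_prod, uniformProb_stabilizer, orbit_eq_iff.mpr (hfin.mem_toFinset.mp hy), sq]
  calc uniformProb {p : G × G | ∃ y ∈ orbit G x, p.1 • y = y ∧ p.2 • y = y}
      ≤ uniformProb (⋃ y ∈ hfin.toFinset, (stabilizer G y : Set G) ×ˢ (stabilizer G y : Set G)) :=
        uniformProb_mono fun p ⟨y, hy, h⟩ ↦ Set.mem_biUnion (hfin.mem_toFinset.mpr hy) h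
    _ ≤ ∑ y ∈ hfin.toFinset, (1 / ((orbit G x).ncard : ℝ)) ^ 2 :=
        (uniformProb_biUnion_le _ _).trans (Finset.sum_le_sum fun y hy ↦ (horbit y hy).le)
    _ = 1 / (orbit G x).ncard := by
        have : ((orbit G x).ncard : ℝ) ≠ 0 :=
          Nat.cast_ne_zero.mpr (Set.ncard_ne_zero_of_mem (mem_orbit_self x) hfin)
        rw [Finset.sum_const, ← Set.ncard_eq_toFinset_card _ hfin]
        simp [sq, this]

end Orbit

section Intransitive

theorem smul_eq_of_mem_closure_pair {G X : Type*} [Group G] [MulAction G X] {σ τ : G} {x : X}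
    (hx : ∀ g : Subgroup.closure {σ, τ}, g • x = x) : σ • x = x ∧ τ • x = x :=
  ⟨hx ⟨σ, Subgroup.subset_closure (by simp)⟩, hx ⟨τ, Subgroup.subset_closure (by simp)⟩⟩

theorem exists_smul_finset_eq_of_not_isPretransitive {G : Type*} [Group G] [MulAction G α]
    [Fintype α] [DecidableEq α] (hG : ¬ IsPretransitive G α) :
    ∃ A : Finset α, A.Nonempty ∧ 2 * A.card ≤ Fintype.card α ∧ ∀ g : G, g • A = A := by
  simp only [isPretransitive_iff, not_forall] at hG
  obtain ⟨a, b, hab⟩ := hG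
  let A : Finset α := (orbit G a).toFinite.toFinset
  have hA (g : G) : g • A = A := by
    apply Finset.coe_injective
    simp [A, Set.Finite.coe_toFinset, smul_orbit]
  have hAc (g : G) : g • Aᶜ = Aᶜ := by
    apply Finset.coe_injective
    rw [Finset.coe_smul_finset, Finset.coe_compl, Set.smul_set_compl, ← Finset.coe_smul_finset, hA]
  have hcard := A.card_add_card_compl
  by_cases h : 2 * A.card ≤ Fintype.card α
  · exact ⟨A, ⟨a, by simp [A]⟩, h, hA⟩
  · exact ⟨Aᶜ, ⟨b, by simpa [A, mem_orbit_iff] using hab⟩, by omega, hAc⟩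

theorem orbit_perm_finset [Fintype α] [DecidableEq α] (A : Finset α) :
    orbit (Perm α) A = (Finset.powersetCard A.card Finset.univ : Finset (Finset α)) := by
  ext B
  rw [Finset.mem_coe, Finset.mem_powersetCard_univ]
  constructor
  · rintro ⟨g, rfl⟩
    exact Finset.card_smul_finset g A
  · intro h
    have := Set.powersetCard.isPretransitive (α := α) (n := A.card)
    obtain ⟨g, hg⟩ := exists_smul_eq (Perm α) (⟨A, rfl⟩ : Set.powersetCard α A.card) ⟨B, h⟩
    exact ⟨g, congrArg Subtype.val hg⟩

theorem uniformProb_not_isPretransitive_le (α : Type*) [Fintype α] :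
    uniformProb {p : Perm α × Perm α | ¬ IsPretransitive (Subgroup.closure {p.1, p.2}) α} ≤
      ∑ i ∈ Finset.Icc 1 (Fintype.card α / 2), 1 / ((Fintype.card α).choose i : ℝ) := by
  classical
  have hsub : {p : Perm α × Perm α | ¬ IsPretransitive (Subgroup.closure {p.1, p.2}) α} ⊆
      ⋃ i ∈ Finset.Icc 1 (Fintype.card α / 2),
        {p | ∃ A : Finset α, A.card = i ∧ p.1 • A = A ∧ p.2 • A = A} := by
    intro p hp
    obtain ⟨A, hA, hcard, hfix⟩ := exists_smul_finset_eq_of_not_isPretransitive hp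
    refine Set.mem_biUnion (x := A.card) ?_ ⟨A, rfl, smul_eq_of_mem_closure_pair hfix⟩
    exact Finset.mem_coe.mpr (Finset.mem_Icc.mpr ⟨hA.card_pos, by omega⟩)
  refine (uniformProb_mono hsub).trans ((uniformProb_biUnion_le _ _).trans
    (Finset.sum_le_sum fun i hi ↦ ?_))
  obtain ⟨A, -, rfl⟩ : ∃ A ⊆ (Finset.univ : Finset α), A.card = i :=
    Finset.exists_subset_card_eq (by rw [Finset.card_univ]; have := Finset.mem_Icc.mp hi; omega)
  have := uniformProb_exists_mem_orbit_fixed_le (G := Perm α) A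
  simpa [orbit_perm_finset, Set.ncard_coe_finset] using this

end Intransitive

theorem sum_one_div_choose_le {n m : ℕ} (hn : 2 ≤ n) (hm : m ≤ n / 2) :
    ∑ i ∈ Finset.Icc 1 m, 1 / (n.choose i : ℝ) ≤ 2 / ((n : ℝ) - 1) := by
  have hn' : (2 : ℝ) ≤ n := by exact_mod_cast hn
  have hm' : (m : ℝ) ≤ n / 2 := (Nat.cast_le.mpr hm).trans Nat.cast_div_le
  have hmono : ∀ i, 2 ≤ i → i ≤ n / 2 → n.choose 2 ≤ n.choose i := by
    intro i hi
    induction i, hi using Nat.le_induction with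
    | base => exact fun _ ↦ le_rfl
    | succ i _ ih =>
      exact fun h ↦ (ih (by omega)).trans (Nat.choose_le_succ_of_lt_half_left (by omega))
  have hpos : (0 : ℝ) < n.choose 2 := by exact_mod_cast Nat.choose_pos hn
  calc ∑ i ∈ Finset.Icc 1 m, 1 / (n.choose i : ℝ)
      ≤ ∑ i ∈ Finset.Icc 1 m, ((if i = 1 then 1 / (n : ℝ) else 0) + 1 / n.choose 2) := by
        refine Finset.sum_le_sum fun i hi ↦ ?_
        rw [Finset.mem_Icc] at hi
        split_ifs with h
        · simp [h]
        · rw [zero_add]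
          gcongr
          exact hmono i (by omega) (by omega)
    _ ≤ 1 / n + m * (1 / n.choose 2) := by
        rw [Finset.sum_add_distrib, Finset.sum_ite_eq', Finset.sum_const, Nat.card_Icc,
          nsmul_eq_mul, Nat.add_sub_cancel]
        gcongr
        split_ifs
        · exact le_rfl
        · positivity
    _ ≤ 1 / (n - 1) + n / 2 * (1 / n.choose 2) := by gcongr <;> linarith
    _ = 2 / ((n : ℝ) - 1) := by
        have : (n : ℝ) - 1 ≠ 0 := by linarith
        rw [Nat.cast_choose_two]
        field_simp
        norm_num

section Imprimitive

/-- `P` is a partition of `α` into parts that all have `d` elements, as are the block systems of a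
transitive group. The partition is encoded as the set of its parts. -/
def IsUniformPartition (d : ℕ) (P : Set (Set α)) : Prop :=
  Setoid.IsPartition P ∧ ∀ B ∈ P, B.ncard = d

variable {d : ℕ} {P Q : Set (Set α)}

theorem IsUniformPartition.existsUnique_part (hP : IsUniformPartition d P) (a : α) :
    ∃! B : P, a ∈ (B : Set α) := by
  obtain ⟨B, ⟨hB, haB⟩, huniq⟩ := hP.1.2 a
  exact ⟨⟨B, hB⟩, haB, fun C haC ↦ Subtype.ext (huniq C ⟨C.2, haC⟩)⟩

theorem IsUniformPartition.ncard_mul [Finite α] (hP : IsUniformPartition d P) :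
    P.ncard * d = Nat.card α := by
  classical
  have := Fintype.ofFinite P
  rw [← Nat.card_congr (Set.sigmaEquiv (fun B : P ↦ (B : Set α)) hP.existsUnique_part),
    Nat.card_sigma,
    Finset.sum_congr rfl fun (B : P) _ ↦ (Nat.card_coe_set_eq _).trans (hP.2 B B.2),
    Finset.sum_const, Finset.card_univ, ← Nat.card_eq_fintype_card, Nat.card_coe_set_eq,
    smul_eq_mul]

theorem IsUniformPartition.mem_orbit [Finite α] (hd : 0 < d) (hP : IsUniformPartition d P)
    (hQ : IsUniformPartition d Q) : Q ∈ orbit (Perm α) P := by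
  have hcard : P.ncard = Q.ncard :=
    Nat.eq_of_mul_eq_mul_right hd (hP.ncard_mul.trans hQ.ncard_mul.symm)
  obtain ⟨e⟩ : Nonempty (P ≃ Q) := Finite.card_eq.mp hcard
  have f (B : P) : (B : Set α) ≃ (e B : Set α) :=
    (Finite.card_eq.mp ((hP.2 B B.2).trans (hQ.2 _ (e B).2).symm)).some
  let u := Set.sigmaEquiv (fun B : P ↦ (B : Set α)) hP.existsUnique_part
  let v := Set.sigmaEquiv (fun B : Q ↦ (B : Set α)) hQ.existsUnique_part
  let g : Perm α := u.symm.trans ((Equiv.sigmaCongr e f).trans v)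
  have hg (B : P) : g • (B : Set α) = e B := by
    refine Set.eq_of_subset_of_ncard_le ?_ ?_
    · rintro _ ⟨x, hx, rfl⟩
      have hux : u.symm x = ⟨B, x, hx⟩ := u.symm_apply_eq.mpr rfl
      change v (Equiv.sigmaCongr e f (u.symm x)) ∈ (e B : Set α)
      rw [hux]
      exact (f B ⟨x, hx⟩).2
    · rw [Set.ncard_smul_set, hP.2 B B.2, hQ.2 _ (e B).2]
  refine ⟨g, Set.eq_of_subset_of_ncard_le ?_ (by rw [Set.ncard_smul_set, hcard])⟩
  rintro _ ⟨B, hB, rfl⟩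
  exact Set.mem_of_eq_of_mem (hg ⟨B, hB⟩) (e ⟨B, hB⟩).2

-- Fix a point: every `d`-subset through it is a part of a conjugate of `P`, and different
-- `d`-subsets through it are parts of different conjugates.
theorem IsUniformPartition.choose_le_ncard_orbit [Fintype α] (hd : 0 < d) (hα : 0 < Fintype.card α)
    (hP : IsUniformPartition d P) :
    (Fintype.card α - 1).choose (d - 1) ≤ (orbit (Perm α) P).ncard := by
  classical
  obtain ⟨a⟩ := Fintype.card_pos_iff.mp hα
  obtain ⟨⟨B₀, hB₀⟩, -, -⟩ := hP.existsUnique_part a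
  have hconj : ∀ s ∈ Finset.powersetCard (d - 1) (Finset.univ.erase a),
      ∃ g : Perm α, ((insert a s : Finset α) : Set α) ∈ g • P := by
    intro s hs
    obtain ⟨hsa, hscard⟩ := Finset.mem_powersetCard.mp hs
    have hcard : (insert a s).card = B₀.toFinite.toFinset.card := by
      rw [Finset.card_insert_of_notMem fun h ↦ Finset.notMem_erase a _ (hsa h), hscard,
        Nat.sub_add_cancel hd, ← Set.ncard_eq_toFinset_card, hP.2 B₀ hB₀]
    have hmem : insert a s ∈ orbit (Perm α) B₀.toFinite.toFinset := by
      rw [orbit_perm_finset, Finset.mem_coe, Finset.mem_powersetCard_univ, hcard]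
    obtain ⟨g, hg⟩ := hmem
    exact ⟨g, B₀, hB₀, by simp [← hg, Finset.coe_smul_finset]⟩
  choose! g hg using hconj
  rw [← Finset.card_univ, ← Finset.card_erase_of_mem (Finset.mem_univ a),
    ← Finset.card_powersetCard, ← Set.ncard_coe_finset]
  refine Set.ncard_le_ncard_of_injOn (fun s ↦ g s • P) (fun s _ ↦ MulAction.mem_orbit P (g s)) ?_
  intro s hs t ht hst
  have hpart (u : Finset α) (hu : ((insert a u : Finset α) : Set α) ∈ g s • P) :
      (g s)⁻¹ • ((insert a u : Finset α) : Set α) ∈ P ∧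
        (g s)⁻¹ • a ∈ (g s)⁻¹ • ((insert a u : Finset α) : Set α) :=
    ⟨Set.mem_smul_set_iff_inv_smul_mem.mp hu, Set.smul_mem_smul_set (by simp)⟩
  have hinsert : insert a s = insert a t := Finset.coe_injective <|
    smul_left_cancel _ ((hP.1.2 ((g s)⁻¹ • a)).unique (hpart s (hg s hs)) (hpart t
      ((show g s • P = g t • P from hst) ▸ hg t ht)))
  have hnot (u : Finset α) (hu : u ∈ Finset.powersetCard (d - 1) (Finset.univ.erase a)) : a ∉ u :=
    fun h ↦ Finset.notMem_erase a _ ((Finset.mem_powersetCard.mp hu).1 h)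
  rw [← Finset.erase_insert (hnot s hs), hinsert, Finset.erase_insert (hnot t ht)]

theorem exists_isUniformPartition_of_not_isPreprimitive {G : Type*} [Group G] [MulAction G α]
    [Finite α] [IsPretransitive G α] (hG : ¬ IsPreprimitive G α) :
    ∃ (d : ℕ) (P : Set (Set α)), 2 ≤ d ∧ 2 * d ≤ Nat.card α ∧ IsUniformPartition d P ∧
      ∀ g : G, g • P = P := by
  obtain ⟨B, hB, hBtriv⟩ : ∃ B : Set α, IsBlock G B ∧ ¬ IsTrivialBlock B := by
    by_contra! h
    exact hG ⟨fun {B} hB ↦ h B hB⟩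
  obtain ⟨hsub, huniv⟩ := not_or.mp hBtriv
  have hBne : B.Nonempty := Set.nonempty_iff_ne_empty.mpr fun h ↦ hsub (h ▸ Set.subsingleton_empty)
  have htwo : 2 ≤ B.ncard := Nat.lt_of_not_le fun h ↦ hsub (Set.ncard_le_one_iff_subsingleton.mp h)
  have hcard : 2 * B.ncard ≤ Nat.card α := by
    obtain ⟨m, hm⟩ := hB.ncard_dvd_card hBne
    have hm_one : m ≠ 1 := fun h ↦ huniv (B.eq_univ_iff_ncard.mpr (by rw [hm, h, mul_one]))
    have : Nat.card α ≠ 0 := Nat.card_ne_zero.mpr ⟨⟨hBne.some⟩, inferInstance⟩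
    have hm_zero : m ≠ 0 := fun h ↦ this (by rw [hm, h, mul_zero])
    rw [hm, mul_comm]
    exact Nat.mul_le_mul_left _ (by omega)
  refine ⟨B.ncard, orbit G B, htwo, hcard, ⟨(hB.isBlockSystem hBne).1, ?_⟩, fun g ↦ smul_orbit g B⟩
  rintro _ ⟨g, rfl⟩
  exact Set.ncard_smul_set g B

theorem uniformProb_fixed_isUniformPartition_le [Fintype α] (hd : 0 < d)
    (hdα : d ≤ Fintype.card α) :
    uniformProb {p : Perm α × Perm α |
        ∃ P : Set (Set α), IsUniformPartition d P ∧ p.1 • P = P ∧ p.2 • P = P} ≤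
      1 / ((Fintype.card α - 1).choose (d - 1) : ℝ) := by
  by_cases h : ∃ P : Set (Set α), IsUniformPartition d P
  · obtain ⟨P, hP⟩ := h
    calc uniformProb {p : Perm α × Perm α |
          ∃ P : Set (Set α), IsUniformPartition d P ∧ p.1 • P = P ∧ p.2 • P = P}
        ≤ uniformProb {p : Perm α × Perm α |
            ∃ Q ∈ orbit (Perm α) P, p.1 • Q = Q ∧ p.2 • Q = Q} :=
          uniformProb_mono fun _ ⟨Q, hQ, hfix⟩ ↦ ⟨Q, hP.mem_orbit hd hQ, hfix⟩
      _ ≤ 1 / (orbit (Perm α) P).ncard := uniformProb_exists_mem_orbit_fixed_le P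
      _ ≤ _ := by
          gcongr
          · exact_mod_cast Nat.choose_pos (by omega)
          · exact hP.choose_le_ncard_orbit hd (hd.trans_le hdα)
  · have hempty : {p : Perm α × Perm α |
        ∃ P : Set (Set α), IsUniformPartition d P ∧ p.1 • P = P ∧ p.2 • P = P} = ∅ :=
      Set.eq_empty_of_forall_notMem fun p ⟨P, hP, _⟩ ↦ h ⟨P, hP⟩
    simp only [hempty, uniformProb, Set.ncard_empty, Nat.cast_zero, zero_div]
    positivity

theorem uniformProb_isPretransitive_not_isPreprimitive_le (α : Type*) [Fintype α] :
    uniformProb {p : Perm α × Perm α | IsPretransitive (Subgroup.closure {p.1, p.2}) α ∧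
        ¬ IsPreprimitive (Subgroup.closure {p.1, p.2}) α} ≤
      ∑ j ∈ Finset.Icc 1 ((Fintype.card α - 1) / 2),
        1 / ((Fintype.card α - 1).choose j : ℝ) := by
  have hsub : {p : Perm α × Perm α | IsPretransitive (Subgroup.closure {p.1, p.2}) α ∧
        ¬ IsPreprimitive (Subgroup.closure {p.1, p.2}) α} ⊆
      ⋃ j ∈ Finset.Icc 1 ((Fintype.card α - 1) / 2), {p |
        ∃ P : Set (Set α), IsUniformPartition (j + 1) P ∧ p.1 • P = P ∧ p.2 • P = P} := by
    rintro p ⟨htrans, hprim⟩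
    obtain ⟨d, P, hd, hdα, hP, hfix⟩ := exists_isUniformPartition_of_not_isPreprimitive hprim
    rw [Nat.card_eq_fintype_card] at hdα
    refine Set.mem_biUnion (x := d - 1) ?_ ⟨P, ?_, smul_eq_of_mem_closure_pair hfix⟩
    · exact Finset.mem_coe.mpr (Finset.mem_Icc.mpr (by omega))
    · rwa [Nat.sub_add_cancel (by omega)]
  refine (uniformProb_mono hsub).trans ((uniformProb_biUnion_le _ _).trans
    (Finset.sum_le_sum fun j hj ↦ ?_))
  have := Finset.mem_Icc.mp hj
  exact uniformProb_fixed_isUniformPartition_le j.succ_pos (by omega)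

end Imprimitive

theorem uniformProb_not_isPreprimitive_le (α : Type*) [Fintype α] (hα : 3 ≤ Fintype.card α) :
    uniformProb {p : Perm α × Perm α | ¬ IsPreprimitive (Subgroup.closure {p.1, p.2}) α} ≤
      2 / (Fintype.card α - 1 : ℝ) + 2 / (Fintype.card α - 2 : ℝ) := by
  have hsub : {p : Perm α × Perm α | ¬ IsPreprimitive (Subgroup.closure {p.1, p.2}) α} ⊆
      {p | ¬ IsPretransitive (Subgroup.closure {p.1, p.2}) α} ∪
        {p | IsPretransitive (Subgroup.closure {p.1, p.2}) α ∧
          ¬ IsPreprimitive (Subgroup.closure {p.1, p.2}) α} :=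
    fun p hp ↦ (em' _).imp_right fun h ↦ ⟨h, hp⟩
  have himprim : ∑ j ∈ Finset.Icc 1 ((Fintype.card α - 1) / 2),
      1 / ((Fintype.card α - 1).choose j : ℝ) ≤ 2 / (Fintype.card α - 2 : ℝ) := by
    refine (sum_one_div_choose_le (by omega) le_rfl).trans_eq ?_
    rw [Nat.cast_sub (by omega)]
    ring
  calc _ ≤ _ := (uniformProb_mono hsub).trans (uniformProb_union_le _ _)
    _ ≤ _ := add_le_add
      ((uniformProb_not_isPretransitive_le α).trans (sum_one_div_choose_le (by omega) le_rfl))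
      ((uniformProb_isPretransitive_not_isPreprimitive_le α).trans himprim)

section CycleType

variable {α β : Type*} [Fintype α] [DecidableEq α]

theorem disjoint_extendDomain (c : Perm α) (e : β ≃ {x // x ∉ c.support}) (ρ : Perm β) :
    c.Disjoint (ρ.extendDomain e) := fun x ↦ by
  by_cases hx : x ∈ c.support
  · exact .inr (ρ.extendDomain_apply_not_subtype e (not_not.mpr hx))
  · exact .inl (notMem_support.mp hx)

theorem mem_cycleFactorsFinset_iff_exists_extendDomain {c σ : Perm α} (hc : c.IsCycle)
    (e : β ≃ {x // x ∉ c.support}) :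
    c ∈ σ.cycleFactorsFinset ↔ ∃ ρ : Perm β, c * ρ.extendDomain e = σ := by
  refine ⟨fun h ↦ ?_, ?_⟩
  · have hdisj := disjoint_mul_inv_of_mem_cycleFactorsFinset h
    obtain ⟨ρ, hρ⟩ : σ * c⁻¹ ∈ (ofSubtype (p := (· ∉ c.support))).range :=
      mem_range_ofSubtype_iff.mpr fun x hx ↦
        Finset.disjoint_left.mp hdisj.disjoint_support (Finset.mem_coe.mp hx)
    have hext : (e.symm.permCongr ρ).extendDomain e = ofSubtype ρ :=
      congrArg (Equiv.Perm.subtypeCongr · 1) (e.permCongr.apply_symm_apply ρ)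
    exact ⟨e.symm.permCongr ρ, by rw [hext, hρ, ← hdisj.commute.eq, inv_mul_cancel_right]⟩
  · rintro ⟨ρ, rfl⟩
    rw [(disjoint_extendDomain c e ρ).cycleFactorsFinset_mul_eq_union,
      hc.cycleFactorsFinset_eq_singleton]
    exact Finset.mem_union_left _ (Finset.mem_singleton_self c)

theorem sum_mem_cycleFactorsFinset [Fintype β] [DecidableEq β] {c : Perm α} (hc : c.IsCycle)
    (e : β ≃ {x // x ∉ c.support}) (f : Multiset ℕ → ℝ) :
    ∑ σ : Perm α with c ∈ σ.cycleFactorsFinset, f (σ.cycleType.erase c.support.card) =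
      ∑ ρ : Perm β, f ρ.cycleType := by
  have himage : ({σ | c ∈ σ.cycleFactorsFinset} : Finset (Perm α)) =
      Finset.univ.image fun ρ : Perm β ↦ c * ρ.extendDomain e := by
    ext σ
    simp only [Finset.mem_filter, Finset.mem_univ, true_and, Finset.mem_image,
      mem_cycleFactorsFinset_iff_exists_extendDomain hc e]
  have hinj : Function.Injective fun ρ : Perm β ↦ c * ρ.extendDomain e :=
    (mul_right_injective c).comp (extendDomainHom_injective e)
  rw [himage, Finset.sum_image hinj.injOn]
  refine Finset.sum_congr rfl fun ρ _ ↦ ?_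
  rw [(disjoint_extendDomain c e ρ).cycleType_mul, hc.cycleType, cycleType_extendDomain,
    Multiset.singleton_add, Multiset.erase_cons_head]

theorem cycleType_eq_singleton_iff {c : Perm α} {p : ℕ} :
    c.cycleType = {p} ↔ c.IsCycle ∧ c.support.card = p := by
  refine ⟨fun h ↦ ⟨?_, ?_⟩, fun ⟨hc, hp⟩ ↦ hp ▸ hc.cycleType⟩
  · rw [← card_cycleType_eq_one, h, Multiset.card_singleton]
  · rw [← sum_cycleType, h, Multiset.sum_singleton]

theorem count_cycleType (σ : Perm α) (p : ℕ) :
    σ.cycleType.count p =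
      Finset.card {c : Perm α | c.cycleType = {p} ∧ c ∈ σ.cycleFactorsFinset} := by
  rw [cycleType_def, Multiset.count_map, ← Finset.filter_val, Finset.card_val]
  congr 1
  ext c
  simp only [Finset.mem_filter, Finset.mem_univ, true_and, cycleType_eq_singleton_iff,
    Function.comp_apply, eq_comm (a := p)]
  exact ⟨fun h ↦ ⟨⟨(mem_cycleFactorsFinset_iff.mp h.1).1, h.2⟩, h.1⟩, fun h ↦ ⟨h.2, h.1.2⟩⟩

theorem sum_count_mul_erase (p : ℕ) (f : Multiset ℕ → ℝ) :
    ∑ σ : Perm α, σ.cycleType.count p * f (σ.cycleType.erase p) =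
      Finset.card {c : Perm α | c.cycleType = {p}} *
        ∑ ρ : Perm (Fin (Fintype.card α - p)), f ρ.cycleType := by
  have hfiber : ∀ c ∈ ({c | c.cycleType = {p}} : Finset (Perm α)),
      ∑ σ : Perm α with c ∈ σ.cycleFactorsFinset, f (σ.cycleType.erase p) =
        ∑ ρ : Perm (Fin (Fintype.card α - p)), f ρ.cycleType := fun c hc ↦ by
    obtain ⟨hcyc, hcard⟩ := cycleType_eq_singleton_iff.mp (Finset.mem_filter.mp hc).2
    have e : Fin (Fintype.card α - p) ≃ {x // x ∉ c.support} :=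
      (Fintype.equivFinOfCardEq
        (by rw [Fintype.card_subtype_compl, Fintype.card_coe, hcard])).symm
    simpa only [hcard] using sum_mem_cycleFactorsFinset hcyc e f
  calc ∑ σ : Perm α, σ.cycleType.count p * f (σ.cycleType.erase p)
      = ∑ σ : Perm α, ∑ c : Perm α with c.cycleType = {p} ∧ c ∈ σ.cycleFactorsFinset,
          f (σ.cycleType.erase p) := by
        simp only [count_cycleType, Finset.sum_const, nsmul_eq_mul]
    _ = ∑ c : Perm α with c.cycleType = {p}, ∑ σ : Perm α with c ∈ σ.cycleFactorsFinset,
          f (σ.cycleType.erase p) :=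
        Finset.sum_comm' fun σ c ↦ by
          simp only [Finset.mem_filter, Finset.mem_univ, true_and, and_comm]
    _ = _ := by rw [Finset.sum_congr rfl hfiber, Finset.sum_const, nsmul_eq_mul]

theorem expect_count_mul_erase {p : ℕ} (hp : 2 ≤ p) (hpα : p ≤ Fintype.card α)
    (f : Multiset ℕ → ℝ) :
    𝔼 σ : Perm α, σ.cycleType.count p * f (σ.cycleType.erase p) =
      (p : ℝ)⁻¹ * 𝔼 ρ : Perm (Fin (Fintype.card α - p)), f ρ.cycleType := by
  simp only [Fintype.expect_eq_sum_div_card, sum_count_mul_erase,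
    card_of_cycleType_singleton hp hpα, Fintype.card_perm, Fintype.card_fin]
  have hfact : (Fintype.card α)! =
      p * ((p - 1)! * (Fintype.card α).choose p) * (Fintype.card α - p)! := by
    rw [← Nat.choose_mul_factorial_mul_factorial hpα, ← Nat.mul_factorial_pred (n := p) (by lia)]
    ring
  have hchoose : ((Fintype.card α).choose p : ℝ) ≠ 0 :=
    Nat.cast_ne_zero.mpr (Nat.choose_pos hpα).ne'
  rw [hfact]
  push_cast
  field_simp

theorem expect_count {p : ℕ} (hp : 2 ≤ p) (hpα : p ≤ Fintype.card α) :
    𝔼 σ : Perm α, (σ.cycleType.count p : ℝ) = (p : ℝ)⁻¹ := by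
  simpa [Fintype.expect_const] using expect_count_mul_erase (α := α) hp hpα fun _ ↦ 1

theorem expect_count_le {p : ℕ} (hp : 2 ≤ p) :
    𝔼 σ : Perm α, (σ.cycleType.count p : ℝ) ≤ (p : ℝ)⁻¹ := by
  rcases le_or_gt p (Fintype.card α) with hpα | hpα
  · exact (expect_count hp hpα).le
  · have hzero (σ : Perm α) : σ.cycleType.count p = 0 := Multiset.count_eq_zero.mpr fun h ↦
      hpα.not_ge ((le_card_support_of_mem_cycleType h).trans (Finset.card_le_univ _))
    simp only [hzero, Nat.cast_zero, Finset.expect_const_zero]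
    positivity

theorem expect_count_mul_count_erase_le {p q : ℕ} (hp : 2 ≤ p) (hpα : p ≤ Fintype.card α)
    (hq : 2 ≤ q) :
    𝔼 σ : Perm α, (σ.cycleType.count p : ℝ) * (σ.cycleType.erase p).count q ≤
      (p : ℝ)⁻¹ * (q : ℝ)⁻¹ := by
  rw [expect_count_mul_erase hp hpα fun m ↦ (m.count q : ℝ)]
  gcongr
  exact expect_count_le hq

theorem exists_pow_isCycle {σ : Perm α} {p : ℕ} (hp : p.Prime) (hmem : p ∈ σ.cycleType)
    (hndvd : ∀ m ∈ σ.cycleType.erase p, ¬ p ∣ m) :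
    ∃ k : ℕ, (σ ^ k).IsCycle ∧ (σ ^ k).support.card = p := by
  obtain ⟨c, τ, rfl, hdisj, hc, rfl⟩ := mem_cycleType_iff.mp hmem
  rw [hdisj.cycleType_mul, hc.cycleType, Multiset.singleton_add, Multiset.erase_cons_head]
    at hndvd
  have hcop : (orderOf τ).Coprime (orderOf c) := by
    rw [hc.orderOf, Nat.coprime_comm, hp.coprime_iff_not_dvd, ← lcm_cycleType]
    intro hdvd
    have hprod : τ.cycleType.lcm ∣ τ.cycleType.prod :=
      Multiset.lcm_dvd.mpr fun _ ↦ Multiset.dvd_prod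
    obtain ⟨m, hm, hpm⟩ := hp.prime.exists_mem_multiset_dvd (hdvd.trans hprod)
    exact hndvd m hm hpm
  have hpow : (c * τ) ^ orderOf τ = c ^ orderOf τ := by
    rw [hdisj.commute.mul_pow, pow_orderOf_eq_one, mul_one]
  refine ⟨orderOf τ, hpow ▸ hc.pow_iff.mpr hcop, ?_⟩
  rw [hpow, support_pow_coprime hcop]

theorem count_mul_count (m : Multiset ℕ) (p q : ℕ) :
    m.count p * m.count q = m.count p * (m.erase p).count q + if p = q then m.count p else 0 := by
  split_ifs with h
  · subst q
    rw [Multiset.count_erase_self]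
    rcases (m.count p).eq_zero_or_pos with h0 | h0
    · simp only [h0, zero_mul, zero_add]
    · nth_rw 2 [← Nat.sub_add_cancel h0]
      ring
  · rw [Multiset.count_erase_of_ne (Ne.symm h), add_zero]

section PrimeCycles

variable {P : Finset ℕ}

theorem expect_sq_sum_count_le (hP : ∀ p ∈ P, 2 ≤ p ∧ p ≤ Fintype.card α) :
    𝔼 σ : Perm α, (∑ p ∈ P, (σ.cycleType.count p : ℝ)) ^ 2 ≤
      (∑ p ∈ P, (p : ℝ)⁻¹) ^ 2 + ∑ p ∈ P, (p : ℝ)⁻¹ := by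
  have hsq (m : Multiset ℕ) : (∑ p ∈ P, (m.count p : ℝ)) ^ 2 =
      ∑ p ∈ P, ∑ q ∈ P, (m.count p : ℝ) * (m.erase p).count q + ∑ p ∈ P, (m.count p : ℝ) := by
    rw [sq, Finset.sum_mul_sum, ← Finset.sum_add_distrib]
    refine Finset.sum_congr rfl fun p hp ↦ ?_
    simp only [← Nat.cast_mul, count_mul_count m p, Nat.cast_add, Finset.sum_add_distrib,
      Nat.cast_ite, Nat.cast_zero, Finset.sum_ite_eq, if_pos hp]
  simp only [hsq, Finset.expect_add_distrib, Finset.expect_sum_comm]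
  rw [sq, Finset.sum_mul_sum]
  gcongr with p hp q hq p hp
  · exact expect_count_mul_count_erase_le (hP p hp).1 (hP p hp).2 (hP q hq).1
  · exact expect_count_le (hP p hp).1

theorem expect_sq_sum_count_sub_le (hP : ∀ p ∈ P, 2 ≤ p ∧ p ≤ Fintype.card α) :
    𝔼 σ : Perm α, (∑ p ∈ P, (σ.cycleType.count p : ℝ) - ∑ p ∈ P, (p : ℝ)⁻¹) ^ 2 ≤
      ∑ p ∈ P, (p : ℝ)⁻¹ := by
  have hmean : 𝔼 σ : Perm α, ∑ p ∈ P, (σ.cycleType.count p : ℝ) = ∑ p ∈ P, (p : ℝ)⁻¹ := by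
    rw [Finset.expect_sum_comm]
    exact Finset.sum_congr rfl fun p hp ↦ expect_count (hP p hp).1 (hP p hp).2
  have hsecond := expect_sq_sum_count_le hP
  set μ := ∑ p ∈ P, (p : ℝ)⁻¹
  simp only [sub_sq, Finset.expect_add_distrib, Finset.expect_sub_distrib, ← Finset.expect_mul,
    ← Finset.mul_expect, Fintype.expect_const, hmean]
  linarith

theorem uniformProb_notMem_cycleType_le (hP : ∀ p ∈ P, 2 ≤ p ∧ p ≤ Fintype.card α)
    (hne : P.Nonempty) :
    uniformProb {σ : Perm α | ∀ p ∈ P, p ∉ σ.cycleType} ≤ (∑ p ∈ P, (p : ℝ)⁻¹)⁻¹ := by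
  have hvar := expect_sq_sum_count_sub_le hP
  set μ := ∑ p ∈ P, (p : ℝ)⁻¹
  have hμ : 0 < μ := Finset.sum_pos
    (fun p hp ↦ inv_pos.mpr (Nat.cast_pos.mpr (by linarith [(hP p hp).1]))) hne
  calc uniformProb {σ : Perm α | ∀ p ∈ P, p ∉ σ.cycleType}
      ≤ uniformProb {σ : Perm α |
          1 ≤ (∑ p ∈ P, (σ.cycleType.count p : ℝ) - μ) ^ 2 / μ ^ 2} := by
        refine uniformProb_mono fun σ hσ ↦ ?_
        have hzero : ∑ p ∈ P, (σ.cycleType.count p : ℝ) = 0 := Finset.sum_eq_zero fun p hp ↦ by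
          rw [Multiset.count_eq_zero.mpr (hσ p hp), Nat.cast_zero]
        rw [Set.mem_ofPred_eq, hzero, zero_sub, neg_sq, div_self (by positivity)]
    _ ≤ 𝔼 σ : Perm α, (∑ p ∈ P, (σ.cycleType.count p : ℝ) - μ) ^ 2 / μ ^ 2 :=
        uniformProb_one_le_le_expect fun _ ↦ by positivity
    _ ≤ μ / μ ^ 2 := by
        rw [← Finset.expect_div]
        gcongr
    _ = μ⁻¹ := by field_simp

theorem uniformProb_dvd_mem_erase_cycleType_le (hP : ∀ p ∈ P, 2 ≤ p ∧ p ≤ Fintype.card α) :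
    uniformProb {σ : Perm α | ∃ p ∈ P, p ∈ σ.cycleType ∧ ∃ m ∈ σ.cycleType.erase p, p ∣ m} ≤
      (∑ p ∈ P, ((p : ℝ) ^ 2)⁻¹) * harmonic (Fintype.card α) := by
  set I := Finset.Icc 1 (Fintype.card α)
  let X (σ : Perm α) : ℝ := ∑ p ∈ P, ∑ j ∈ I,
    (σ.cycleType.count p : ℝ) * (σ.cycleType.erase p).count (p * j)
  calc _ ≤ uniformProb {σ : Perm α | 1 ≤ X σ} := by
        refine uniformProb_mono fun σ ⟨p, hpP, hp, m, hm, j, hj⟩ ↦ ?_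
        have hm0 : 0 < m := by
          linarith [two_le_of_mem_cycleType (Multiset.mem_of_mem_erase hm)]
        have hmα : m ≤ Fintype.card α :=
          (le_card_support_of_mem_cycleType (Multiset.mem_of_mem_erase hm)).trans
            (Finset.card_le_univ _)
        have hjI : j ∈ I := Finset.mem_Icc.mpr
          ⟨Nat.pos_of_ne_zero fun h ↦ by simp [hj, h] at hm0,
            (Nat.le_mul_of_pos_left j (by linarith [(hP p hpP).1])).trans (hj ▸ hmα)⟩
        have hterm : (1 : ℝ) ≤ σ.cycleType.count p * (σ.cycleType.erase p).count (p * j) := by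
          exact_mod_cast Nat.mul_pos (Multiset.count_pos.mpr hp)
            (Multiset.count_pos.mpr (hj ▸ hm))
        refine hterm.trans (le_trans ?_ (Finset.single_le_sum (f := fun p ↦ ∑ j ∈ I,
          (σ.cycleType.count p : ℝ) * (σ.cycleType.erase p).count (p * j))
          (fun _ _ ↦ by positivity) hpP))
        exact Finset.single_le_sum (f := fun j ↦
          (σ.cycleType.count p : ℝ) * (σ.cycleType.erase p).count (p * j))
          (fun _ _ ↦ by positivity) hjI
    _ ≤ 𝔼 σ : Perm α, X σ := uniformProb_one_le_le_expect fun _ ↦ by positivity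
    _ ≤ ∑ p ∈ P, ∑ j ∈ I, (p : ℝ)⁻¹ * ((p * j : ℕ) : ℝ)⁻¹ := by
        simp only [X, Finset.expect_sum_comm]
        gcongr with p hp j hj
        have hj1 := (Finset.mem_Icc.mp hj).1
        exact expect_count_mul_count_erase_le (hP p hp).1 (hP p hp).2 (by nlinarith [(hP p hp).1])
    _ = (∑ p ∈ P, ((p : ℝ) ^ 2)⁻¹) * harmonic (Fintype.card α) := by
        simp only [harmonic_eq_sum_Icc, Rat.cast_sum, Rat.cast_inv, Rat.cast_natCast,
          Finset.sum_mul_sum, Nat.cast_mul, mul_inv, sq, mul_assoc, I]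

end PrimeCycles

end CycleType

section Primes

theorem harmonic_le_prod_primesLE (n : ℕ) :
    (harmonic n : ℝ) ≤ ∏ p ∈ n.primesLE, (1 - (p : ℝ)⁻¹)⁻¹ := by
  let f : ℕ →* ℝ :=
    (invMonoidWithZeroHom.comp (Nat.castRingHom ℝ).toMonoidWithZeroHom).toMonoidHom
  have hf (j : ℕ) : f j = (j : ℝ)⁻¹ := rfl
  have hnorm {p : ℕ} (hp : p.Prime) : ‖f p‖ < 1 := by
    rw [hf, norm_inv, Real.norm_natCast]
    exact inv_lt_one_of_one_lt₀ (by exact_mod_cast hp.one_lt)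
  have hsmooth : ∀ j ∈ Finset.Icc 1 n, j ∈ Nat.smoothNumbers (n + 1) := fun j hj ↦ by
    rw [Finset.mem_Icc] at hj
    exact Nat.mem_smoothNumbers_of_lt (by lia) (by lia)
  have hEuler :=
    (EulerProduct.summable_and_hasSum_smoothNumbers_prod_primesBelow_geometric hnorm (n + 1)).2
  calc (harmonic n : ℝ) = ∑ j ∈ Finset.Icc 1 n, f j := by
        simp only [harmonic_eq_sum_Icc, Rat.cast_sum, Rat.cast_inv, Rat.cast_natCast, hf]
    _ = ∑ j ∈ (Finset.Icc 1 n).subtype (· ∈ Nat.smoothNumbers (n + 1)), f j :=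
        (Finset.sum_subtype_of_mem _ hsmooth).symm
    _ ≤ ∏ p ∈ n.primesLE, (1 - f p)⁻¹ :=
        sum_le_hasSum _ (fun j _ ↦ by rw [hf]; positivity) hEuler

theorem inv_one_sub_inv_le_exp {x : ℝ} (hx : 2 ≤ x) :
    (1 - x⁻¹)⁻¹ ≤ Real.exp (x⁻¹ + 2 * (x ^ 2)⁻¹) := by
  refine le_trans ?_ (Real.add_one_le_exp _)
  have key : (x⁻¹ + 2 * (x ^ 2)⁻¹ + 1) * (1 - x⁻¹) - 1 = (x ^ 3)⁻¹ * (x - 2) := by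
    field_simp
    ring
  have hpos : 0 < 1 - x⁻¹ := sub_pos.mpr (inv_lt_one_of_one_lt₀ (by linarith))
  rw [inv_le_iff_one_le_mul₀ hpos]
  have : 0 ≤ (x ^ 3)⁻¹ * (x - 2) := mul_nonneg (by positivity) (by linarith)
  linarith

theorem log_log_le_sum_primesLE_inv (n : ℕ) :
    Real.log (Real.log (n + 1)) ≤ ∑ p ∈ n.primesLE, (p : ℝ)⁻¹ + 2 := by
  rcases n.eq_zero_or_pos with rfl | hn
  · simp
  have hsq : ∑ p ∈ n.primesLE, ((p : ℝ) ^ 2)⁻¹ ≤ 1 :=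
    calc ∑ p ∈ n.primesLE, ((p : ℝ) ^ 2)⁻¹ ≤ ∑ p ∈ Finset.Ioc 1 n, ((p : ℝ) ^ 2)⁻¹ :=
          Finset.sum_le_sum_of_subset_of_nonneg
            (fun p hp ↦ Finset.mem_Ioc.mpr
              ⟨Nat.one_lt_of_mem_primesLE hp, Nat.le_of_mem_primesLE hp⟩)
            (fun _ _ _ ↦ by positivity)
      _ ≤ ((1 : ℕ) : ℝ)⁻¹ - (n : ℝ)⁻¹ := sum_Ioc_inv_sq_le_sub one_ne_zero hn
      _ ≤ 1 := by simp
  have hlog : 0 < Real.log (n + 1) := Real.log_pos (by simpa using hn)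
  rw [Real.log_le_iff_le_exp hlog]
  calc Real.log (n + 1) ≤ harmonic n := by exact_mod_cast log_add_one_le_harmonic n
    _ ≤ ∏ p ∈ n.primesLE, (1 - (p : ℝ)⁻¹)⁻¹ := harmonic_le_prod_primesLE n
    _ ≤ ∏ p ∈ n.primesLE, Real.exp ((p : ℝ)⁻¹ + 2 * ((p : ℝ) ^ 2)⁻¹) := by
        have htwo : ∀ p ∈ n.primesLE, (2 : ℝ) ≤ p := fun p hp ↦ by
          exact_mod_cast Nat.two_le_of_mem_primesLE hp
        refine Finset.prod_le_prod (fun p hp ↦ ?_) fun p hp ↦ inv_one_sub_inv_le_exp (htwo p hp)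
        exact inv_nonneg.mpr (sub_nonneg.mpr (inv_le_one_of_one_le₀ (by linarith [htwo p hp])))
    _ = Real.exp (∑ p ∈ n.primesLE, (p : ℝ)⁻¹ + 2 * ∑ p ∈ n.primesLE, ((p : ℝ) ^ 2)⁻¹) := by
        rw [← Real.exp_sum, Finset.sum_add_distrib, Finset.mul_sum]
    _ ≤ Real.exp (∑ p ∈ n.primesLE, (p : ℝ)⁻¹ + 2) := by gcongr; linarith

-- Keeping only the odd numbers halves the trivial bound `log n`.
theorem sum_primesLE_two_mul_inv_le {n : ℕ} (hn : n ≠ 0) :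
    ∑ p ∈ (2 * n).primesLE, (p : ℝ)⁻¹ ≤ (1 + Real.log (2 * n - 1)) / 2 := by
  induction n, Nat.one_le_iff_ne_zero.mpr hn using Nat.le_induction with
  | base =>
    have : Nat.primesLE (2 * 1) = {2} := by decide
    norm_num [this]
  | succ m hm ih =>
    have hm1 : (1 : ℝ) ≤ m := by exact_mod_cast hm
    have hnot : ¬ (2 * m + 1 + 1).Prime := fun h ↦ by
      have := h.eq_one_or_self_of_dvd 2 ⟨m + 1, by ring⟩
      lia
    have hodd : ∑ p ∈ (2 * (m + 1)).primesLE, (p : ℝ)⁻¹ ≤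
        ∑ p ∈ (2 * m).primesLE, (p : ℝ)⁻¹ + (2 * m + 1 : ℝ)⁻¹ := by
      have hsub : (2 * (m + 1)).primesLE ⊆ insert (2 * m + 1) (2 * m).primesLE := fun p hp ↦ by
        rw [Nat.mem_primesLE] at hp
        rw [Finset.mem_insert, Nat.mem_primesLE]
        by_cases h : p = 2 * m + 1 + 1
        · exact absurd (h ▸ hp.2) hnot
        · exact (eq_or_ne p (2 * m + 1)).imp_right fun h' ↦ ⟨by lia, hp.2⟩
      refine (Finset.sum_le_sum_of_subset_of_nonneg hsub fun _ _ _ ↦ by positivity).trans_eq ?_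
      rw [Finset.sum_insert (by simp [Nat.mem_primesLE])]
      push_cast
      ring
    have hlog : 2 * (2 * m + 1 : ℝ)⁻¹ ≤ Real.log (2 * m + 1) - Real.log (2 * m - 1) := by
      have hpos : (0 : ℝ) < 2 * m - 1 := by linarith
      rw [← Real.log_div (by positivity) hpos.ne']
      refine le_trans (le_of_eq ?_) (Real.one_sub_inv_le_log_of_pos (by positivity))
      field_simp
      ring
    have hcast : 2 * ((m + 1 : ℕ) : ℝ) - 1 = 2 * m + 1 := by push_cast; ring
    rw [hcast]
    linarith [ih (by lia)]

/-- The primes used as cycle lengths in permutations of `n` points: those in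
`(2 * ⌈(log n) ^ (3/2)⌉, n / 2]`. The exponent could be any number strictly between `1` and `2`:
above `1` the sum of their inverse squares is `o(1 / log n)`, below `2` the sum of their inverses
still diverges. -/
noncomputable def windowPrimes (n : ℕ) : Finset ℕ :=
  (n / 2).primesLE \ (2 * ⌈Real.log n ^ (3 / 2 : ℝ)⌉₊).primesLE

theorem prime_of_mem_windowPrimes {n p : ℕ} (hp : p ∈ windowPrimes n) : p.Prime :=
  Nat.prime_of_mem_primesLE (Finset.mem_sdiff.mp hp).1

theorem two_mul_le_of_mem_windowPrimes {n p : ℕ} (hp : p ∈ windowPrimes n) : 2 * p ≤ n := by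
  have := Nat.le_of_mem_primesLE (Finset.mem_sdiff.mp hp).1
  lia

theorem le_sum_windowPrimes_inv {n : ℕ} (hn : 2 ≤ Real.log n) :
    Real.log (Real.log n) / 4 - 5 ≤ ∑ p ∈ windowPrimes n, (p : ℝ)⁻¹ := by
  set L := Real.log n
  set a := ⌈L ^ (3 / 2 : ℝ)⌉₊
  have hL1 : 1 ≤ L ^ (3 / 2 : ℝ) := Real.one_le_rpow (by linarith) (by norm_num)
  have ha : a ≠ 0 := (Nat.ceil_pos.mpr (by linarith)).ne'
  have hlog2 : Real.log 2 ≤ 1 := by linarith [Real.log_two_lt_d9]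
  have hn0 : (n : ℝ) ≠ 0 := fun h ↦ by
    simp only [L, h, Real.log_zero] at hn
    norm_num at hn
  have hupper : Real.log (2 * a - 1) ≤ 2 * Real.log 2 + 3 / 2 * Real.log L := by
    have hceil : (a : ℝ) < L ^ (3 / 2 : ℝ) + 1 := Nat.ceil_lt_add_one (by linarith)
    have hle : (2 * a - 1 : ℝ) ≤ 2 ^ 2 * L ^ (3 / 2 : ℝ) := by linarith
    have ha1 : (1 : ℝ) ≤ a := by exact_mod_cast Nat.one_le_iff_ne_zero.mpr ha
    calc Real.log (2 * a - 1) ≤ Real.log (2 ^ 2 * L ^ (3 / 2 : ℝ)) :=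
          Real.log_le_log (by linarith) hle
      _ = 2 * Real.log 2 + 3 / 2 * Real.log L := by
          rw [Real.log_mul (by norm_num) (by positivity), Real.log_pow,
            Real.log_rpow (by linarith)]
          norm_num
  have hlower : Real.log L - Real.log 2 ≤ Real.log (Real.log ((n / 2 : ℕ) + 1)) := by
    rw [← Real.log_div (by positivity) (by norm_num)]
    have hhalf : (n / 2 : ℝ) ≤ (n / 2 : ℕ) + 1 := by
      have : n ≤ 2 * (n / 2 + 1) := by lia
      have : (n : ℝ) ≤ 2 * ((n / 2 : ℕ) + 1) := by exact_mod_cast this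
      linarith
    refine Real.log_le_log (by positivity) (le_trans ?_ (Real.log_le_log (by positivity) hhalf))
    rw [Real.log_div hn0 (by norm_num)]
    linarith
  have hsplit : ∑ p ∈ (n / 2).primesLE, (p : ℝ)⁻¹ ≤
      ∑ p ∈ windowPrimes n, (p : ℝ)⁻¹ + ∑ p ∈ (2 * a).primesLE, (p : ℝ)⁻¹ := by
    rw [windowPrimes, ← Finset.sum_union Finset.sdiff_disjoint, Finset.sdiff_union_self_eq_union]
    exact Finset.sum_le_sum_of_subset_of_nonneg Finset.subset_union_left fun _ _ _ ↦ by positivity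
  linarith [log_log_le_sum_primesLE_inv (n / 2), sum_primesLE_two_mul_inv_le ha]

theorem sum_windowPrimes_inv_sq_mul_harmonic_le {n : ℕ} (hn : 2 ≤ Real.log n) :
    (∑ p ∈ windowPrimes n, ((p : ℝ) ^ 2)⁻¹) * harmonic n ≤ Real.log n ^ (-(1 / 2) : ℝ) := by
  set L := Real.log n
  set a := ⌈L ^ (3 / 2 : ℝ)⌉₊
  have hL : 0 < L := by linarith
  have ha : 0 < a := Nat.ceil_pos.mpr (by positivity)
  have hsub : windowPrimes n ⊆ Finset.Ioc (2 * a) (max (2 * a) n) := fun p hp ↦ by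
    have := two_mul_le_of_mem_windowPrimes hp
    rw [windowPrimes, Finset.mem_sdiff, Nat.mem_primesLE, Nat.mem_primesLE] at hp
    exact Finset.mem_Ioc.mpr ⟨not_le.mp fun h ↦ hp.2 ⟨h, hp.1.2⟩, le_max_of_le_right (by lia)⟩
  have hsq : ∑ p ∈ windowPrimes n, ((p : ℝ) ^ 2)⁻¹ ≤ (2 * L ^ (3 / 2 : ℝ))⁻¹ :=
    calc ∑ p ∈ windowPrimes n, ((p : ℝ) ^ 2)⁻¹
        ≤ ∑ p ∈ Finset.Ioc (2 * a) (max (2 * a) n), ((p : ℝ) ^ 2)⁻¹ :=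
          Finset.sum_le_sum_of_subset_of_nonneg hsub fun _ _ _ ↦ by positivity
      _ ≤ ((2 * a : ℕ) : ℝ)⁻¹ := (sum_Ioc_inv_sq_le_sub (by lia) (le_max_left _ _)).trans
          (sub_le_self _ (by positivity))
      _ ≤ (2 * L ^ (3 / 2 : ℝ))⁻¹ := by
          push_cast
          gcongr
          exact Nat.le_ceil _
  calc (∑ p ∈ windowPrimes n, ((p : ℝ) ^ 2)⁻¹) * harmonic n
      ≤ (2 * L ^ (3 / 2 : ℝ))⁻¹ * (2 * L) := by
        have hH : (harmonic n : ℝ) ≤ 2 * L := by linarith [harmonic_le_one_add_log n]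
        have hH0 : (0 : ℝ) ≤ harmonic n := by
          simp only [harmonic, Rat.cast_sum, Rat.cast_inv, Rat.cast_natCast]
          positivity
        exact mul_le_mul hsq hH hH0 (by positivity)
    _ = L ^ (-(1 / 2) : ℝ) := by
        rw [show (-(1 / 2) : ℝ) = 1 - 3 / 2 by norm_num, Real.rpow_sub hL, Real.rpow_one]
        field_simp

theorem tendsto_log_natCast_atTop : Tendsto (fun n : ℕ ↦ Real.log n) atTop atTop :=
  Real.tendsto_log_atTop.comp tendsto_natCast_atTop_atTop

theorem tendsto_sum_windowPrimes_inv_atTop :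
    Tendsto (fun n ↦ ∑ p ∈ windowPrimes n, (p : ℝ)⁻¹) atTop atTop := by
  have hlog := (Real.tendsto_log_atTop.comp tendsto_log_natCast_atTop).atTop_div_const
    (show (0 : ℝ) < 4 by norm_num)
  refine tendsto_atTop_mono' atTop ?_ (tendsto_atTop_add_const_right atTop (-5) hlog)
  filter_upwards [tendsto_log_natCast_atTop.eventually_ge_atTop 2] with n hn
  exact le_sum_windowPrimes_inv hn

theorem tendsto_sum_windowPrimes_inv_sq_mul_harmonic_zero :
    Tendsto (fun n ↦ (∑ p ∈ windowPrimes n, ((p : ℝ) ^ 2)⁻¹) * harmonic n) atTop (𝓝 0) := by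
  refine squeeze_zero' (.of_forall fun n ↦ ?_) ?_
    ((tendsto_rpow_neg_atTop (show (0 : ℝ) < 1 / 2 by norm_num)).comp tendsto_log_natCast_atTop)
  · simp only [harmonic, Rat.cast_sum, Rat.cast_inv, Rat.cast_natCast]
    positivity
  · filter_upwards [tendsto_log_natCast_atTop.eventually_ge_atTop 2] with n hn
    exact sum_windowPrimes_inv_sq_mul_harmonic_le hn

end Primes

section Generation

theorem uniformProb_sign_ne (α : Type*) [Fintype α] [DecidableEq α] [Nontrivial α] :
    uniformProb {p : Perm α × Perm α | sign p.1 ≠ sign p.2} = 1 / 2 := by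
  set s := {p : Perm α × Perm α | sign p.1 ≠ sign p.2}
  obtain ⟨a, b, hab⟩ := exists_pair_ne α
  have hcompl : ((swap a b, 1) : Perm α × Perm α) • s = sᶜ := by
    ext p
    rw [Set.mem_smul_set_iff_inv_smul_mem]
    change sign ((swap a b)⁻¹ * p.1) ≠ sign (1⁻¹ * p.2) ↔ ¬ (sign p.1 ≠ sign p.2)
    rw [swap_inv, Perm.sign_mul, sign_swap hab, inv_one, one_mul, not_ne_iff]
    rcases Int.units_eq_one_or (sign p.1) with h | h <;>
      rcases Int.units_eq_one_or (sign p.2) with h' | h' <;> simp [h, h']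
  have hcard : 2 * s.ncard = Nat.card (Perm α × Perm α) := by
    rw [two_mul, ← Set.ncard_add_ncard_compl s, ← hcompl, Set.ncard_smul_set]
  have hpos : (s.ncard : ℝ) ≠ 0 := Nat.cast_ne_zero.mpr fun h ↦
    Nat.card_pos (α := Perm α × Perm α).ne' (by rw [← hcard, h, mul_zero])
  rw [uniformProb, ← hcard]
  push_cast
  field_simp

theorem uniformProb_not_exists_pow_isCycle_le {α : Type*} [Fintype α] [DecidableEq α]
    {P : Finset ℕ} (hP : ∀ p ∈ P, p.Prime ∧ p ≤ Fintype.card α) (hne : P.Nonempty) :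
    uniformProb {σ : Perm α | ¬ ∃ m : ℕ, (σ ^ m).IsCycle ∧ (σ ^ m).support.card ∈ P} ≤
      (∑ p ∈ P, (p : ℝ)⁻¹)⁻¹ + (∑ p ∈ P, ((p : ℝ) ^ 2)⁻¹) * harmonic (Fintype.card α) := by
  have hP' : ∀ p ∈ P, 2 ≤ p ∧ p ≤ Fintype.card α := fun p hp ↦ (hP p hp).imp_left Nat.Prime.two_le
  have hsub : {σ : Perm α | ¬ ∃ m : ℕ, (σ ^ m).IsCycle ∧ (σ ^ m).support.card ∈ P} ⊆
      {σ | ∀ p ∈ P, p ∉ σ.cycleType} ∪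
        {σ | ∃ p ∈ P, p ∈ σ.cycleType ∧ ∃ m ∈ σ.cycleType.erase p, p ∣ m} := by
    refine fun σ hσ ↦ or_iff_not_imp_left.mpr fun hmem ↦ ?_
    obtain ⟨p, hpP, hp⟩ : ∃ p ∈ P, p ∈ σ.cycleType := by
      by_contra! h
      exact hmem h
    refine ⟨p, hpP, hp, ?_⟩
    by_contra! hndvd
    obtain ⟨m, hm, hcard⟩ := exists_pow_isCycle (hP p hpP).1 hp hndvd
    exact hσ ⟨m, hm, hcard ▸ hpP⟩
  calc _ ≤ _ := (uniformProb_mono hsub).trans (uniformProb_union_le _ _)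
    _ ≤ _ := add_le_add (uniformProb_notMem_cycleType_le hP' hne)
      (uniformProb_dvd_mem_erase_cycleType_le hP')

theorem alternatingGroup_le_closure_pair {α : Type*} [Fintype α] [DecidableEq α] {σ τ : Perm α}
    (hprim : IsPreprimitive (Subgroup.closure {σ, τ}) α) {m : ℕ} (hm : (σ ^ m).IsCycle)
    (hp : (σ ^ m).support.card.Prime) (hle : 2 * (σ ^ m).support.card ≤ Fintype.card α) :
    alternatingGroup α ≤ Subgroup.closure {σ, τ} :=
  alternatingGroup_le_of_isCycle_of_prime hprim
    (pow_mem (Subgroup.subset_closure (Set.mem_insert σ {τ})) m) hm hp hle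

theorem natCard_circGenPair_eq_top_div (k : ℕ) :
    (Nat.card {p : Perm (Fin k) × Perm (Fin k) // circGenPair p.1 p.2 = ⊤} : ℝ) / (k ! : ℝ) ^ 2 =
      uniformProb {p : Perm (Fin k) × Perm (Fin k) | circGenPair p.1 p.2 = ⊤} := by
  rw [uniformProb, Nat.card_prod, Nat.card_perm, Nat.card_fin, ← Nat.card_coe_set_eq,
    Nat.cast_mul, sq]
  rfl

variable {k : ℕ}

theorem uniformProb_circGenPair_eq_top_le (hk : 2 ≤ k) :
    uniformProb {p : Perm (Fin k) × Perm (Fin k) | circGenPair p.1 p.2 = ⊤} ≤ 1 / 2 := by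
  have : Nontrivial (Fin k) := Fin.nontrivial_iff_two_le.mpr hk
  rw [← uniformProb_sign_ne (Fin k)]
  exact uniformProb_mono fun p hp ↦ sign_ne_of_circGenPair_eq_top hk hp

theorem le_uniformProb_circGenPair_eq_top (hk : 5 ≤ k) {P : Finset ℕ}
    (hP : ∀ p ∈ P, p.Prime ∧ 2 * p ≤ k) (hne : P.Nonempty) :
    1 / 2 - (2 / (k - 1 : ℝ) + 2 / (k - 2 : ℝ) +
        ((∑ p ∈ P, (p : ℝ)⁻¹)⁻¹ + (∑ p ∈ P, ((p : ℝ) ^ 2)⁻¹) * harmonic k)) ≤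
      uniformProb {p : Perm (Fin k) × Perm (Fin k) | circGenPair p.1 p.2 = ⊤} := by
  have : Nontrivial (Fin k) := Fin.nontrivial_iff_two_le.mpr (by lia)
  let noCycle : Set (Perm (Fin k)) :=
    {σ | ¬ ∃ m : ℕ, (σ ^ m).IsCycle ∧ (σ ^ m).support.card ∈ P}
  let imprim : Set (Perm (Fin k) × Perm (Fin k)) :=
    {p | ¬ IsPreprimitive (Subgroup.closure {p.1, p.2}) (Fin k)}
  have hsub : {p : Perm (Fin k) × Perm (Fin k) | sign p.1 ≠ sign p.2} ⊆
      {p | circGenPair p.1 p.2 = ⊤} ∪ (imprim ∪ noCycle ×ˢ Set.univ) := by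
    refine fun p hsign ↦ or_iff_not_imp_right.mpr fun hgood ↦ ?_
    obtain ⟨hprim, hcycle⟩ := not_or.mp hgood
    obtain ⟨m, hm, hmP⟩ := not_not.mp fun h ↦ hcycle ⟨h, trivial⟩
    refine circGenPair_eq_top hk (alternatingGroup_le_closure_pair (not_not.mp hprim) hm
      (hP _ hmP).1 ?_) hsign
    simpa only [Fintype.card_fin] using (hP _ hmP).2
  have himprim := uniformProb_not_isPreprimitive_le (Fin k) (by rw [Fintype.card_fin]; lia)
  have hnoCycle : uniformProb noCycle ≤ _ := uniformProb_not_exists_pow_isCycle_le (α := Fin k)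
    (fun p hp ↦ (hP p hp).imp_right fun h ↦ by rw [Fintype.card_fin]; lia) hne
  have hunion := ((uniformProb_mono hsub).trans (uniformProb_union_le _ _)).trans
    (add_le_add_right (uniformProb_union_le _ _) _)
  rw [uniformProb_sign_ne, uniformProb_prod, uniformProb_univ, mul_one] at hunion
  rw [Fintype.card_fin] at himprim hnoCycle
  linarith

theorem tendsto_two_div_natCast_sub_zero (a : ℝ) :
    Tendsto (fun k : ℕ ↦ 2 / (k - a : ℝ)) atTop (𝓝 0) :=
  tendsto_const_nhds.div_atTop
    (tendsto_atTop_add_const_right atTop (-a) tendsto_natCast_atTop_atTop)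

theorem tendsto_uniformProb_circGenPair_eq_top :
    Tendsto (fun k : ℕ ↦ uniformProb
      {p : Perm (Fin k) × Perm (Fin k) | circGenPair p.1 p.2 = ⊤}) atTop (𝓝 (1 / 2)) := by
  have herror := ((tendsto_two_div_natCast_sub_zero 1).add
    (tendsto_two_div_natCast_sub_zero 2)).add
      ((tendsto_inv_atTop_zero.comp tendsto_sum_windowPrimes_inv_atTop).add
        tendsto_sum_windowPrimes_inv_sq_mul_harmonic_zero)
  have hlower := herror.const_sub (1 / 2)
  simp only [add_zero, sub_zero] at hlower
  refine tendsto_of_tendsto_of_tendsto_of_le_of_le' hlower tendsto_const_nhds ?_ ?_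
  · filter_upwards [eventually_ge_atTop 5,
      tendsto_sum_windowPrimes_inv_atTop.eventually_gt_atTop 0] with k hk hpos
    exact le_uniformProb_circGenPair_eq_top hk
      (fun p hp ↦ ⟨prime_of_mem_windowPrimes hp, two_mul_le_of_mem_windowPrimes hp⟩)
      (Finset.nonempty_of_sum_ne_zero hpos.ne')
  · filter_upwards [eventually_ge_atTop 2] with k hk
    exact uniformProb_circGenPair_eq_top_le hk

end Generation

end CircGen

/-- The group circularly generated by a pair of uniformly random permutations of `k`
points is all of `S_k × S_k` with probability tending to `1/2`. -/
theorem circGenPair_top_probability :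
    Filter.Tendsto
      (fun k : ℕ =>
        (Nat.card {p : Equiv.Perm (Fin k) × Equiv.Perm (Fin k) //
            circGenPair p.1 p.2 = ⊤} : ℝ) / (Nat.factorial k : ℝ) ^ 2)
      Filter.atTop (nhds (1 / 2)) := by
  simp only [CircGen.natCard_circGenPair_eq_top_div]
  exact CircGen.tendsto_uniformProb_circGenPair_eq_top
end
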